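/- Let k ∈ ℤ with k ≠ 1 and k ≠ −1, and let f = x² − 2kx + k ∈ ℤ[x]. Then for every a₀ ∈ ℤ, the natural density of the set P(f, a₀) of prime divisors of the orbit of a₀ under f exists and equals 0. -/

import Mathlib

open Polynomial Filter

/-- The `n`-th iterate of a polynomial, with `f^0 = X`. -/
noncomputable def polyIter (f : Polynomial ℤ) : ℕ → Polynomial ℤ
  | 0 => X
  | n + 1 => f.comp (polyIter f n)

open scoped Classical in
/-- The number of elements of `S` that are at most `x`. -/
noncomputable def primeCount (S : Set ℕ) (x : ℕ) : ℕ :=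
  ((Finset.range (x + 1)).filter (fun p => p ∈ S)).card

/-- A set `S` of primes has natural density zero:
`lim_{x → ∞} #{p ∈ S : p ≤ x} / #{p prime : p ≤ x}` exists and equals `0`. -/
def HasPrimeDensityZero (S : Set ℕ) : Prop :=
  Tendsto (fun x : ℕ => (primeCount S x : ℝ) / (primeCount {p | p.Prime} x : ℝ))
    atTop (nhds 0)

/-- `P(f, a₀)`: the set of primes dividing some nonzero term of the orbit of `a₀` under `f`. -/
def orbitPrimes (f : Polynomial ℤ) (a₀ : ℤ) : Set ℕ :=
  {p | p.Prime ∧ ∃ n : ℕ, (fun x => Polynomial.eval x f)^[n] a₀ ≠ 0 ∧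
    (p : ℤ) ∣ (fun x => Polynomial.eval x f)^[n] a₀}

/-!
If `p` divides `f^n(a₀)` with `n ≥ N`, then `f^N` has a root modulo `p`. For `p` outside a finite
set, the decomposition groups above `p` in the splitting field `L` of the first `N` iterates are
cyclic and all their elements fix a root of `f^N`.

Chebotarev's theorem would bound the density of such `p` by the proportion of elements of
`Gal(L/ℚ)` fixing a root of `f^N`. It is replaced by an upper bound of Brun–Titchmarsh type: a
decomposition group generated by `σ` yields a prime ideal of norm `p` in the fixed field of `σ`,
and in a given number field the prime ideals of norm in `(x, 2 * x]` number, for large `x`, at most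
an absolute constant times `x / log x`. The latter follows from Selberg's sieve, applied to the
elements of a box in the ring of integers. As `Gal(L/ℚ)` is a `2`-group, half of the elements of a
cyclic subgroup generate it, so only an absolute constant is lost.

It remains to see that this proportion tends to `0` as `N → ∞`. The mean number of fixed roots of
`f^N` is `1`, so most elements have boundedly many. If the critical orbit of `f` has a primitive odd
prime divisor of odd multiplicity at the right index, which happens infinitely often, then the
Galois group of the next level can swap the preimages of the roots independently enough to remove
all fixed roots of a fixed proportion of these elements. This requires `|k| > 1`; for `k = 0`, all
primes in question divide `a₀`.
-/

section SelbergSieve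

open Finset

variable {ι : Type*} {N : ι → ℝ} {𝒟 : Finset (Finset ι)}

/-- Selberg's normalizing sum `∑ E ∈ 𝒟, 1 / ∏ i ∈ E, (N i - 1)`, where `N i` is the norm of the
sieving prime `i` and the elements of `𝒟` are the squarefree sieving moduli, each encoded as its
set of prime factors. -/
noncomputable def selbergSum (N : ι → ℝ) (𝒟 : Finset (Finset ι)) : ℝ :=
  ∑ E ∈ 𝒟, 1 / ∏ i ∈ E, (N i - 1)

theorem prod_sub_one_pos (hN : ∀ i, 1 < N i) (E : Finset ι) : 0 < ∏ i ∈ E, (N i - 1) :=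
  prod_pos fun i _ => sub_pos.2 (hN i)

theorem prod_pos_of_one_lt (hN : ∀ i, 1 < N i) (E : Finset ι) : 0 < ∏ i ∈ E, N i :=
  prod_pos fun i _ => one_pos.trans (hN i)

theorem selbergSum_nonneg (hN : ∀ i, 1 < N i) : 0 ≤ selbergSum N 𝒟 :=
  sum_nonneg fun E _ => (one_div_pos.2 (prod_sub_one_pos hN E)).le

theorem selbergSum_mono (hN : ∀ i, 1 < N i) {𝒟' : Finset (Finset ι)} (h : 𝒟 ⊆ 𝒟') :
    selbergSum N 𝒟 ≤ selbergSum N 𝒟' :=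
  sum_le_sum_of_subset_of_nonneg h fun E _ _ => (one_div_pos.2 (prod_sub_one_pos hN E)).le

variable [DecidableEq ι]

theorem one_div_prod_union_eq_sum_powerset (hN : ∀ i, N i ≠ 0) (D₁ D₂ : Finset ι) :
    1 / ∏ i ∈ D₁ ∪ D₂, N i =
      (∑ E ∈ (D₁ ∩ D₂).powerset, ∏ i ∈ E, (N i - 1)) / ((∏ i ∈ D₁, N i) * ∏ i ∈ D₂, N i) := by
  have prod_ne_zero (D : Finset ι) : ∏ i ∈ D, N i ≠ 0 := prod_ne_zero_iff.2 fun i _ => hN i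
  have sum_powerset : ∑ E ∈ (D₁ ∩ D₂).powerset, ∏ i ∈ E, (N i - 1) = ∏ i ∈ D₁ ∩ D₂, N i := by
    rw [← prod_one_add]
    exact prod_congr rfl fun i _ => by ring
  rw [sum_powerset, ← prod_union_inter, div_eq_div_iff (prod_ne_zero _)
    (mul_ne_zero (prod_ne_zero _) (prod_ne_zero _))]
  ring

theorem powerset_inter_eq_filter (h𝒟 : IsLowerSet (𝒟 : Set (Finset ι))) {D₁ : Finset ι}
    (h₁ : D₁ ∈ 𝒟) (D₂ : Finset ι) :
    (D₁ ∩ D₂).powerset = {E ∈ 𝒟 | E ⊆ D₁ ∧ E ⊆ D₂} := by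
  ext E
  simp only [mem_powerset, mem_filter, subset_inter_iff]
  exact ⟨fun h => ⟨h𝒟 h.1 h₁, h⟩, fun h => h.2⟩

/-- Diagonalization of Selberg's quadratic form, whose coefficient at `(D₁, D₂)` is the reciprocal
of the least common multiple `∏ i ∈ D₁ ∪ D₂, N i`. -/
theorem sum_sum_mul_one_div_prod_union (hN : ∀ i, N i ≠ 0)
    (h𝒟 : IsLowerSet (𝒟 : Set (Finset ι))) (l : Finset ι → ℝ) :
    ∑ D₁ ∈ 𝒟, ∑ D₂ ∈ 𝒟, l D₁ * l D₂ * (1 / ∏ i ∈ D₁ ∪ D₂, N i) =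
      ∑ E ∈ 𝒟, (∏ i ∈ E, (N i - 1)) * (∑ D ∈ 𝒟 with E ⊆ D, l D / ∏ i ∈ D, N i) ^ 2 := by
  have term_eq : ∀ D₁ ∈ 𝒟, ∀ D₂ ∈ 𝒟, l D₁ * l D₂ * (1 / ∏ i ∈ D₁ ∪ D₂, N i) =
      ∑ E ∈ 𝒟, (∏ i ∈ E, (N i - 1)) *
        ((if E ⊆ D₁ then l D₁ / ∏ i ∈ D₁, N i else 0) *
         (if E ⊆ D₂ then l D₂ / ∏ i ∈ D₂, N i else 0)) := by
    intro D₁ h₁ D₂ _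
    rw [one_div_prod_union_eq_sum_powerset hN, powerset_inter_eq_filter h𝒟 h₁, sum_filter,
      sum_div, mul_sum]
    refine sum_congr rfl fun E _ => ?_
    by_cases hE₁ : E ⊆ D₁ <;> by_cases hE₂ : E ⊆ D₂ <;> simp [hE₁, hE₂]
    ring
  rw [sum_congr rfl fun D₁ h₁ => sum_congr rfl fun D₂ h₂ => term_eq D₁ h₁ D₂ h₂,
    sum_congr rfl fun D₁ _ => sum_comm, sum_comm]
  refine sum_congr rfl fun E _ => ?_
  rw [sq, sum_filter, sum_mul_sum, mul_sum]
  exact sum_congr rfl fun D₁ _ => by rw [mul_sum]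

theorem sum_powerset_filter_superset_neg_one_pow_card (E F : Finset ι) :
    ∑ D ∈ F.powerset with E ⊆ D, (-1 : ℝ) ^ #D = if E = F then (-1 : ℝ) ^ #E else 0 := by
  rw [← Icc_eq_filter_powerset]
  by_cases hEF : E ⊆ F
  · have disjoint_of_mem {D : Finset ι} (hD : D ∈ (F \ E).powerset) : Disjoint E D :=
      disjoint_sdiff.mono_right (mem_powerset.1 hD)
    have card_union {D : Finset ι} (hD : D ∈ (F \ E).powerset) :
        (-1 : ℝ) ^ #(E ∪ D) = (-1) ^ #E * (-1) ^ #D := by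
      rw [card_union_of_disjoint (disjoint_of_mem hD), pow_add]
    have union_injOn : Set.InjOn (E ∪ ·) ((F \ E).powerset : Set (Finset ι)) := by
      intro A hA B hB h
      rw [← (disjoint_of_mem hA).sup_sdiff_cancel_left,
        ← (disjoint_of_mem hB).sup_sdiff_cancel_left]
      exact congrArg (· \ E) h
    have alternating_sum : ∑ D ∈ (F \ E).powerset, (-1 : ℝ) ^ #D = if F \ E = ∅ then 1 else 0 :=
      mod_cast congrArg (Int.cast : ℤ → ℝ) (sum_powerset_neg_one_pow_card (x := F \ E))
    have sdiff_eq_empty : F \ E = ∅ ↔ E = F :=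
      ⟨fun h => hEF.antisymm (sdiff_eq_empty_iff_subset.1 h), fun h => by simp [h]⟩
    rw [Icc_eq_image_powerset hEF, sum_image union_injOn, sum_congr rfl fun D => card_union,
      ← mul_sum, alternating_sum]
    simp [sdiff_eq_empty]
  · rw [if_neg fun h => hEF h.le, Icc_eq_empty hEF, sum_empty]

/-- Selberg's optimal sieve weight at the modulus `D`, without the normalization which would give
the empty modulus weight `1`. -/
noncomputable def selbergWeight (N : ι → ℝ) (𝒟 : Finset (Finset ι)) (D : Finset ι) : ℝ :=
  (-1) ^ #D * (∏ i ∈ D, N i) * selbergSum N {E ∈ 𝒟 | D ⊆ E}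

theorem selbergSum_filter_superset_le (hN : ∀ i, 1 < N i)
    (h𝒟 : IsLowerSet (𝒟 : Set (Finset ι))) (D : Finset ι) :
    selbergSum N {E ∈ 𝒟 | D ⊆ E} ≤ selbergSum N 𝒟 / ∏ i ∈ D, (N i - 1) := by
  have sdiff_injOn : Set.InjOn (· \ D) ({E ∈ 𝒟 | D ⊆ E} : Finset (Finset ι)) := by
    intro A hA B hB h
    rw [← sdiff_union_of_subset (mem_filter.1 hA).2, ← sdiff_union_of_subset (mem_filter.1 hB).2]
    exact congrArg (· ∪ D) h
  have image_subset : image (· \ D) {E ∈ 𝒟 | D ⊆ E} ⊆ 𝒟 :=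
    image_subset_iff.2 fun E hE => h𝒟 sdiff_subset (mem_filter.1 hE).1
  calc selbergSum N {E ∈ 𝒟 | D ⊆ E}
      = ∑ E ∈ 𝒟 with D ⊆ E, 1 / (∏ i ∈ E \ D, (N i - 1)) / ∏ i ∈ D, (N i - 1) :=
        sum_congr rfl fun E hE => by rw [div_div, prod_sdiff (mem_filter.1 hE).2]
    _ = selbergSum N (image (· \ D) {E ∈ 𝒟 | D ⊆ E}) / ∏ i ∈ D, (N i - 1) := by
        rw [selbergSum, sum_image sdiff_injOn, sum_div]
    _ ≤ selbergSum N 𝒟 / ∏ i ∈ D, (N i - 1) :=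
        div_le_div_of_nonneg_right (selbergSum_mono hN image_subset) (prod_sub_one_pos hN D).le

theorem abs_selbergWeight (hN : ∀ i, 1 < N i) (D : Finset ι) :
    |selbergWeight N 𝒟 D| = (∏ i ∈ D, N i) * selbergSum N {E ∈ 𝒟 | D ⊆ E} := by
  rw [selbergWeight, abs_mul, abs_mul, abs_neg_one_pow, one_mul,
    abs_of_pos (prod_pos_of_one_lt hN D), abs_of_nonneg (selbergSum_nonneg hN)]

theorem selbergWeight_empty : selbergWeight N 𝒟 ∅ = selbergSum N 𝒟 := by
  simp [selbergWeight]

theorem sum_filter_superset_selbergWeight_div_prod (hN : ∀ i, 1 < N i)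
    (h𝒟 : IsLowerSet (𝒟 : Set (Finset ι))) {E : Finset ι} (hE : E ∈ 𝒟) :
    ∑ D ∈ 𝒟 with E ⊆ D, selbergWeight N 𝒟 D / ∏ i ∈ D, N i =
      (-1) ^ #E / ∏ i ∈ E, (N i - 1) := by
  have weight_div (D : Finset ι) : selbergWeight N 𝒟 D / ∏ i ∈ D, N i =
      ∑ F ∈ 𝒟, if D ⊆ F then (-1) ^ #D * (1 / ∏ i ∈ F, (N i - 1)) else 0 := by
    rw [← sum_filter, ← mul_sum, selbergWeight, selbergSum, mul_right_comm,
      mul_div_cancel_right₀ _ (prod_pos_of_one_lt hN D).ne']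
  have filter_filter_eq {F : Finset ι} (hF : F ∈ 𝒟) :
      ({D ∈ 𝒟 | E ⊆ D} : Finset (Finset ι)).filter (· ⊆ F) = {D ∈ F.powerset | E ⊆ D} := by
    ext D
    simp only [mem_filter, mem_powerset]
    exact ⟨fun h => ⟨h.2, h.1.2⟩, fun h => ⟨⟨h𝒟 h.1 hF, h.2⟩, h.1⟩⟩
  have inner_sum : ∀ F ∈ 𝒟,
      (∑ D ∈ 𝒟 with E ⊆ D, if D ⊆ F then (-1 : ℝ) ^ #D * (1 / ∏ i ∈ F, (N i - 1)) else 0) =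
        if E = F then (-1) ^ #E / ∏ i ∈ E, (N i - 1) else 0 := by
    intro F hF
    rw [← sum_filter, ← sum_mul, filter_filter_eq hF,
      sum_powerset_filter_superset_neg_one_pow_card, mul_one_div]
    split_ifs with hEF
    · rw [hEF]
    · rw [zero_div]
  rw [sum_congr rfl fun D _ => weight_div D, sum_comm, sum_congr rfl inner_sum, sum_ite_eq,
    if_pos hE]

theorem sum_sum_selbergWeight (hN : ∀ i, 1 < N i) (h𝒟 : IsLowerSet (𝒟 : Set (Finset ι))) :
    ∑ D₁ ∈ 𝒟, ∑ D₂ ∈ 𝒟, selbergWeight N 𝒟 D₁ * selbergWeight N 𝒟 D₂ *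
      (1 / ∏ i ∈ D₁ ∪ D₂, N i) = selbergSum N 𝒟 := by
  rw [sum_sum_mul_one_div_prod_union (fun i => (one_pos.trans (hN i)).ne') h𝒟]
  refine sum_congr rfl fun E hE => ?_
  rw [sum_filter_superset_selbergWeight_div_prod hN h𝒟 hE, div_pow, ← pow_mul, mul_comm #E 2,
    pow_mul, neg_one_sq, one_pow]
  have := (prod_sub_one_pos hN E).ne'
  field_simp

theorem sum_sum_abs_selbergWeight_le (hN : ∀ i, 1 < N i)
    (h𝒟 : IsLowerSet (𝒟 : Set (Finset ι))) :
    ∑ D₁ ∈ 𝒟, ∑ D₂ ∈ 𝒟, |selbergWeight N 𝒟 D₁| * |selbergWeight N 𝒟 D₂| *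
      (1 / ∏ i ∈ D₁ ∪ D₂, N i) ≤ selbergSum N 𝒟 ^ 5 := by
  set G := selbergSum N 𝒟 with hG
  have inner_sum_le (E : Finset ι) :
      ∑ D ∈ 𝒟 with E ⊆ D, |selbergWeight N 𝒟 D| / ∏ i ∈ D, N i ≤
        G * (G / ∏ i ∈ E, (N i - 1)) :=
    calc ∑ D ∈ 𝒟 with E ⊆ D, |selbergWeight N 𝒟 D| / ∏ i ∈ D, N i
        ≤ ∑ D ∈ 𝒟 with E ⊆ D, G * (1 / ∏ i ∈ D, (N i - 1)) := sum_le_sum fun D _ => by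
          rw [abs_selbergWeight hN, mul_div_cancel_left₀ _ (prod_pos_of_one_lt hN D).ne',
            mul_one_div]
          exact selbergSum_filter_superset_le hN h𝒟 D
      _ = G * selbergSum N {D ∈ 𝒟 | E ⊆ D} := by rw [← mul_sum, selbergSum]
      _ ≤ G * (G / ∏ i ∈ E, (N i - 1)) :=
          mul_le_mul_of_nonneg_left (selbergSum_filter_superset_le hN h𝒟 E) (selbergSum_nonneg hN)
  rw [sum_sum_mul_one_div_prod_union (fun i => (one_pos.trans (hN i)).ne') h𝒟
    fun D => |selbergWeight N 𝒟 D|]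
  calc _ ≤ ∑ E ∈ 𝒟, (∏ i ∈ E, (N i - 1)) * (G * (G / ∏ i ∈ E, (N i - 1))) ^ 2 :=
        sum_le_sum fun E _ => mul_le_mul_of_nonneg_left
          (pow_le_pow_left₀ (sum_nonneg fun D _ => div_nonneg (abs_nonneg _)
            (prod_pos_of_one_lt hN D).le) (inner_sum_le E) 2) (prod_sub_one_pos hN E).le
    _ = G ^ 4 * ∑ E ∈ 𝒟, 1 / ∏ i ∈ E, (N i - 1) := by
        rw [mul_sum]
        refine sum_congr rfl fun E _ => ?_
        have := (prod_sub_one_pos hN E).ne'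
        field_simp
    _ = G ^ 5 := by rw [← selbergSum, ← hG]; ring

variable {μ : Type*} {M : Finset μ} {T : μ → Finset ι}

theorem sum_sq_sum_filter_subset_eq (l : Finset ι → ℝ) :
    ∑ m ∈ M, (∑ D ∈ 𝒟 with D ⊆ T m, l D) ^ 2 =
      ∑ D₁ ∈ 𝒟, ∑ D₂ ∈ 𝒟, l D₁ * l D₂ * #{m ∈ M | D₁ ∪ D₂ ⊆ T m} := by
  have sq_eq (m : μ) : (∑ D ∈ 𝒟 with D ⊆ T m, l D) ^ 2 =
      ∑ D₁ ∈ 𝒟, ∑ D₂ ∈ 𝒟, if D₁ ∪ D₂ ⊆ T m then l D₁ * l D₂ else 0 := by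
    rw [sq, sum_filter, sum_mul_sum]
    refine sum_congr rfl fun D₁ _ => sum_congr rfl fun D₂ _ => ?_
    by_cases h₁ : D₁ ⊆ T m <;> by_cases h₂ : D₂ ⊆ T m <;> simp [h₁, h₂, union_subset_iff]
  simp only [sq_eq]
  rw [sum_comm]
  refine sum_congr rfl fun D₁ _ => ?_
  rw [sum_comm]
  refine sum_congr rfl fun D₂ _ => ?_
  rw [← sum_filter, sum_const, nsmul_eq_mul, mul_comm]

theorem sum_sq_sum_filter_subset_le {V θ : ℝ} (l : Finset ι → ℝ)
    (hcount : ∀ D₁ ∈ 𝒟, ∀ D₂ ∈ 𝒟,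
      |(#{m ∈ M | D₁ ∪ D₂ ⊆ T m} : ℝ) - V / ∏ i ∈ D₁ ∪ D₂, N i| ≤
        θ * (V / ∏ i ∈ D₁ ∪ D₂, N i)) :
    ∑ m ∈ M, (∑ D ∈ 𝒟 with D ⊆ T m, l D) ^ 2 ≤
      V * ∑ D₁ ∈ 𝒟, ∑ D₂ ∈ 𝒟, l D₁ * l D₂ * (1 / ∏ i ∈ D₁ ∪ D₂, N i) +
        θ * V * ∑ D₁ ∈ 𝒟, ∑ D₂ ∈ 𝒟, |l D₁| * |l D₂| * (1 / ∏ i ∈ D₁ ∪ D₂, N i) := by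
  rw [sum_sq_sum_filter_subset_eq]
  simp only [mul_sum, ← sum_add_distrib]
  refine sum_le_sum fun D₁ h₁ => sum_le_sum fun D₂ h₂ => ?_
  have error_le : l D₁ * l D₂ * (#{m ∈ M | D₁ ∪ D₂ ⊆ T m} - V / ∏ i ∈ D₁ ∪ D₂, N i) ≤
      |l D₁| * |l D₂| * (θ * (V / ∏ i ∈ D₁ ∪ D₂, N i)) := by
    refine (le_abs_self _).trans ?_
    rw [abs_mul, abs_mul]
    exact mul_le_mul_of_nonneg_left (hcount D₁ h₁ D₂ h₂) (by positivity)
  linear_combination error_le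

/- Selberg's sieve: `T m` is the set of sieving primes dividing `m`, and `V / ∏ i ∈ D, N i` is the
expected number of multiples of `D`. -/
theorem card_filter_sifted_mul_sq_le (hN : ∀ i, 1 < N i)
    (h𝒟 : IsLowerSet (𝒟 : Set (Finset ι))) {V θ : ℝ} (hV : 0 ≤ V) (hθ : 0 ≤ θ)
    (hcount : ∀ D₁ ∈ 𝒟, ∀ D₂ ∈ 𝒟,
      |(#{m ∈ M | D₁ ∪ D₂ ⊆ T m} : ℝ) - V / ∏ i ∈ D₁ ∪ D₂, N i| ≤
        θ * (V / ∏ i ∈ D₁ ∪ D₂, N i)) :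
    (#{m ∈ M | ∀ D ∈ 𝒟, D ⊆ T m → D = ∅} : ℝ) * selbergSum N 𝒟 ^ 2 ≤
      V * (selbergSum N 𝒟 + θ * selbergSum N 𝒟 ^ 5) := by
  have sum_weight_eq : ∀ m ∈ ({m ∈ M | ∀ D ∈ 𝒟, D ⊆ T m → D = ∅} : Finset μ),
      ∑ D ∈ 𝒟 with D ⊆ T m, selbergWeight N 𝒟 D = selbergSum N 𝒟 := by
    intro m hm
    rcases 𝒟.eq_empty_or_nonempty with rfl | ⟨D, hD⟩
    · simp [selbergSum]
    · have filter_eq : {D ∈ 𝒟 | D ⊆ T m} = {∅} := by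
        ext D'
        simp only [mem_filter, mem_singleton]
        refine ⟨fun h => (mem_filter.1 hm).2 D' h.1 h.2, ?_⟩
        rintro rfl
        exact ⟨h𝒟 (empty_subset D) hD, empty_subset _⟩
      rw [filter_eq, sum_singleton, selbergWeight_empty]
  calc (#{m ∈ M | ∀ D ∈ 𝒟, D ⊆ T m → D = ∅} : ℝ) * selbergSum N 𝒟 ^ 2
      = ∑ m ∈ M with ∀ D ∈ 𝒟, D ⊆ T m → D = ∅,
          (∑ D ∈ 𝒟 with D ⊆ T m, selbergWeight N 𝒟 D) ^ 2 := by
        rw [sum_congr rfl fun m hm => by rw [sum_weight_eq m hm], sum_const, nsmul_eq_mul]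
    _ ≤ ∑ m ∈ M, (∑ D ∈ 𝒟 with D ⊆ T m, selbergWeight N 𝒟 D) ^ 2 :=
        sum_le_sum_of_subset_of_nonneg (filter_subset _ _) fun m _ _ => sq_nonneg _
    _ ≤ V * selbergSum N 𝒟 + θ * V * selbergSum N 𝒟 ^ 5 := by
        refine (sum_sq_sum_filter_subset_le _ hcount).trans ?_
        rw [sum_sum_selbergWeight hN h𝒟]
        gcongr
        exact sum_sum_abs_selbergWeight_le hN h𝒟
    _ = V * (selbergSum N 𝒟 + θ * selbergSum N 𝒟 ^ 5) := by ring

end SelbergSieve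

section CoordBox

open Finset

variable {A ι : Type*} [AddCommGroup A] [Fintype ι] [DecidableEq ι]

/-- The box of elements whose coordinates in the basis `b` lie in the intervals `[c i, c i + s)`. -/
noncomputable def coordBox (b : Module.Basis ι ℤ A) (c : ι → ℤ) (s : ℤ) : Finset A :=
  (Fintype.piFinset fun i => Ico (c i) (c i + s)).map b.equivFun.symm.toEquiv.toEmbedding

theorem mem_coordBox {b : Module.Basis ι ℤ A} {c : ι → ℤ} {s : ℤ} {m : A} :
    m ∈ coordBox b c s ↔ ∀ i, c i ≤ b.repr m i ∧ b.repr m i < c i + s := by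
  rw [coordBox, mem_map_equiv]
  simp [Fintype.mem_piFinset, Module.Basis.equivFun_apply]

theorem card_coordBox (b : Module.Basis ι ℤ A) (c : ι → ℤ) (s : ℤ) :
    #(coordBox b c s) = s.toNat ^ Fintype.card ι := by
  simp [coordBox, Fintype.card_piFinset]

theorem add_mem_coordBox {b : Module.Basis ι ℤ A} {c : ι → ℤ} {s t : ℤ} {m a : A}
    (hm : m ∈ coordBox b c s) (ha : ∀ i, |b.repr a i| ≤ t) :
    m + a ∈ coordBox b (fun i => c i - t) (s + 2 * t) :=
  mem_coordBox.2 fun i => by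
    have := mem_coordBox.1 hm i
    have := abs_le.1 (ha i)
    rw [map_add, Finsupp.add_apply]
    constructor <;> linarith

end CoordBox

section IdealCovering

open Finset

variable {R ι : Type*} [CommRing R]

theorem exists_forall_abs_repr_mul_le [Finite ι] (b : Module.Basis ι ℤ R) :
    ∃ C : ℤ, 0 < C ∧ ∀ (x y : R) (X Y : ℤ), (∀ i, |b.repr x i| ≤ X) → (∀ i, |b.repr y i| ≤ Y) →
      ∀ i, |b.repr (x * y) i| ≤ C * (X * Y) := by
  have := Fintype.ofFinite ι
  refine ⟨1 + ∑ i, ∑ j, ∑ l, |b.repr (b j * b l) i|, by positivity, fun x y X Y hx hy i => ?_⟩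
  have repr_mul : b.repr (x * y) i =
      ∑ j, ∑ l, (b.repr x j * b.repr y l) * b.repr (b j * b l) i := by
    conv_lhs => rw [← b.sum_repr x, ← b.sum_repr y]
    simp only [sum_mul_sum, smul_mul_smul_comm, map_sum, Finsupp.finsetSum_apply, map_smul,
      Finsupp.smul_apply, smul_eq_mul]
  have term_le (j l : ι) : |b.repr x j * b.repr y l * b.repr (b j * b l) i| ≤
      X * Y * |b.repr (b j * b l) i| := by
    rw [abs_mul, abs_mul]
    have := (abs_nonneg _).trans (hx j)
    gcongr
    · exact hx j
    · exact hy l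
  calc |b.repr (x * y) i|
      ≤ ∑ j, ∑ l, |b.repr x j * b.repr y l * b.repr (b j * b l) i| := by
        rw [repr_mul]
        exact (abs_sum_le_sum_abs _ _).trans (sum_le_sum fun j _ => abs_sum_le_sum_abs _ _)
    _ ≤ ∑ j, ∑ l, X * Y * |b.repr (b j * b l) i| :=
        sum_le_sum fun j _ => sum_le_sum fun l _ => term_le j l
    _ = (∑ j, ∑ l, |b.repr (b j * b l) i|) * (X * Y) := by simp only [← mul_sum, mul_comm]
    _ ≤ _ := by
        have := single_le_sum (f := fun i => ∑ j, ∑ l, |b.repr (b j * b l) i|)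
          (fun i _ => by positivity) (mem_univ i)
        refine mul_le_mul_of_nonneg_right (by linarith) (mul_nonneg ?_ ?_)
        · exact (abs_nonneg _).trans (hx i)
        · exact (abs_nonneg _).trans (hy i)

theorem exists_forall_abs_repr_sub_mul_le [Finite ι] (b : Module.Basis ι ℤ R) {n : ℕ} (hn : 0 < n)
    (x : R) : ∃ w : R, ∀ i, |b.repr (x - n * w) i| ≤ n := by
  have := Fintype.ofFinite ι
  refine ⟨∑ i, (b.repr x i / n) • b i, fun i => ?_⟩
  have repr_eq : b.repr (x - n * ∑ i, (b.repr x i / n) • b i) i = b.repr x i % n := by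
    rw [← nsmul_eq_mul, map_sub, map_nsmul, Finsupp.sub_apply, Finsupp.smul_apply,
      b.repr_sum_self, nsmul_eq_mul, Int.emod_def]
  rw [repr_eq, abs_of_nonneg (Int.emod_nonneg _ (by positivity))]
  exact (Int.emod_lt_of_pos _ (by positivity)).le

theorem exists_section_abs_repr_le {b : Module.Basis ι ℤ R} {I : Ideal R} {t : ℤ}
    (hcov : ∀ z : R, ∃ a ∈ I, ∀ i, |b.repr (z - a) i| ≤ t) :
    ∃ r : R ⧸ I → R, (∀ q, Ideal.Quotient.mk I (r q) = q) ∧ ∀ q i, |b.repr (r q) i| ≤ t := by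
  choose a haI ha using hcov
  refine ⟨fun q => q.out - a q.out, fun q => ?_, fun q i => ha _ i⟩
  rw [map_sub, Ideal.Quotient.eq_zero_iff_mem.2 (haI _), sub_zero, Ideal.Quotient.mk_out]

variable [Fintype ι] [IsDedekindDomain R] [Module.Free ℤ R] [Module.Finite ℤ R]

/-- Minkowski's argument: by the pigeonhole principle, two elements of a box with more than
`absNorm I` elements are congruent modulo `I`. -/
theorem exists_mem_ne_zero_forall_abs_repr_le (b : Module.Basis ι ℤ R) {I : Ideal R} (hI : I ≠ ⊥)
    {u : ℕ} (hu : Ideal.absNorm I < (u + 1) ^ Fintype.card ι) :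
    ∃ α ∈ I, α ≠ 0 ∧ ∀ i, |b.repr α i| ≤ u := by
  classical
  have := Ideal.finiteQuotientOfFreeOfNeBot I hI
  have := Fintype.ofFinite (R ⧸ I)
  have card_quot_lt : #(univ : Finset (R ⧸ I)) < #(coordBox b (fun _ => 0) (u + 1)) := by
    rw [card_coordBox, card_univ, ← Nat.card_eq_fintype_card, ← Submodule.cardQuot_apply,
      ← Ideal.absNorm_apply]
    exact hu
  obtain ⟨x, hx, y, hy, hne, hxy⟩ := exists_ne_map_eq_of_card_lt_of_maps_to card_quot_lt
    (f := Ideal.Quotient.mk I) fun _ _ => mem_univ _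
  refine ⟨x - y, Ideal.Quotient.eq.1 hxy, sub_ne_zero.2 hne, fun i => ?_⟩
  have := mem_coordBox.1 hx i
  have := mem_coordBox.1 hy i
  rw [map_sub, Finsupp.sub_apply, abs_le]
  constructor <;> omega

theorem exists_covering_radius (b : Module.Basis ι ℤ R) :
    ∃ C : ℤ, 0 < C ∧ ∀ I : Ideal R, I ≠ ⊥ → ∀ u : ℕ, Ideal.absNorm I < (u + 1) ^ Fintype.card ι →
      ∀ z : R, ∃ a ∈ I, ∀ i, |b.repr (z - a) i| ≤ C * u := by
  obtain ⟨C, hC, hmul⟩ := exists_forall_abs_repr_mul_le b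
  refine ⟨C, hC, fun I hI u hu z => ?_⟩
  obtain ⟨α, hαI, hα0, hα⟩ := exists_mem_ne_zero_forall_abs_repr_le b hI hu
  set n : ℕ := Ideal.absNorm (Ideal.span {α}) with hn
  have hn0 : 0 < n := Nat.pos_of_ne_zero <| by
    rwa [hn, Ne, Ideal.absNorm_eq_zero_iff, Ideal.span_singleton_eq_bot]
  obtain ⟨β, hβ⟩ := Ideal.mem_span_singleton'.1 (Ideal.absNorm_mem (Ideal.span {α}))
  rw [← hn] at hβ
  obtain ⟨w, hw⟩ := exists_forall_abs_repr_sub_mul_le b hn0 (z * β)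
  refine ⟨w * α, I.mul_mem_left _ hαI, fun i => ?_⟩
  have smul_eq : n • (z - w * α) = (z * β - n * w) * α := by
    rw [nsmul_eq_mul]
    linear_combination z * -hβ
  have abs_le := hmul _ α n u hw hα i
  rw [← smul_eq, map_nsmul, Finsupp.smul_apply, nsmul_eq_mul, abs_mul, Nat.abs_cast] at abs_le
  exact le_of_mul_le_mul_left (by linarith) (Nat.cast_pos.2 hn0 : (0 : ℤ) < n)

end IdealCovering

section LatticeCount

open Finset

variable {R ι : Type*} [CommRing R] [IsDedekindDomain R] [Module.Free ℤ R] [Module.Finite ℤ R]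
  [Fintype ι] [DecidableEq ι]

open scoped Classical in
theorem absNorm_mul_card_filter_mem_le {b : Module.Basis ι ℤ R} {I : Ideal R} (hI : I ≠ ⊥)
    {t : ℤ} (hcov : ∀ z : R, ∃ a ∈ I, ∀ i, |b.repr (z - a) i| ≤ t) (c : ι → ℤ) (s : ℤ) :
    Ideal.absNorm I * #{m ∈ coordBox b c s | m ∈ I} ≤ (s + 2 * t).toNat ^ Fintype.card ι := by
  have := Ideal.finiteQuotientOfFreeOfNeBot I hI
  have := Fintype.ofFinite (R ⧸ I)
  obtain ⟨r, mk_r, hr⟩ := exists_section_abs_repr_le hcov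
  rw [Ideal.absNorm_apply, Submodule.cardQuot_apply, Nat.card_eq_fintype_card, ← card_univ,
    ← card_product, ← card_coordBox b (fun i => c i - t) (s + 2 * t)]
  refine card_le_card_of_injOn (fun p => p.2 + r p.1)
    (fun p hp => add_mem_coordBox (mem_filter.1 (mem_product.1 hp).2).1 (hr p.1)) ?_
  rintro ⟨q, a⟩ h ⟨q', a'⟩ h' heq
  have mk_add (q : R ⧸ I) (a : R) (ha : a ∈ I) : Ideal.Quotient.mk I (a + r q) = q := by
    rw [map_add, Ideal.Quotient.eq_zero_iff_mem.2 ha, zero_add, mk_r]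
  obtain rfl : q = q' := by
    rw [← mk_add q a (mem_filter.1 (mem_product.1 h).2).2,
      ← mk_add q' a' (mem_filter.1 (mem_product.1 h').2).2]
    exact congrArg _ heq
  simpa using heq

open scoped Classical in
theorem pow_le_absNorm_mul_card_filter_mem {b : Module.Basis ι ℤ R} {I : Ideal R} (hI : I ≠ ⊥)
    {t : ℤ} (hcov : ∀ z : R, ∃ a ∈ I, ∀ i, |b.repr (z - a) i| ≤ t) (c : ι → ℤ) (s : ℤ) :
    (s - 2 * t).toNat ^ Fintype.card ι ≤ Ideal.absNorm I * #{m ∈ coordBox b c s | m ∈ I} := by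
  have := Ideal.finiteQuotientOfFreeOfNeBot I hI
  have := Fintype.ofFinite (R ⧸ I)
  obtain ⟨r, mk_r, hr⟩ := exists_section_abs_repr_le hcov
  rw [Ideal.absNorm_apply, Submodule.cardQuot_apply, Nat.card_eq_fintype_card,
    ← card_univ (α := R ⧸ I), ← card_product, ← card_coordBox b (fun i => c i + t) (s - 2 * t)]
  refine card_le_card_of_injOn
    (fun z => (Ideal.Quotient.mk I z, z - r (Ideal.Quotient.mk I z))) (fun z hz => ?_) ?_
  · have sub_mem_box : z - r (Ideal.Quotient.mk I z) ∈ coordBox b c s := by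
      simpa [sub_eq_add_neg] using add_mem_coordBox hz (a := -r (Ideal.Quotient.mk I z)) (t := t)
        fun i => by simpa using hr _ i
    have sub_mem_I : z - r (Ideal.Quotient.mk I z) ∈ I := by
      rw [← Ideal.Quotient.eq_zero_iff_mem, map_sub, mk_r, sub_self]
    exact mem_coe.2 (mem_product.2 ⟨mem_univ _, mem_filter.2 ⟨sub_mem_box, sub_mem_I⟩⟩)
  · intro z _ z' _ heq
    obtain ⟨hmk, hsub⟩ := Prod.mk.inj heq
    simpa [hmk] using hsub

theorem one_add_pow_le_one_add {d : ℕ} {y θ : ℝ} (hy : 0 ≤ y) (hdy : 2 * (d * y) ≤ θ)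
    (hθ : θ ≤ 1) : (1 + y) ^ d ≤ 1 + θ := by
  have hdy0 : 0 ≤ d * y := by positivity
  calc (1 + y) ^ d ≤ Real.exp (d * y) := by
        rw [Real.exp_nat_mul]
        exact pow_le_pow_left₀ (by linarith) (by linarith [Real.add_one_le_exp y]) d
    _ ≤ 1 / (1 - d * y) := Real.exp_bound_div_one_sub_of_interval hdy0 (by linarith)
    _ ≤ 1 + θ := by
        rw [div_le_iff₀ (by linarith)]
        nlinarith

theorem one_sub_le_one_sub_pow {d : ℕ} {y θ : ℝ} (hy : y ≤ 1) (hdy : d * y ≤ θ) :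
    1 - θ ≤ (1 - y) ^ d := by
  have := one_add_mul_le_pow (a := -y) (by linarith) d
  rw [← sub_eq_add_neg] at this
  linarith

theorem abs_sub_div_le_of_pow_bounds {d : ℕ} {q s t θ n : ℝ} (hd : d ≠ 0) (hq : 0 < q)
    (hs : 0 < s) (ht : 0 ≤ t) (hθ : θ ≤ 1) (hdt : 2 * (d * t) ≤ θ * s)
    (hlower : (s - t) ^ d ≤ q * n) (hupper : q * n ≤ (s + t) ^ d) :
    |n - s ^ d / q| ≤ θ * (s ^ d / q) := by
  have hdt' : 2 * (d * (t / s)) ≤ θ := by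
    rw [← mul_div_assoc, ← mul_div_assoc, div_le_iff₀ hs]
    exact hdt
  have ht_div : 0 ≤ t / s := by positivity
  have hle : t / s ≤ d * (t / s) := le_mul_of_one_le_left ht_div (mod_cast Nat.pos_of_ne_zero hd)
  have sub_eq : s - t = s * (1 - t / s) := by field_simp
  have add_eq : s + t = s * (1 + t / s) := by field_simp
  rw [sub_eq, mul_pow] at hlower
  rw [add_eq, mul_pow] at hupper
  have hsd : 0 ≤ s ^ d := by positivity
  have lower : (1 - θ) * (s ^ d / q) ≤ n := by
    rw [← mul_div_assoc, div_le_iff₀ hq]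
    have := one_sub_le_one_sub_pow (d := d) (y := t / s) (θ := θ) (by linarith) (by linarith)
    linarith [mul_le_mul_of_nonneg_left this hsd]
  have upper : n ≤ (1 + θ) * (s ^ d / q) := by
    rw [← mul_div_assoc, le_div_iff₀ hq]
    linarith [mul_le_mul_of_nonneg_left (one_add_pow_le_one_add ht_div hdt' hθ) hsd]
  rw [abs_le]
  constructor <;> linarith

open scoped Classical in
/-- Counting lattice points: the elements of a nonzero ideal `I` are equidistributed among the
translates of any box whose side is large compared with `(absNorm I) ^ (1 / rank)`. -/
theorem exists_abs_card_coordBox_filter_mem_sub_le [Nonempty ι] (b : Module.Basis ι ℤ R) :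
    ∃ C : ℝ, 0 < C ∧ ∀ I : Ideal R, I ≠ ⊥ → ∀ (c : ι → ℤ) (s : ℕ) (θ : ℝ), 0 ≤ θ → θ ≤ 1 →
      C ^ Fintype.card ι * Ideal.absNorm I ≤ (θ * s) ^ Fintype.card ι →
      |(#{m ∈ coordBox b c s | m ∈ I} : ℝ) - (s : ℝ) ^ Fintype.card ι / Ideal.absNorm I| ≤
        θ * ((s : ℝ) ^ Fintype.card ι / Ideal.absNorm I) := by
  obtain ⟨C, hC, hcov⟩ := exists_covering_radius b
  set d := Fintype.card ι with hd
  have hd0 : d ≠ 0 := Fintype.card_ne_zero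
  have : (0 : ℝ) < C := Int.cast_pos.2 hC
  refine ⟨4 * d * C, by positivity, fun I hI c s θ hθ0 hθ1 hsize => ?_⟩
  have hq : (0 : ℝ) < Ideal.absNorm I :=
    Nat.cast_pos.2 (Nat.pos_of_ne_zero (by rwa [Ne, Ideal.absNorm_eq_zero_iff]))
  obtain ⟨u, hu_le, hu_lt⟩ : ∃ u : ℕ, u ^ d ≤ Ideal.absNorm I ∧ Ideal.absNorm I < (u + 1) ^ d :=
    ⟨Nat.nthRoot d _, Nat.pow_nthRoot_le (.inl hd0), Nat.lt_pow_nthRoot_add_one hd0 _⟩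
  have radius_le : 4 * d * C * (u : ℝ) ≤ θ * s := by
    refine le_of_pow_le_pow_left₀ hd0 (by positivity) (le_trans ?_ hsize)
    rw [mul_pow (4 * d * C : ℝ)]
    exact mul_le_mul_of_nonneg_left (mod_cast hu_le) (by positivity)
  have hs : (0 : ℝ) < s := by
    refine (Nat.cast_nonneg s).lt_of_ne fun h => hsize.not_gt ?_
    rw [← h, mul_zero, zero_pow hd0]
    positivity
  have lower := pow_le_absNorm_mul_card_filter_mem hI (hcov I hI u hu_lt) c s
  have upper := absNorm_mul_card_filter_mem_le hI (hcov I hI u hu_lt) c s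
  rw [← hd] at lower upper
  have toNat_add : ((s + 2 * (C * u) : ℤ).toNat : ℝ) = s + 2 * (C * u) := by
    exact_mod_cast congrArg (Int.cast : ℤ → ℝ)
      (Int.toNat_of_nonneg (by positivity : 0 ≤ s + 2 * (C * u)))
  have le_toNat : (s : ℝ) - 2 * (C * u) ≤ ((s - 2 * (C * u) : ℤ).toNat : ℝ) := by
    exact_mod_cast Int.cast_le (R := ℝ).2 (Int.self_le_toNat (s - 2 * (C * u)))
  have radius_le_side : 2 * (C * u : ℝ) ≤ s := by
    have : (1 : ℝ) ≤ d := mod_cast Nat.pos_of_ne_zero hd0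
    have hCu : 0 ≤ (C * u : ℝ) := by positivity
    nlinarith [mul_le_mul_of_nonneg_right this hCu]
  refine abs_sub_div_le_of_pow_bounds (t := 2 * (C * u)) hd0 hq hs (by positivity) hθ1
    (by linarith) ?_ ?_
  · exact (pow_le_pow_left₀ (sub_nonneg.2 radius_le_side) le_toNat d).trans (mod_cast lower)
  · rw [← toNat_add]
    exact_mod_cast upper

end LatticeCount

section NumberFieldNorm

open NumberField

variable {K ι : Type*} [Field K] [NumberField K]

theorem absNorm_span_singleton_eq_prod_norm (m : 𝓞 K) :
    (Ideal.absNorm (Ideal.span {m}) : ℝ) = ∏ σ : K →ₐ[ℚ] ℂ, ‖σ (m : K)‖ := by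
  rw [Ideal.absNorm_span_singleton, ← norm_prod,
    ← Algebra.norm_eq_prod_embeddings ℚ ℂ (m : K), ← Algebra.coe_norm_int]
  simp [Nat.cast_natAbs]

theorem norm_embedding_le_of_abs_repr_le [Fintype ι] (b : Module.Basis ι ℤ (𝓞 K)) {η : 𝓞 K}
    {s : ℝ} (hη : ∀ i, |(b.repr η i : ℝ)| ≤ s) (σ : K →ₐ[ℚ] ℂ) :
    ‖σ (η : K)‖ ≤ s * ∑ i, ‖σ (b i : K)‖ := by
  have expand : (η : K) = ∑ i, (b.repr η i : K) * (b i : K) := by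
    conv_lhs => rw [← b.sum_repr η]
    simp
  rw [expand, map_sum, Finset.mul_sum]
  refine norm_sum_le_of_le _ fun i _ => ?_
  rw [map_mul, norm_mul, map_intCast, Complex.norm_intCast]
  exact mul_le_mul_of_nonneg_right (hη i) (norm_nonneg _)

theorem absNorm_span_singleton_bounds {m : 𝓞 K} {x y : ℝ} (hx : 0 ≤ x)
    (hm : ∀ σ : K →ₐ[ℚ] ℂ, x ≤ ‖σ (m : K)‖ ∧ ‖σ (m : K)‖ ≤ y) :
    x ^ Module.finrank ℚ K ≤ Ideal.absNorm (Ideal.span {m}) ∧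
      Ideal.absNorm (Ideal.span {m}) ≤ y ^ Module.finrank ℚ K := by
  rw [absNorm_span_singleton_eq_prod_norm, ← AlgHom.card ℚ K ℂ, ← Finset.card_univ]
  constructor
  · rw [← Finset.prod_const]
    exact Finset.prod_le_prod (fun _ _ => hx) fun σ _ => (hm σ).1
  · rw [← Finset.prod_const]
    exact Finset.prod_le_prod (fun _ _ => norm_nonneg _) fun σ _ => (hm σ).2

theorem exists_forall_norm_embedding_le [Finite ι] (b : Module.Basis ι ℤ (𝓞 K)) {δ : ℝ}
    (hδ : 0 < δ) : ∃ L : ℕ, 0 < L ∧ ∀ (M s : ℕ), s * L ≤ M → ∀ η : 𝓞 K,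
      (∀ i, |(b.repr η i : ℝ)| ≤ s) → ∀ σ : K →ₐ[ℚ] ℂ, ‖σ (η : K)‖ ≤ δ * M := by
  have := Fintype.ofFinite ι
  set B : ℝ := ∑ σ : K →ₐ[ℚ] ℂ, ∑ i, ‖σ (b i : K)‖
  obtain ⟨L, hL⟩ := exists_nat_gt (B / δ)
  refine ⟨L + 1, L.succ_pos, fun M s hsM η hη σ => ?_⟩
  have hsM' : (s : ℝ) * (L + 1) ≤ M := mod_cast hsM
  have hB : B ≤ δ * (L + 1) := by
    rw [div_lt_iff₀ hδ] at hL
    linarith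
  calc ‖σ (η : K)‖ ≤ s * ∑ i, ‖σ (b i : K)‖ := norm_embedding_le_of_abs_repr_le b hη σ
    _ ≤ s * (δ * (L + 1)) := by
        refine mul_le_mul_of_nonneg_left (le_trans ?_ hB) s.cast_nonneg
        exact Finset.single_le_sum (f := fun σ : K →ₐ[ℚ] ℂ => ∑ i, ‖σ (b i : K)‖)
          (fun _ _ => by positivity) (Finset.mem_univ σ)
    _ = δ * (s * (L + 1)) := by ring
    _ ≤ δ * M := mul_le_mul_of_nonneg_left hsM' hδ.le

-- The box consists of elements `M + η` with `η` small in every embedding.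
theorem exists_forall_mem_coordBox_absNorm_bounds [Fintype ι] [DecidableEq ι]
    (b : Module.Basis ι ℤ (𝓞 K)) :
    ∃ L : ℕ, 0 < L ∧ ∀ M s : ℕ, s * L ≤ M → ∀ m ∈ coordBox b (fun i => M * b.repr 1 i) s,
      (M : ℝ) ^ Module.finrank ℚ K ≤ 2 * Ideal.absNorm (Ideal.span {m}) ∧
        (Ideal.absNorm (Ideal.span {m}) : ℝ) ≤ 2 * (M : ℝ) ^ Module.finrank ℚ K := by
  set d := Module.finrank ℚ K
  have hd : (1 : ℝ) ≤ d := mod_cast Module.finrank_pos (R := ℚ) (M := K)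
  have hdδ : (d : ℝ) * (1 / (2 * d)) = 1 / 2 := by field_simp
  have hδ1 : 1 / (2 * d : ℝ) ≤ 1 / 2 := by
    rw [← hdδ]
    exact le_mul_of_one_le_left (by positivity) hd
  obtain ⟨L, hL, hbound⟩ := exists_forall_norm_embedding_le b
    (show 0 < 1 / (2 * d : ℝ) by positivity)
  refine ⟨L, hL, fun M s hsM m hm => ?_⟩
  set δ : ℝ := 1 / (2 * d)
  set η : 𝓞 K := m - (M : ℤ) • 1 with hη
  have abs_repr_le (i : ι) : |(b.repr η i : ℝ)| ≤ s := by
    have := mem_coordBox.1 hm i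
    have repr_eq : b.repr η i = b.repr m i - M * b.repr 1 i := by
      rw [hη, map_sub, map_smul]
      rfl
    rw [repr_eq, ← Int.cast_abs, abs_of_nonneg (by linarith)]
    exact_mod_cast (by linarith : b.repr m i - M * b.repr 1 i ≤ s)
  have near (σ : K →ₐ[ℚ] ℂ) : (1 - δ) * M ≤ ‖σ (m : K)‖ ∧ ‖σ (m : K)‖ ≤ (1 + δ) * M := by
    have hm_eq : (m : K) = M + (η : K) := by simp [hη]
    have hσ := hbound M s hsM η abs_repr_le σ
    have lower := norm_sub_norm_le (M : ℂ) (-σ (η : K))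
    have upper := norm_add_le (M : ℂ) (σ (η : K))
    rw [sub_neg_eq_add, norm_neg, Complex.norm_natCast] at lower
    rw [Complex.norm_natCast] at upper
    rw [hm_eq, map_add, map_natCast]
    constructor <;> linarith
  have ⟨lower, upper⟩ := absNorm_span_singleton_bounds
    (mul_nonneg (by linarith) M.cast_nonneg) near
  rw [mul_pow] at lower upper
  have hlow : 1 - 1 / 2 ≤ (1 - δ) ^ d := one_sub_le_one_sub_pow (by linarith) hdδ.le
  have hup : (1 + δ) ^ d ≤ 1 + 1 :=
    one_add_pow_le_one_add (by positivity) (by linarith) le_rfl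
  have hMd : (0 : ℝ) ≤ (M : ℝ) ^ d := by positivity
  constructor
  · linarith [mul_le_mul_of_nonneg_right hlow hMd]
  · linarith [mul_le_mul_of_nonneg_right hup hMd]

variable (K)

theorem sum_Icc_card_absNorm_eq_le (n : ℕ) :
    ∑ k ∈ Finset.Icc 1 n, Nat.card {I : Ideal (𝓞 K) // Ideal.absNorm I = k} ≤
      Nat.card {I : Ideal (𝓞 K) // Ideal.absNorm I ≤ n} := by
  classical
  rw [← Finset.card_preimage_eq_sum_card_image_eq
    (fun k _ ↦ Ideal.finite_setOfPred_absNorm_eq k)]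
  have : Finite {I : Ideal (𝓞 K) // Ideal.absNorm I ≤ n} :=
    Ideal.finite_setOfPred_absNorm_le n
  refine Nat.card_le_card_of_injective (fun I => ⟨I.1, (Finset.mem_Icc.1 I.2).2⟩) fun _ _ h => ?_
  simpa [Subtype.ext_iff] using h

theorem isBigO_sum_card_absNorm_eq :
    (fun n : ℕ ↦ ∑ k ∈ Finset.Icc 1 n,
      (Nat.card {I : Ideal (𝓞 K) // Ideal.absNorm I = k} : ℝ)) =O[atTop]
        fun n ↦ (n : ℝ) ^ (1 : ℝ) := by
  have ratio := ((NumberField.Ideal.tendsto_norm_le_div_atTop K).comp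
    tendsto_natCast_atTop_atTop).isBigO_one ℝ
  refine Asymptotics.IsBigO.trans
    (g := fun n : ℕ => (Nat.card {I : Ideal (𝓞 K) // Ideal.absNorm I ≤ n} : ℝ))
    (.of_norm_le fun n => ?_)
    ((ratio.mul (Asymptotics.isBigO_refl (fun n : ℕ => (n : ℝ)) atTop)).congr' ?_ ?_)
  · rw [Real.norm_of_nonneg (by positivity)]
    exact_mod_cast sum_Icc_card_absNorm_eq_le K n
  · filter_upwards [eventually_gt_atTop 0] with n hn
    have : (n : ℝ) ≠ 0 := mod_cast hn.ne'
    simp [div_mul_cancel₀ _ this]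
  · simp

theorem summable_absNorm_rpow_neg {s : ℝ} (hs : 1 < s) :
    Summable fun I : Ideal (𝓞 K) => (Ideal.absNorm I : ℝ) ^ (-s) := by
  have fiber_finite (n : ℕ) : Finite {I : Ideal (𝓞 K) // Ideal.absNorm I = n} :=
    Ideal.finite_setOfPred_absNorm_eq n
  rw [← (Equiv.sigmaFiberEquiv (Ideal.absNorm (S := 𝓞 K))).summable_iff]
  refine (summable_sigma_of_nonneg fun _ => by simp only [Function.comp_apply]; positivity).2
    ⟨fun n => .of_finite, ?_⟩
  have hL := (LSeriesSummable_of_sum_norm_bigO_and_nonneg (s := (s : ℂ))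
    (isBigO_sum_card_absNorm_eq K) (fun n => by positivity) zero_le_one (by simpa using hs)).norm
  refine (summable_congr_cofinite ?_).1 hL
  filter_upwards [(Set.finite_singleton 0).compl_mem_cofinite] with n hn
  have hn0 : n ≠ 0 := hn
  have term_eq (I : {I : Ideal (𝓞 K) // Ideal.absNorm I = n}) :
      (Ideal.absNorm I.1 : ℝ) ^ (-s) = (n : ℝ) ^ (-s) := by rw [I.2]
  simp only [Function.comp_apply, Equiv.sigmaFiberEquiv_apply, term_eq, tsum_const, nsmul_eq_mul]
  rw [LSeries.term_of_ne_zero hn0, norm_div, Complex.norm_natCast_cpow_of_pos (by lia),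
    Complex.ofReal_re, Real.rpow_neg (by positivity), ← div_eq_mul_inv, Complex.ofReal_natCast,
    Complex.norm_natCast]

end NumberFieldNorm

section IdealSieveSum

open NumberField UniqueFactorizationMonoid Finset

variable (K : Type*) [Field K] [NumberField K]

open scoped Classical in
/-- The nonzero ideals whose absolute norm lies in `s`. -/
noncomputable def idealsWithNorm (s : Finset ℕ) : Finset (Ideal (𝓞 K)) :=
  {I ∈ (Ideal.finite_setOfPred_absNorm_le (S := 𝓞 K) (s.sup id)).toFinset |
    I ≠ ⊥ ∧ Ideal.absNorm I ∈ s}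

open scoped Classical in
/-- The nonzero prime ideals whose absolute norm lies in `s`. -/
noncomputable def primesWithNorm (s : Finset ℕ) : Finset (Ideal (𝓞 K)) :=
  {I ∈ idealsWithNorm K s | Prime I}

/-- The squarefree ideals of norm at most `R`, each encoded as its set of prime factors: these are
the moduli of the sieve. -/
noncomputable def primeSets (R : ℕ) : Finset (Finset (Ideal (𝓞 K))) :=
  {E ∈ (primesWithNorm K (Icc 1 R)).powerset | ∏ P ∈ E, Ideal.absNorm P ≤ R}

/-- Selberg's normalizing sum for the prime ideals with moduli of norm at most `R`. -/
noncomputable def idealSelbergSum (R : ℕ) : ℝ :=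
  selbergSum (fun P : Ideal (𝓞 K) => (Ideal.absNorm P : ℝ)) (primeSets K R)

variable {K}

theorem mem_idealsWithNorm {s : Finset ℕ} {I : Ideal (𝓞 K)} :
    I ∈ idealsWithNorm K s ↔ I ≠ ⊥ ∧ Ideal.absNorm I ∈ s := by
  simp only [idealsWithNorm, mem_filter, Set.Finite.mem_toFinset, Set.mem_ofPred_eq,
    and_iff_right_iff_imp]
  exact fun h => le_sup (f := id) h.2

theorem mem_primesWithNorm {s : Finset ℕ} {P : Ideal (𝓞 K)} :
    P ∈ primesWithNorm K s ↔ Prime P ∧ Ideal.absNorm P ∈ s := by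
  classical
  rw [primesWithNorm, mem_filter, mem_idealsWithNorm]
  exact ⟨fun h => ⟨h.2, h.1.2⟩, fun h => ⟨⟨h.1.ne_zero, h.2⟩, h.1⟩⟩

theorem mem_primeSets {R : ℕ} {E : Finset (Ideal (𝓞 K))} :
    E ∈ primeSets K R ↔ E ⊆ primesWithNorm K (Icc 1 R) ∧ ∏ P ∈ E, Ideal.absNorm P ≤ R := by
  rw [primeSets, mem_filter, mem_powerset]

theorem prime_of_mem_primeSets {R : ℕ} {E : Finset (Ideal (𝓞 K))} (hE : E ∈ primeSets K R)
    {P : Ideal (𝓞 K)} (hP : P ∈ E) : Prime P :=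
  (mem_primesWithNorm.1 ((mem_primeSets.1 hE).1 hP)).1

theorem one_lt_absNorm_of_prime {P : Ideal (𝓞 K)} (hP : Prime P) : 1 < Ideal.absNorm P := by
  have ne_zero : Ideal.absNorm P ≠ 0 := Ideal.absNorm_eq_zero_iff.not.2 hP.ne_zero
  have ne_one : Ideal.absNorm P ≠ 1 :=
    Ideal.absNorm_eq_one_iff.not.2 (Ideal.isPrime_of_prime hP).ne_top
  lia

theorem isLowerSet_primeSets (R : ℕ) :
    IsLowerSet (primeSets K R : Set (Finset (Ideal (𝓞 K)))) := by
  intro D E hED hD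
  have hD' := mem_primeSets.1 hD
  refine mem_primeSets.2 ⟨Subset.trans hED hD'.1, le_trans ?_ hD'.2⟩
  exact prod_le_prod_of_subset_of_one_le' hED fun P hP _ =>
    (one_lt_absNorm_of_prime (prime_of_mem_primeSets hD hP)).le

theorem prod_absNorm_union_le {R : ℕ} {D₁ D₂ : Finset (Ideal (𝓞 K))} [DecidableEq (Ideal (𝓞 K))]
    (h₁ : D₁ ∈ primeSets K R) (h₂ : D₂ ∈ primeSets K R) :
    ∏ P ∈ D₁ ∪ D₂, Ideal.absNorm P ≤ R ^ 2 := by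
  have inter_pos : 1 ≤ ∏ P ∈ D₁ ∩ D₂, Ideal.absNorm P :=
    one_le_prod' fun P hP =>
      (one_lt_absNorm_of_prime (prime_of_mem_primeSets h₁ (mem_inter.1 hP).1)).le
  calc ∏ P ∈ D₁ ∪ D₂, Ideal.absNorm P
      ≤ (∏ P ∈ D₁ ∪ D₂, Ideal.absNorm P) * ∏ P ∈ D₁ ∩ D₂, Ideal.absNorm P :=
        Nat.le_mul_of_pos_right _ inter_pos
    _ = (∏ P ∈ D₁, Ideal.absNorm P) * ∏ P ∈ D₂, Ideal.absNorm P := prod_union_inter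
    _ ≤ R * R := Nat.mul_le_mul (mem_primeSets.1 h₁).2 (mem_primeSets.1 h₂).2
    _ = R ^ 2 := (sq R).symm

open scoped Classical in
theorem prod_toFinset_normalizedFactors_pow_count {a : Ideal (𝓞 K)} (ha : a ≠ ⊥) :
    ∏ P ∈ (normalizedFactors a).toFinset, P ^ (normalizedFactors a).count P = a := by
  rw [← prod_multiset_count, Ideal.prod_normalizedFactors_eq_self ha]

open scoped Classical in
theorem prod_absNorm_pow_count {a : Ideal (𝓞 K)} (ha : a ≠ ⊥) :
    ∏ P ∈ (normalizedFactors a).toFinset, Ideal.absNorm P ^ (normalizedFactors a).count P =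
      Ideal.absNorm a := by
  conv_rhs => rw [← prod_toFinset_normalizedFactors_pow_count ha]
  simp only [map_prod, map_pow]

open scoped Classical in
theorem absNorm_pow_count_le {a P : Ideal (𝓞 K)} (ha : a ≠ ⊥) :
    Ideal.absNorm P ^ (normalizedFactors a).count P ≤ Ideal.absNorm a := by
  rw [← map_pow]
  refine Nat.le_of_dvd (Nat.pos_of_ne_zero (Ideal.absNorm_eq_zero_iff.not.2 ha))
    (Ideal.absNorm_dvd_absNorm_of_le (Ideal.le_of_dvd ?_))
  rw [← Multiset.prod_replicate, ← Ideal.prod_normalizedFactors_eq_self ha]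
  exact Multiset.prod_dvd_prod_of_le (Multiset.le_count_iff_replicate_le.1
    (by rw [Ideal.prod_normalizedFactors_eq_self ha]))

open scoped Classical in
theorem count_normalizedFactors_mem_Icc {a P : Ideal (𝓞 K)} (ha : a ≠ ⊥)
    (hP : P ∈ normalizedFactors a) : (normalizedFactors a).count P ∈ Icc 1 (Ideal.absNorm a) :=
  mem_Icc.2 ⟨Multiset.one_le_count_iff_mem.2 hP, (Nat.lt_pow_self
    (one_lt_absNorm_of_prime (prime_of_normalized_factor P hP))).le.trans
      (absNorm_pow_count_le ha)⟩

open scoped Classical in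
theorem toFinset_normalizedFactors_mem_primeSets {R : ℕ} {a : Ideal (𝓞 K)}
    (ha : a ∈ idealsWithNorm K (Icc 1 R)) : (normalizedFactors a).toFinset ∈ primeSets K R := by
  obtain ⟨ha0, haR⟩ := mem_idealsWithNorm.1 ha
  have absNorm_le_pow (P) (hP : P ∈ (normalizedFactors a).toFinset) :
      Ideal.absNorm P ≤ Ideal.absNorm P ^ (normalizedFactors a).count P :=
    Nat.le_self_pow (Multiset.count_ne_zero.2 (Multiset.mem_toFinset.1 hP)) _
  refine mem_primeSets.2 ⟨fun P hP => ?_, ?_⟩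
  · have hprime := prime_of_normalized_factor P (Multiset.mem_toFinset.1 hP)
    exact mem_primesWithNorm.2 ⟨hprime, mem_Icc.2 ⟨(one_lt_absNorm_of_prime hprime).le,
      (absNorm_le_pow P hP).trans ((absNorm_pow_count_le ha0).trans (mem_Icc.1 haR).2)⟩⟩
  · exact (prod_le_prod' absNorm_le_pow).trans
      ((prod_absNorm_pow_count ha0).le.trans (mem_Icc.1 haR).2)

theorem sum_Icc_one_div_pow_le {x : ℝ} (hx : 1 < x) (R : ℕ) :
    ∑ e ∈ Icc 1 R, (1 / x) ^ e ≤ 1 / (x - 1) := by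
  have hq : 1 / x < 1 := (div_lt_one (one_pos.trans hx)).2 hx
  have hq0 : 0 ≤ 1 / x := by positivity
  have shift : ∑ e ∈ Icc 1 R, (1 / x) ^ e = 1 / x * ∑ e ∈ range R, (1 / x) ^ e := by
    rw [mul_sum, ← Ico_succ_right_eq_Icc, sum_Ico_eq_sum_range]
    exact sum_congr (by simp) fun e _ => by rw [pow_add, pow_one]
  calc ∑ e ∈ Icc 1 R, (1 / x) ^ e ≤ 1 / x * (1 - 1 / x)⁻¹ := by
        rw [shift, ← tsum_geometric_of_lt_one hq0 hq]
        exact mul_le_mul_of_nonneg_left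
          ((summable_geometric_of_lt_one hq0 hq).sum_le_tsum _ fun _ _ => by positivity) hq0
    _ = 1 / (x - 1) := by
        have : x - 1 ≠ 0 := sub_ne_zero.2 hx.ne'
        field_simp

-- Expand the product of truncated Euler factors: an ideal is determined by its exponent vector.
open scoped Classical in
theorem sum_one_div_absNorm_le_prod {R : ℕ} {E S : Finset (Ideal (𝓞 K))}
    (hS : S ⊆ idealsWithNorm K (Icc 1 R))
    (hE : ∀ a ∈ S, (normalizedFactors a).toFinset = E) :
    ∑ a ∈ S, 1 / (Ideal.absNorm a : ℝ) ≤
      ∏ P ∈ E, ∑ e ∈ Icc 1 R, (1 / (Ideal.absNorm P : ℝ)) ^ e := by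
  have ne_bot {a} (ha : a ∈ S) : a ≠ ⊥ := (mem_idealsWithNorm.1 (hS ha)).1
  set exponents : Ideal (𝓞 K) → (P : Ideal (𝓞 K)) → P ∈ E → ℕ :=
    fun a P _ => (normalizedFactors a).count P
  have term_eq {a} (ha : a ∈ S) : 1 / (Ideal.absNorm a : ℝ) =
      ∏ P ∈ E.attach, (1 / (Ideal.absNorm P.1 : ℝ)) ^ exponents a P.1 P.2 := by
    rw [← prod_absNorm_pow_count (ne_bot ha), hE a ha,
      prod_attach E fun P => (1 / (Ideal.absNorm P : ℝ)) ^ (normalizedFactors a).count P]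
    simp
  have exponents_injOn : Set.InjOn exponents S := fun a ha a' ha' h => by
    rw [← prod_toFinset_normalizedFactors_pow_count (ne_bot ha),
      ← prod_toFinset_normalizedFactors_pow_count (ne_bot ha'), hE a ha, hE a' ha']
    exact prod_congr rfl fun P hP => congrArg (P ^ ·) (congrFun₂ h P hP)
  have exponents_mem : S.image exponents ⊆ E.pi fun _ => Icc 1 R := by
    refine image_subset_iff.2 fun a ha => mem_pi.2 fun P hP => ?_
    rw [← hE a ha, Multiset.mem_toFinset] at hP
    exact Icc_subset_Icc_right (mem_Icc.1 (mem_idealsWithNorm.1 (hS ha)).2).2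
      (count_normalizedFactors_mem_Icc (ne_bot ha) hP)
  rw [prod_sum, sum_congr rfl fun _ => term_eq, ← sum_image (f := fun p =>
    ∏ P ∈ E.attach, (1 / (Ideal.absNorm P.1 : ℝ)) ^ p P.1 P.2) exponents_injOn]
  exact sum_le_sum_of_subset_of_nonneg exponents_mem fun _ _ _ => by positivity

theorem sum_one_div_absNorm_le_idealSelbergSum {R : ℕ} {S : Finset (Ideal (𝓞 K))}
    (hS : S ⊆ idealsWithNorm K (Icc 1 R)) :
    ∑ a ∈ S, 1 / (Ideal.absNorm a : ℝ) ≤ idealSelbergSum K R := by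
  classical
  rw [idealSelbergSum, selbergSum,
    ← sum_fiberwise_of_maps_to fun a ha => toFinset_normalizedFactors_mem_primeSets (hS ha)]
  refine sum_le_sum fun E hE => ?_
  calc _ ≤ ∏ P ∈ E, ∑ e ∈ Icc 1 R, (1 / (Ideal.absNorm P : ℝ)) ^ e :=
        sum_one_div_absNorm_le_prod ((filter_subset _ _).trans hS) fun a ha => (mem_filter.1 ha).2
    _ ≤ ∏ P ∈ E, 1 / ((Ideal.absNorm P : ℝ) - 1) :=
        prod_le_prod (fun P _ => by positivity) fun P hP => sum_Icc_one_div_pow_le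
          (mod_cast one_lt_absNorm_of_prime (prime_of_mem_primeSets hE hP)) R
    _ = 1 / ∏ P ∈ E, ((Ideal.absNorm P : ℝ) - 1) := by simp [prod_inv_distrib]

theorem one_le_idealSelbergSum {R : ℕ} (hR : 1 ≤ R) : 1 ≤ idealSelbergSum K R := by
  have h := sum_one_div_absNorm_le_idealSelbergSum (K := K) (R := R) (S := {⊤})
    (singleton_subset_iff.2 (mem_idealsWithNorm.2 ⟨top_ne_bot, by simp [hR]⟩))
  simpa using h

theorem one_div_prod_absNorm_sub_one_le {ε : ℝ} (hε : 0 ≤ ε) {R : ℕ} {E : Finset (Ideal (𝓞 K))}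
    (hE : E ∈ primeSets K R) :
    1 / ∏ P ∈ E, ((Ideal.absNorm P : ℝ) - 1) ≤
      (R : ℝ) ^ ε * ∏ P ∈ E, 2 * (Ideal.absNorm P : ℝ) ^ (-(1 + ε)) := by
  have two_le {P} (hP : P ∈ E) : (2 : ℝ) ≤ Ideal.absNorm P :=
    mod_cast one_lt_absNorm_of_prime (prime_of_mem_primeSets hE hP)
  have factor_le (P) (hP : P ∈ E) : 1 / ((Ideal.absNorm P : ℝ) - 1) ≤
      (Ideal.absNorm P : ℝ) ^ ε * (2 * (Ideal.absNorm P : ℝ) ^ (-(1 + ε))) := by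
    have h2 := two_le hP
    rw [mul_left_comm, ← Real.rpow_add (by linarith), show ε + -(1 + ε) = -1 by ring,
      Real.rpow_neg_one, ← div_eq_mul_inv, div_le_div_iff₀ (by linarith) (by linarith)]
    linarith
  calc 1 / ∏ P ∈ E, ((Ideal.absNorm P : ℝ) - 1)
      = ∏ P ∈ E, 1 / ((Ideal.absNorm P : ℝ) - 1) := by simp [prod_inv_distrib]
    _ ≤ ∏ P ∈ E, (Ideal.absNorm P : ℝ) ^ ε * (2 * (Ideal.absNorm P : ℝ) ^ (-(1 + ε))) :=
        prod_le_prod (fun P hP => one_div_nonneg.2 (by linarith [two_le hP])) factor_le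
    _ = (∏ P ∈ E, (Ideal.absNorm P : ℝ)) ^ ε *
          ∏ P ∈ E, 2 * (Ideal.absNorm P : ℝ) ^ (-(1 + ε)) := by
        rw [prod_mul_distrib, Real.finsetProd_rpow _ _ fun P _ => Nat.cast_nonneg _]
    _ ≤ (R : ℝ) ^ ε * ∏ P ∈ E, 2 * (Ideal.absNorm P : ℝ) ^ (-(1 + ε)) := by
        refine mul_le_mul_of_nonneg_right (Real.rpow_le_rpow (by positivity) ?_ hε)
          (prod_nonneg fun P _ => by positivity)
        exact_mod_cast (mem_primeSets.1 hE).2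

variable (K) in
theorem exists_idealSelbergSum_le {ε : ℝ} (hε : 0 < ε) :
    ∃ C : ℝ, 0 < C ∧ ∀ R : ℕ, idealSelbergSum K R ≤ C * (R : ℝ) ^ ε := by
  have summable := summable_absNorm_rpow_neg K (s := 1 + ε) (by linarith)
  refine ⟨Real.exp (∑' I : Ideal (𝓞 K), 2 * (Ideal.absNorm I : ℝ) ^ (-(1 + ε))),
    Real.exp_pos _, fun R => ?_⟩
  set t : Ideal (𝓞 K) → ℝ := fun P => 2 * (Ideal.absNorm P : ℝ) ^ (-(1 + ε))
  have ht (P) : 0 ≤ t P := by positivity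
  calc idealSelbergSum K R ≤ ∑ E ∈ primeSets K R, (R : ℝ) ^ ε * ∏ P ∈ E, t P :=
        sum_le_sum fun E hE => one_div_prod_absNorm_sub_one_le hε.le hE
    _ ≤ ∑ E ∈ (primesWithNorm K (Icc 1 R)).powerset, (R : ℝ) ^ ε * ∏ P ∈ E, t P :=
        sum_le_sum_of_subset_of_nonneg (filter_subset _ _) fun E _ _ =>
          mul_nonneg (by positivity) (prod_nonneg fun P _ => ht P)
    _ = (R : ℝ) ^ ε * ∏ P ∈ primesWithNorm K (Icc 1 R), (1 + t P) := by
        rw [← mul_sum, prod_one_add]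
    _ ≤ (R : ℝ) ^ ε * Real.exp (∑ P ∈ primesWithNorm K (Icc 1 R), t P) := by
        gcongr
        exact Real.prod_one_add_le_exp_sum _ ht
    _ ≤ (R : ℝ) ^ ε * Real.exp (∑' P, t P) := by
        gcongr
        exact (summable.mul_left 2).sum_le_tsum _ fun P _ => ht P
    _ = _ := mul_comm _ _

end IdealSieveSum

section CofactorSieve

open NumberField Finset

variable {K : Type*} [Field K] [NumberField K]

open scoped Classical in
/-- The finite set `box` of integers of `K` is equidistributed, up to a relative error `θ` and with
`V` in the role of its cardinality, modulo all nonzero ideals of norm at most `B`. -/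
def EquidistributedModIdeals (box : Finset (𝓞 K)) (V θ B : ℝ) : Prop :=
  ∀ I : Ideal (𝓞 K), I ≠ ⊥ → (Ideal.absNorm I : ℝ) ≤ B →
    |(#{m ∈ box | m ∈ I} : ℝ) - V / Ideal.absNorm I| ≤ θ * (V / Ideal.absNorm I)

theorem mem_mul_prod_iff {a : Ideal (𝓞 K)} (ha : a ≠ ⊥) {D : Finset (Ideal (𝓞 K))}
    (hD : ∀ Q ∈ D, Prime Q) {m : 𝓞 K} :
    m ∈ a * ∏ Q ∈ D, Q ↔ m ∈ a ∧ ∀ Q ∈ D, m ∈ a * Q := by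
  simp only [← Ideal.dvd_span_singleton]
  constructor
  · exact fun h => ⟨dvd_of_mul_right_dvd h, fun Q hQ =>
      (mul_dvd_mul_left a (dvd_prod_of_mem (fun Q => Q) hQ)).trans h⟩
  · rintro ⟨⟨c, hc⟩, h⟩
    rw [hc, mul_dvd_mul_iff_left ha]
    refine prod_primes_dvd c hD fun Q hQ => ?_
    have := h Q hQ
    rwa [hc, mul_dvd_mul_iff_left ha] at this

theorem eq_of_prime_of_dvd {P Q : Ideal (𝓞 K)} (hP : Prime P) (hQ : Prime Q) (h : Q ∣ P) :
    P = Q :=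
  ((Ideal.isPrime_of_prime hP).isMaximal hP.ne_zero).eq_of_le
    (Ideal.isPrime_of_prime hQ).ne_top (Ideal.le_of_dvd h)

variable {box : Finset (𝓞 K)} {V θ : ℝ} {R : ℕ} {a : Ideal (𝓞 K)}

open scoped Classical in
theorem abs_card_filter_mem_and_subset_sub_le {B : ℝ}
    (hbox : EquidistributedModIdeals box V θ B) (ha : a ≠ ⊥) (haB : Ideal.absNorm a * R ^ 2 ≤ B)
    {D₁ D₂ : Finset (Ideal (𝓞 K))} (h₁ : D₁ ∈ primeSets K R) (h₂ : D₂ ∈ primeSets K R) :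
    |(#{m ∈ {m ∈ box | m ∈ a} | D₁ ∪ D₂ ⊆ {Q ∈ primesWithNorm K (Icc 1 R) | m ∈ a * Q}} : ℝ) -
        V / Ideal.absNorm a / ∏ P ∈ D₁ ∪ D₂, (Ideal.absNorm P : ℝ)| ≤
      θ * (V / Ideal.absNorm a / ∏ P ∈ D₁ ∪ D₂, (Ideal.absNorm P : ℝ)) := by
  set D := D₁ ∪ D₂
  have hD : D ⊆ primesWithNorm K (Icc 1 R) :=
    union_subset (mem_primeSets.1 h₁).1 (mem_primeSets.1 h₂).1
  have hprime (Q) (hQ : Q ∈ D) : Prime Q := (mem_primesWithNorm.1 (hD hQ)).1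
  have norm_eq : (Ideal.absNorm (a * ∏ Q ∈ D, Q) : ℝ) =
      Ideal.absNorm a * ∏ Q ∈ D, (Ideal.absNorm Q : ℝ) := by simp
  have norm_le : (Ideal.absNorm (a * ∏ Q ∈ D, Q) : ℝ) ≤ B := by
    refine le_trans ?_ haB
    rw [norm_eq]
    exact mul_le_mul_of_nonneg_left (mod_cast prod_absNorm_union_le h₁ h₂) (Nat.cast_nonneg _)
  have filter_eq : {m ∈ {m ∈ box | m ∈ a} | D ⊆ {Q ∈ primesWithNorm K (Icc 1 R) | m ∈ a * Q}} =
      {m ∈ box | m ∈ a * ∏ Q ∈ D, Q} := by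
    ext m
    rw [mem_filter, mem_filter, mem_filter, mem_mul_prod_iff ha hprime, and_assoc]
    exact and_congr_right fun _ => and_congr_right fun _ =>
      ⟨fun h Q hQ => (mem_filter.1 (h hQ)).2, fun h Q hQ => mem_filter.2 ⟨hD hQ, h Q hQ⟩⟩
  rw [filter_eq, div_div, ← norm_eq]
  exact hbox _ (mul_ne_zero ha (prod_ne_zero_iff.2 fun Q hQ => (hprime Q hQ).ne_zero)) norm_le

theorem selbergSum_max_two_absNorm (R : ℕ) :
    selbergSum (fun P : Ideal (𝓞 K) => max 2 (Ideal.absNorm P : ℝ)) (primeSets K R) =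
      idealSelbergSum K R :=
  sum_congr rfl fun E hE => congrArg (1 / ·) <| prod_congr rfl fun P hP => by
    dsimp only
    rw [max_eq_right (mod_cast one_lt_absNorm_of_prime (prime_of_mem_primeSets hE hP))]

open scoped Classical in
-- The norm is replaced by `max 2 norm` to exceed `1` at every ideal, prime or not.
theorem card_filter_sifted_mul_idealSelbergSum_sq_le {B : ℝ} (hV : 0 ≤ V) (hθ : 0 ≤ θ)
    (hbox : EquidistributedModIdeals box V θ B) (ha : a ≠ ⊥) (haB : Ideal.absNorm a * R ^ 2 ≤ B) :
    (#{m ∈ {m ∈ box | m ∈ a} | ∀ D ∈ primeSets K R,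
        D ⊆ {Q ∈ primesWithNorm K (Icc 1 R) | m ∈ a * Q} → D = ∅} : ℝ) *
        idealSelbergSum K R ^ 2 ≤
      V / Ideal.absNorm a * (idealSelbergSum K R + θ * idealSelbergSum K R ^ 5) := by
  rw [← selbergSum_max_two_absNorm]
  refine card_filter_sifted_mul_sq_le (fun P => lt_max_of_lt_left one_lt_two)
    (isLowerSet_primeSets R) (by positivity) hθ fun D₁ h₁ D₂ h₂ => ?_
  have prod_eq : ∏ P ∈ D₁ ∪ D₂, max 2 (Ideal.absNorm P : ℝ) =
      ∏ P ∈ D₁ ∪ D₂, (Ideal.absNorm P : ℝ) := by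
    refine prod_congr rfl fun P hP => max_eq_right (mod_cast one_lt_absNorm_of_prime ?_)
    exact (mem_union.1 hP).elim (prime_of_mem_primeSets h₁) (prime_of_mem_primeSets h₂)
  rw [prod_eq]
  exact abs_card_filter_mem_and_subset_sub_le hbox ha haB h₁ h₂

open scoped Classical in
/-- The elements `m` of `box` with cofactor `a` at a prime ideal of norm in `(x, y]`, meaning that
`(m) = P * a` for such a prime `P`. -/
noncomputable def elementsWithCofactor (box : Finset (𝓞 K)) (x y : ℕ) (a : Ideal (𝓞 K)) :
    Finset (𝓞 K) :=
  {m ∈ box | ∃ P ∈ primesWithNorm K (Ioc x y), Ideal.span {m} = P * a}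

theorem mem_elementsWithCofactor {x y : ℕ} {m : 𝓞 K} :
    m ∈ elementsWithCofactor box x y a ↔
      m ∈ box ∧ ∃ P ∈ primesWithNorm K (Ioc x y), Ideal.span {m} = P * a := by
  simp only [elementsWithCofactor, mem_filter]

theorem card_elementsWithCofactor_mul_idealSelbergSum_le {B : ℝ} {x y : ℕ} (hV : 0 ≤ V) (hθ : 0 ≤ θ)
    (hR : 1 ≤ R) (hRx : R ≤ x) (hθR : θ * idealSelbergSum K R ^ 4 ≤ 1)
    (hbox : EquidistributedModIdeals box V θ B) (ha : a ≠ ⊥) (haB : Ideal.absNorm a * R ^ 2 ≤ B) :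
    (#(elementsWithCofactor box x y a) : ℝ) * idealSelbergSum K R ≤
      2 * V / Ideal.absNorm a := by
  classical
  set G := idealSelbergSum K R
  have hG : 1 ≤ G := one_le_idealSelbergSum hR
  have sifted : elementsWithCofactor box x y a ⊆
      {m ∈ {m ∈ box | m ∈ a} | ∀ D ∈ primeSets K R,
        D ⊆ {Q ∈ primesWithNorm K (Icc 1 R) | m ∈ a * Q} → D = ∅} := by
    intro m hm
    obtain ⟨hm_box, P, hP, hmP⟩ := mem_elementsWithCofactor.1 hm
    obtain ⟨hP_prime, hPx⟩ := mem_primesWithNorm.1 hP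
    refine mem_filter.2 ⟨mem_filter.2 ⟨hm_box, ?_⟩, fun D _ hDm => ?_⟩
    · exact Ideal.dvd_span_singleton.1 (hmP ▸ dvd_mul_left a P)
    · refine eq_empty_of_forall_notMem fun Q hQ => ?_
      obtain ⟨hQR, hQm⟩ := mem_filter.1 (hDm hQ)
      obtain ⟨hQ_prime, hQ_le⟩ := mem_primesWithNorm.1 hQR
      rw [← Ideal.dvd_span_singleton, hmP, mul_comm P a, mul_dvd_mul_iff_left ha] at hQm
      rw [← eq_of_prime_of_dvd hP_prime hQ_prime hQm] at hQ_le
      exact absurd (mem_Ioc.1 hPx).1 (((mem_Icc.1 hQ_le).2.trans hRx).not_gt)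
  refine le_of_mul_le_mul_right ?_ (one_pos.trans_le hG)
  calc _ = (#(elementsWithCofactor box x y a) : ℝ) * G ^ 2 := by ring
    _ ≤ V / Ideal.absNorm a * (G + θ * G ^ 5) :=
        (mul_le_mul_of_nonneg_right (mod_cast card_le_card sifted) (by positivity)).trans
          (card_filter_sifted_mul_idealSelbergSum_sq_le hV hθ hbox ha haB)
    _ ≤ V / Ideal.absNorm a * (G + 1 * G) := by
        rw [show θ * G ^ 5 = θ * G ^ 4 * G by ring]
        gcongr
    _ = 2 * V / Ideal.absNorm a * G := by ring

theorem exists_cofactor_of_mem_prime {x A : ℕ} (hx : 1 ≤ x) {m : 𝓞 K} {P : Ideal (𝓞 K)}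
    (hm : 2 * x * A ≤ Ideal.absNorm (Ideal.span {m}) ∧
      Ideal.absNorm (Ideal.span {m}) < 16 * x * A)
    (hP : P ∈ primesWithNorm K (Ioc x (2 * x))) (hmP : m ∈ P) :
    ∃ a ∈ idealsWithNorm K (Ico A (16 * A)), Ideal.span {m} = P * a := by
  obtain ⟨a, ha⟩ := Ideal.dvd_span_singleton.2 hmP
  obtain ⟨hxP, hPx⟩ := mem_Ioc.1 (mem_primesWithNorm.1 hP).2
  rw [ha, map_mul] at hm
  refine ⟨a, mem_idealsWithNorm.2 ⟨?_, mem_Ico.2 ⟨?_, ?_⟩⟩, ha⟩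
  · rintro rfl
    rw [Ideal.absNorm_bot, mul_zero] at hm
    lia
  · refine Nat.le_of_mul_le_mul_left (hm.1.trans ?_) (by lia : 0 < 2 * x)
    exact Nat.mul_le_mul_right _ hPx
  · refine Nat.lt_of_mul_lt_mul_left (a := x) ?_
    calc x * Ideal.absNorm a ≤ Ideal.absNorm P * Ideal.absNorm a := Nat.mul_le_mul_right _ hxP.le
      _ < 16 * x * A := hm.2
      _ = x * (16 * A) := by ring

open scoped Classical in
-- Count the pairs `(P, m)` with `m ∈ P` through the cofactor `a` of `P` in `(m) = P * a`.
theorem sum_card_filter_mem_prime_le {x A : ℕ} (hx : 1 ≤ x)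
    (hbox : ∀ m ∈ box, 2 * x * A ≤ Ideal.absNorm (Ideal.span {m}) ∧
      Ideal.absNorm (Ideal.span {m}) < 16 * x * A) :
    ∑ P ∈ primesWithNorm K (Ioc x (2 * x)), #{m ∈ box | m ∈ P} ≤
      ∑ a ∈ idealsWithNorm K (Ico A (16 * A)),
        #(elementsWithCofactor box x (2 * x) a) := by
  have cofactor_exists (z : Σ _ : Ideal (𝓞 K), 𝓞 K)
      (hz : z ∈ (primesWithNorm K (Ioc x (2 * x))).sigma fun P => {m ∈ box | m ∈ P}) :
      ∃ a ∈ idealsWithNorm K (Ico A (16 * A)), Ideal.span {z.2} = z.1 * a := by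
    obtain ⟨hP, hm⟩ := mem_sigma.1 hz
    obtain ⟨hm_box, hmP⟩ := mem_filter.1 hm
    exact exists_cofactor_of_mem_prime hx (hbox _ hm_box) hP hmP
  choose! cofactor hmem hmul using cofactor_exists
  rw [← card_sigma, ← card_sigma]
  refine card_le_card_of_injOn (fun z => ⟨cofactor z, z.2⟩) (fun z hz => ?_) ?_
  · obtain ⟨hP, hm⟩ := mem_sigma.1 hz
    exact mem_sigma.2 ⟨hmem z hz,
      mem_elementsWithCofactor.2 ⟨(mem_filter.1 hm).1, z.1, hP, hmul z hz⟩⟩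
  · rintro ⟨P, m⟩ hz ⟨P', m'⟩ hz' h
    obtain ⟨h_cofactor, h_snd⟩ := Sigma.mk.inj_iff.1 h
    obtain rfl : m = m' := eq_of_heq h_snd
    have h_mul : P * cofactor ⟨P, m⟩ = P' * cofactor ⟨P, m⟩ := by
      rw [← hmul _ hz, h_cofactor, ← hmul _ hz']
    rw [mul_right_cancel₀ (mem_idealsWithNorm.1 (hmem _ hz)).1 h_mul]

open scoped Classical in
theorem le_card_filter_mem_of_mem_primesWithNorm {x : ℕ} (hV : 0 ≤ V)
    (hbox : EquidistributedModIdeals box V (1 / 2) (2 * x)) {P : Ideal (𝓞 K)}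
    (hP : P ∈ primesWithNorm K (Ioc x (2 * x))) : V / (4 * x) ≤ #{m ∈ box | m ∈ P} := by
  obtain ⟨hP_prime, hPx⟩ := mem_primesWithNorm.1 hP
  have hP0 : (0 : ℝ) < Ideal.absNorm P := mod_cast (Nat.zero_le x).trans_lt (mem_Ioc.1 hPx).1
  have hP2 : (Ideal.absNorm P : ℝ) ≤ 2 * x := mod_cast (mem_Ioc.1 hPx).2
  have lower := (abs_le.1 (hbox P hP_prime.ne_zero hP2)).1
  have : V / (4 * x) ≤ V / (2 * Ideal.absNorm P) :=
    div_le_div_of_nonneg_left hV (by positivity) (by linarith)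
  have : V / (2 * Ideal.absNorm P) = 1 / 2 * (V / Ideal.absNorm P) := by field_simp
  linarith

theorem card_primesWithNorm_mul_idealSelbergSum_le {x A : ℕ} (hx : 1 ≤ x) (hR : 1 ≤ R)
    (hRx : R ≤ x) (hV : 0 < V) (hθ : 0 ≤ θ) (hθR : θ * idealSelbergSum K R ^ 4 ≤ 1)
    (hnorm : ∀ m ∈ box, 2 * x * A ≤ Ideal.absNorm (Ideal.span {m}) ∧
      Ideal.absNorm (Ideal.span {m}) < 16 * x * A)
    (hhalf : EquidistributedModIdeals box V (1 / 2) (2 * x))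
    (hsieve : EquidistributedModIdeals box V θ (16 * A * R ^ 2)) :
    #(primesWithNorm K (Ioc x (2 * x))) * idealSelbergSum K R ≤
      8 * x * ∑ a ∈ idealsWithNorm K (Ico A (16 * A)), 1 / (Ideal.absNorm a : ℝ) := by
  classical
  set G := idealSelbergSum K R
  have hG : 0 < G := one_pos.trans_le (one_le_idealSelbergSum hR)
  have : (0 : ℝ) < x := mod_cast hx
  have cofactor_le (a) (ha : a ∈ idealsWithNorm K (Ico A (16 * A))) :
      (#(elementsWithCofactor box x (2 * x) a) : ℝ) * G ≤ 2 * V / Ideal.absNorm a := by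
    obtain ⟨ha0, haA⟩ := mem_idealsWithNorm.1 ha
    have ha_le : (Ideal.absNorm a : ℝ) ≤ 16 * A := mod_cast (mem_Ico.1 haA).2.le
    exact card_elementsWithCofactor_mul_idealSelbergSum_le hV.le hθ hR hRx hθR hsieve ha0
      (mul_le_mul_of_nonneg_right ha_le (by positivity))
  refine le_of_mul_le_mul_right ?_ (show 0 < V / (4 * x) by positivity)
  calc _ = (∑ P ∈ primesWithNorm K (Ioc x (2 * x)), V / (4 * x)) * G := by
        rw [sum_const, nsmul_eq_mul]
        ring
    _ ≤ (∑ P ∈ primesWithNorm K (Ioc x (2 * x)), (#{m ∈ box | m ∈ P} : ℝ)) * G :=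
        mul_le_mul_of_nonneg_right (sum_le_sum fun P hP =>
          le_card_filter_mem_of_mem_primesWithNorm hV.le hhalf hP) hG.le
    _ ≤ (∑ a ∈ idealsWithNorm K (Ico A (16 * A)),
          (#(elementsWithCofactor box x (2 * x) a) : ℝ)) * G :=
        mul_le_mul_of_nonneg_right (mod_cast sum_card_filter_mem_prime_le hx hnorm) hG.le
    _ ≤ ∑ a ∈ idealsWithNorm K (Ico A (16 * A)), 2 * V / Ideal.absNorm a := by
        rw [sum_mul]
        exact sum_le_sum cofactor_le
    _ = _ := by
        rw [mul_sum, sum_mul]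
        refine sum_congr rfl fun a _ => ?_
        field_simp
        ring

end CofactorSieve

section BrunTitchmarsh

open NumberField Finset Module

theorem exists_le_pow_and_pow_lt {d : ℕ} (hd : d ≠ 0) (B : ℕ) :
    ∀ᶠ Y : ℕ in atTop, ∃ M : ℕ, B ≤ M ∧ Y ≤ M ^ d ∧ M ^ d < 2 * Y := by
  filter_upwards [eventually_gt_atTop ((B + 2 * d) ^ d)] with Y hY
  have exists_pow : ∃ M : ℕ, Y ≤ M ^ d := ⟨Y, Nat.le_self_pow hd Y⟩
  classical
  obtain ⟨m, hm⟩ : ∃ m, Nat.find exists_pow = m + 1 :=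
    Nat.exists_eq_succ_of_ne_zero fun h => by
      have := Nat.find_spec exists_pow
      rw [h, zero_pow hd] at this
      lia
  have hYm : Y ≤ (m + 1) ^ d := hm ▸ Nat.find_spec exists_pow
  have hmY : m ^ d < Y := not_le.1 (Nat.find_min exists_pow (hm ▸ m.lt_succ_self))
  have hBm : B + 2 * d ≤ m := Nat.lt_succ_iff.1 (lt_of_pow_lt_pow_left' d (hY.trans_le hYm))
  have half_le : 1 - 1 / 2 ≤ (1 - 1 / ((m : ℝ) + 1)) ^ d := by
    have : (2 * d : ℝ) ≤ m := mod_cast (Nat.le_add_left _ _).trans hBm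
    refine one_sub_le_one_sub_pow (div_le_one_of_le₀ (by linarith) (by positivity)) ?_
    rw [mul_one_div, div_le_div_iff₀ (by positivity) two_pos]
    linarith
  have ratio : 1 - 1 / ((m : ℝ) + 1) = m / (m + 1) := by field_simp; ring
  rw [ratio, div_pow, le_div_iff₀ (by positivity)] at half_le
  have : (m + 1) ^ d ≤ 2 * m ^ d := by
    have : ((m : ℝ) + 1) ^ d ≤ 2 * (m : ℝ) ^ d := by linarith
    exact_mod_cast this
  exact ⟨m + 1, by lia, hYm, by lia⟩

variable (K : Type*) [Field K] [NumberField K]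

/- The box is centred at a large multiple of `1`, with side a small proportion of the distance to
the origin, so that all embeddings of its elements have comparable absolute values. -/
theorem exists_equidistributedModIdeals_box :
    ∃ c : ℝ, 0 < c ∧ ∀ᶠ Y : ℕ in atTop, ∃ (box : Finset (𝓞 K)) (V : ℝ), 0 < V ∧
      (∀ m ∈ box, Y ≤ 2 * Ideal.absNorm (Ideal.span {m}) ∧
        Ideal.absNorm (Ideal.span {m}) < 4 * Y) ∧
      ∀ θ : ℝ, 0 ≤ θ → θ ≤ 1 → EquidistributedModIdeals box V θ (c * θ ^ finrank ℚ K * Y) := by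
  set b := RingOfIntegers.basis K
  set d := finrank ℚ K
  have card_index : Fintype.card (Free.ChooseBasisIndex ℤ (𝓞 K)) = d := by
    rw [← finrank_eq_card_chooseBasisIndex, RingOfIntegers.rank]
  have : Nonempty (Free.ChooseBasisIndex ℤ (𝓞 K)) :=
    Fintype.card_pos_iff.1 (card_index ▸ finrank_pos)
  obtain ⟨L, hL, norm_bounds⟩ := exists_forall_mem_coordBox_absNorm_bounds b
  obtain ⟨C, hC, count⟩ := exists_abs_card_coordBox_filter_mem_sub_le b
  rw [card_index] at count
  refine ⟨1 / (2 * L * C) ^ d, by positivity, ?_⟩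
  filter_upwards [exists_le_pow_and_pow_lt (finrank_pos (R := ℚ) (M := K)).ne' L] with Y hY
  obtain ⟨M, hLM, hYM, hMY⟩ := hY
  set s := M / L
  have hs : 0 < s := Nat.div_pos hLM hL
  have hMs : M ≤ 2 * L * s := by
    have : M < s * L + L := Nat.lt_div_mul_add hL
    nlinarith
  have hYs : (Y : ℝ) ≤ (2 * L * s) ^ d :=
    mod_cast hYM.trans (Nat.pow_le_pow_left hMs d)
  refine ⟨coordBox b (fun i => M * b.repr 1 i) s, (s : ℝ) ^ d, by positivity, fun m hm => ?_,
    fun θ hθ hθ1 I hI hIB => count I hI _ s θ hθ hθ1 ?_⟩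
  · obtain ⟨lower, upper⟩ := norm_bounds M s (Nat.div_mul_le_self M L) m hm
    have lower : M ^ d ≤ 2 * Ideal.absNorm (Ideal.span {m}) := mod_cast lower
    have upper : Ideal.absNorm (Ideal.span {m}) ≤ 2 * M ^ d := mod_cast upper
    lia
  · calc C ^ d * (Ideal.absNorm I : ℝ)
        ≤ C ^ d * (1 / (2 * L * C) ^ d * θ ^ d * (2 * L * s) ^ d) := by
          gcongr
          exact hIB.trans (by gcongr)
      _ = (θ * s) ^ d := by
        simp only [mul_pow]
        field_simp

variable {K}

theorem EquidistributedModIdeals.mono {box : Finset (𝓞 K)} {V θ B B' : ℝ}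
    (h : EquidistributedModIdeals box V θ B) (hB : B' ≤ B) :
    EquidistributedModIdeals box V θ B' :=
  fun I hI hIB => h I hI (hIB.trans hB)

variable (K)

theorem exists_idealSelbergSum_pow_le {n : ℕ} (hn : n ≠ 0) :
    ∃ D : ℝ, 0 < D ∧ ∀ R : ℕ, 1 ≤ R → idealSelbergSum K R ^ n ≤ D * R := by
  obtain ⟨D, hD, le⟩ := exists_idealSelbergSum_le K (ε := 1 / n) (by positivity)
  refine ⟨D ^ n, by positivity, fun R hR => ?_⟩
  calc idealSelbergSum K R ^ n ≤ (D * (R : ℝ) ^ (1 / n : ℝ)) ^ n :=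
        pow_le_pow_left₀ (zero_le_one.trans (one_le_idealSelbergSum hR)) (le R) n
    _ = D ^ n * R := by
        rw [mul_pow, one_div, Real.rpow_inv_natCast_pow (Nat.cast_nonneg R) hn]

theorem eventually_card_primesWithNorm_mul_idealSelbergSum_le :
    ∀ᶠ n : ℕ in atTop, ∀ x R A : ℕ, n ≤ R → R ^ 6 ≤ x → n ≤ A →
      #(primesWithNorm K (Ioc x (2 * x))) * idealSelbergSum K R ≤
        8 * x * ∑ a ∈ idealsWithNorm K (Ico A (16 * A)), 1 / (Ideal.absNorm a : ℝ) := by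
  obtain ⟨c, hc, boxes⟩ := exists_equidistributedModIdeals_box K
  set d := finrank ℚ K
  have hd : d ≠ 0 := finrank_pos.ne'
  obtain ⟨D, _, pow_le⟩ := exists_idealSelbergSum_pow_le K (n := 4 * d) (by lia)
  filter_upwards [eventually_forall_ge_atTop.2 boxes, eventually_ge_atTop 1,
    tendsto_natCast_atTop_atTop.eventually_ge_atTop (4 * D / c),
    tendsto_natCast_atTop_atTop.eventually_ge_atTop (2 ^ d / (2 * c))]
    with n boxes hn hn_sieve hn_half x R A hnR hRx hnA
  have hR : 1 ≤ R := hn.trans hnR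
  have hRx' : R ≤ x := (Nat.le_self_pow (by simp) R).trans hRx
  have hx : 1 ≤ x := hR.trans hRx'
  set G := idealSelbergSum K R
  have hG : 1 ≤ G := one_le_idealSelbergSum hR
  have hG_pow : (1 / G ^ 4) ^ d = 1 / G ^ (4 * d) := by rw [div_pow, one_pow, ← pow_mul]
  obtain ⟨box, V, hV, norm_bounds, equidistributed⟩ := boxes (4 * x * A) (by nlinarith)
  refine card_primesWithNorm_mul_idealSelbergSum_le (θ := 1 / G ^ 4) hx hR hRx' hV (by positivity)
    (one_div_mul_cancel (by positivity)).le (fun m hm => ?_)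
    ((equidistributed (1 / 2) (by simp) (by norm_num)).mono ?_)
    ((equidistributed _ (by positivity) (div_le_one_of_le₀ (one_le_pow₀ hG) (by positivity))).mono
      ?_)
  · have := norm_bounds m hm
    lia
  · have : 2 ^ d ≤ A * (2 * c) :=
      (div_le_iff₀ (by positivity)).1 (hn_half.trans (mod_cast hnA))
    rw [div_pow, one_pow, mul_one_div, div_mul_eq_mul_div, le_div_iff₀ (by positivity)]
    push_cast
    nlinarith [(Nat.cast_nonneg x : (0 : ℝ) ≤ x)]
  · have hDR : 4 * D ≤ R * c := (div_le_iff₀ hc).1 (hn_sieve.trans (mod_cast hnR))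
    have hRx6 : (R : ℝ) ^ 6 ≤ x := mod_cast hRx
    have hR1 : (1 : ℝ) ≤ R := mod_cast hR
    rw [hG_pow, mul_one_div, div_mul_eq_mul_div, le_div_iff₀ (by positivity)]
    calc 16 * A * (R : ℝ) ^ 2 * G ^ (4 * d) ≤ 16 * A * (R : ℝ) ^ 2 * (D * R) := by
          gcongr
          exact pow_le R hR
      _ = 4 * A * (R : ℝ) ^ 3 * (4 * D) := by ring
      _ ≤ 4 * A * (R : ℝ) ^ 3 * (R * c) := by gcongr
      _ = c * (4 * A) * (R : ℝ) ^ 4 := by ring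
      _ ≤ c * (4 * A) * (R : ℝ) ^ 6 := by gcongr; simp
      _ ≤ c * (4 * A) * x := by gcongr
      _ = c * ↑(4 * x * A) := by push_cast; ring

theorem sum_Ico_sum_one_div_absNorm_le_idealSelbergSum {q : ℕ} (hq : 1 < q) (i j : ℕ) :
    ∑ k ∈ Ico i j, ∑ a ∈ idealsWithNorm K (Ico (q ^ k) (q * q ^ k)),
      1 / (Ideal.absNorm a : ℝ) ≤ idealSelbergSum K (q ^ j) := by
  classical
  rw [← sum_biUnion]
  · refine sum_one_div_absNorm_le_idealSelbergSum fun a ha => ?_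
    obtain ⟨k, hk, hak⟩ := mem_biUnion.1 ha
    obtain ⟨ha0, h⟩ := mem_idealsWithNorm.1 hak
    obtain ⟨lower, upper⟩ := mem_Ico.1 h
    rw [← pow_succ'] at upper
    exact mem_idealsWithNorm.2 ⟨ha0, mem_Icc.2 ⟨(Nat.one_le_pow _ _ (by lia)).trans lower,
      upper.le.trans (Nat.pow_le_pow_right (by lia) (mem_Ico.1 hk).2)⟩⟩
  · refine fun k _ l _ hkl => disjoint_left.2 fun a ha ha' => hkl ?_
    obtain ⟨lower, upper⟩ := mem_Ico.1 (mem_idealsWithNorm.1 ha).2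
    obtain ⟨lower', upper'⟩ := mem_Ico.1 (mem_idealsWithNorm.1 ha').2
    rw [← pow_succ'] at upper upper'
    have := (Nat.pow_lt_pow_iff_right hq).1 (lower.trans_lt upper')
    have := (Nat.pow_lt_pow_iff_right hq).1 (lower'.trans_lt upper)
    lia

theorem log_le_mul_log_div_add_one (x : ℕ) :
    Real.log x ≤ 18 * ((Nat.log 16 x / 6 : ℕ) + 1) := by
  rcases x.eq_zero_or_pos with rfl | hx
  · simp
  have hlog : Real.log 16 ≤ 3 := by
    rw [show (16 : ℝ) = 2 ^ 4 by norm_num, Real.log_pow, Nat.cast_ofNat]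
    linarith [Real.log_two_lt_d9]
  have hlt : x ≤ 16 ^ (6 * (Nat.log 16 x / 6 + 1)) :=
    (Nat.lt_pow_succ_log_self (by simp) x).le.trans (Nat.pow_le_pow_right (by simp) (by lia))
  calc Real.log x ≤ Real.log ((16 : ℝ) ^ (6 * (Nat.log 16 x / 6 + 1))) :=
        Real.log_le_log (mod_cast hx) (mod_cast hlt)
    _ = 6 * ((Nat.log 16 x / 6 : ℕ) + 1) * Real.log 16 := by
        rw [Real.log_pow]
        push_cast
        rfl
    _ ≤ 6 * ((Nat.log 16 x / 6 : ℕ) + 1) * 3 := by gcongr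
    _ = _ := by ring

theorem eventually_card_primesWithNorm_le :
    ∀ᶠ x : ℕ in atTop, #(primesWithNorm K (Ioc x (2 * x))) ≤ 400 * (x / Real.log x) := by
  obtain ⟨n, hn⟩ := (eventually_card_primesWithNorm_mul_idealSelbergSum_le K).exists
  filter_upwards [eventually_ge_atTop 1,
    (Real.tendsto_log_atTop.comp tendsto_natCast_atTop_atTop).eventually_ge_atTop
      (50 * ((n : ℝ) + 3))] with x hx hlog
  replace hlog : 50 * ((n : ℝ) + 3) ≤ Real.log x := hlog
  have hlog_le := log_le_mul_log_div_add_one x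
  set j := Nat.log 16 x / 6
  set R := 16 ^ j
  set π := #(primesWithNorm K (Ioc x (2 * x)))
  have hnj : (n : ℝ) ≤ j := by linarith [(Nat.cast_nonneg n : (0 : ℝ) ≤ n)]
  have hnR : n ≤ R := (Nat.cast_le.1 hnj).trans (Nat.lt_pow_self (by simp)).le
  have hRx : R ^ 6 ≤ x := by
    rw [← pow_mul]
    exact (Nat.pow_le_pow_right (by simp) (Nat.div_mul_le_self _ _)).trans
      (Nat.pow_log_le_self 16 (by lia))
  have hG : 0 < idealSelbergSum K R :=
    one_pos.trans_le (one_le_idealSelbergSum (Nat.one_le_pow _ _ (by simp)))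
  have main : ((j : ℝ) - n) * π ≤ 8 * x := by
    refine le_of_mul_le_mul_right ?_ hG
    calc ((j : ℝ) - n) * π * idealSelbergSum K R
        = ∑ _k ∈ Ico n j, π * idealSelbergSum K R := by
          rw [sum_const, Nat.card_Ico, nsmul_eq_mul, Nat.cast_sub (Nat.cast_le.1 hnj), mul_assoc]
      _ ≤ ∑ k ∈ Ico n j, 8 * x * ∑ a ∈ idealsWithNorm K (Ico (16 ^ k) (16 * 16 ^ k)),
            1 / (Ideal.absNorm a : ℝ) :=
          sum_le_sum fun k hk => hn x R (16 ^ k) hnR hRx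
            ((mem_Ico.1 hk).1.trans (Nat.lt_pow_self (by simp)).le)
      _ ≤ 8 * x * idealSelbergSum K R := by
          rw [← mul_sum]
          gcongr
          exact sum_Ico_sum_one_div_absNorm_le_idealSelbergSum K (by simp) n j
  rw [← mul_div_assoc, le_div_iff₀ (by linarith [(Nat.cast_nonneg n : (0 : ℝ) ≤ n)])]
  calc π * Real.log x ≤ π * (50 * ((j : ℝ) - n)) := by gcongr; linarith
    _ = 50 * (((j : ℝ) - n) * π) := by ring
    _ ≤ 50 * (8 * x) := by gcongr
    _ = _ := by ring

end BrunTitchmarsh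

section CriticalOrbit

/-- The orbit of `0` under `f = x ^ 2 - 2 * k * x + k`, divided by `k`: one has
`f^[n] 0 = k * scaledOrbit k n`. The critical point of `f` is `k = f 0`. -/
def scaledOrbit (k : ℤ) : ℕ → ℤ
  | 0 => 0
  | n + 1 => 1 + k * (scaledOrbit k n * (scaledOrbit k n - 2))

variable (k : ℤ)

theorem scaledOrbit_succ (n : ℕ) :
    scaledOrbit k (n + 1) = 1 + k * (scaledOrbit k n * (scaledOrbit k n - 2)) := rfl

theorem scaledOrbit_one : scaledOrbit k 1 = 1 := by simp [scaledOrbit]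

theorem scaledOrbit_two : scaledOrbit k 2 = 1 - k := by
  rw [scaledOrbit_succ, scaledOrbit_one]
  ring

theorem scaledOrbit_three : scaledOrbit k 3 = k ^ 3 - k + 1 := by
  rw [scaledOrbit_succ, scaledOrbit_two]
  ring

variable {k}

theorem scaledOrbit_add_modEq {N : ℤ} {i j : ℕ}
    (h : scaledOrbit k i ≡ scaledOrbit k j [ZMOD N]) (t : ℕ) :
    scaledOrbit k (i + t) ≡ scaledOrbit k (j + t) [ZMOD N] := by
  induction t with
  | zero => exact h
  | succ t ih =>
    rw [← add_assoc, ← add_assoc, scaledOrbit_succ, scaledOrbit_succ]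
    gcongr

theorem dvd_scaledOrbit_gcd {d : ℤ} {m n : ℕ} (hm : d ∣ scaledOrbit k m)
    (hn : d ∣ scaledOrbit k n) : d ∣ scaledOrbit k (Nat.gcd m n) := by
  induction m, n using Nat.gcd.induction with
  | H0 n => rwa [Nat.gcd_zero_left]
  | H1 m n _ ih =>
    rw [Nat.gcd_rec]
    refine ih ?_ hm
    have period_start : scaledOrbit k m ≡ scaledOrbit k 0 [ZMOD d] := Int.modEq_zero_iff_dvd.2 hm
    have periodic (q r : ℕ) : scaledOrbit k (r + q * m) ≡ scaledOrbit k r [ZMOD d] := by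
      induction q with
      | zero => rw [zero_mul, add_zero]
      | succ q ihq =>
        have := scaledOrbit_add_modEq period_start (r + q * m)
        rw [zero_add, show m + (r + q * m) = r + (q + 1) * m by ring] at this
        exact this.trans ihq
    have h_mod := periodic (n / m) (n % m)
    rw [Nat.mod_add_div' n m] at h_mod
    exact h_mod.dvd_iff.1 hn

theorem isCoprime_scaledOrbit {m n : ℕ} (h : m.Coprime n) :
    IsCoprime (scaledOrbit k m) (scaledOrbit k n) := by
  have := dvd_scaledOrbit_gcd (Int.gcd_dvd_left (scaledOrbit k m) (scaledOrbit k n))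
    (Int.gcd_dvd_right _ _)
  rw [h.gcd_eq_one, scaledOrbit_one] at this
  exact Int.isCoprime_iff_gcd_eq_one.2 (Nat.eq_one_of_dvd_one (Int.natCast_dvd_natCast.1 this))

theorem isCoprime_self_scaledOrbit_succ (k : ℤ) (n : ℕ) : IsCoprime k (scaledOrbit k (n + 1)) :=
  ⟨-(scaledOrbit k n * (scaledOrbit k n - 2)), 1, by rw [scaledOrbit_succ]; ring⟩

theorem scaledOrbit_succ_ne_zero (hk : 1 < |k|) (n : ℕ) : scaledOrbit k (n + 1) ≠ 0 := fun h => by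
  have hunit := isCoprime_self_scaledOrbit_succ k n
  rw [h, isCoprime_zero_right, Int.isUnit_iff_abs_eq] at hunit
  exact hk.ne' hunit

theorem mul_scaledOrbit_succ_ne_zero (hk : 1 < |k|) (n : ℕ) : k * scaledOrbit k (n + 1) ≠ 0 :=
  mul_ne_zero (by rintro rfl; simp at hk) (scaledOrbit_succ_ne_zero hk n)

theorem two_mul_abs_sub_one_le_sq_sub_sq {u w : ℤ} (h : w ^ 2 < u ^ 2) :
    2 * |u| - 1 ≤ u ^ 2 - w ^ 2 := by
  have habs : |w| + 1 ≤ |u| := sq_lt_sq.1 h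
  rw [← sq_abs u, ← sq_abs w]
  nlinarith [abs_nonneg w]

theorem not_isSquare_sq_sub_self (hk : 1 < |k|) : ¬IsSquare (k ^ 2 - k) := by
  rintro ⟨z, hz⟩
  have := two_mul_abs_sub_one_le_sq_sub_sq (u := 2 * k - 1) (w := 2 * z) (by linarith)
  have : |2 * k - 1| ≤ 1 := by linarith
  rw [abs_le] at this
  rw [lt_abs] at hk
  lia

/- If `k * c` is a square, `c` being the `(n + 1)`-st term, then `k = ε * s ^ 2` and `c = ε * w ^ 2`
with `ε = ±1`, and the recursion makes `s ^ 2 - ε` a difference of squares too small to exist. -/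
theorem not_isSquare_mul_scaledOrbit (hk : 1 < |k|) {n : ℕ} (hn : 3 ≤ n) :
    ¬IsSquare (k * scaledOrbit k n) := by
  rintro ⟨z, hz⟩
  rw [← sq] at hz
  obtain ⟨n, rfl⟩ : ∃ m, n = m + 2 := ⟨n - 2, by lia⟩
  obtain ⟨s, hs⟩ := Int.sq_of_isCoprime (isCoprime_self_scaledOrbit_succ k (n + 1)) hz
  obtain ⟨ε, hε, hks⟩ : ∃ ε : ℤ, (ε = 1 ∨ ε = -1) ∧ k = ε * s ^ 2 :=
    hs.elim (fun h => ⟨1, .inl rfl, by lia⟩) (fun h => ⟨-1, .inr rfl, by lia⟩)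
  have k_abs : |k| = s ^ 2 := by rcases hs with rfl | rfl <;> simp
  have k_sq : k ^ 2 = s ^ 4 := by rw [← sq_abs, k_abs, ← pow_mul]
  have two_le_s : 2 ≤ |s| := by
    by_contra! h
    nlinarith [sq_abs s, abs_nonneg s]
  obtain ⟨w, rfl⟩ : s ∣ z := by
    rw [← Int.pow_dvd_pow_iff two_ne_zero, ← hz, hks]
    exact ⟨ε * scaledOrbit k (n + 2), by rw [hks]; ring⟩
  obtain ⟨v, hv⟩ : ∃ v, scaledOrbit k (n + 1) = 1 + k * v := ⟨_, scaledOrbit_succ k n⟩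
  have s_ne_zero : s ≠ 0 := by rintro rfl; simp at two_le_s
  have key : (s ^ 3 * v) ^ 2 - w ^ 2 = s ^ 2 - ε := by
    rw [scaledOrbit_succ, hv] at hz
    refine mul_left_cancel₀ (pow_ne_zero 2 s_ne_zero) ?_
    linear_combination hz - (v ^ 2 * (k ^ 2 + s ^ 4) - 1) * k_sq - hks
  have four_le : 4 ≤ s ^ 2 := by nlinarith [sq_abs s]
  have v_ne_zero : v ≠ 0 := by
    rintro rfl
    have : ε ≤ 1 := by lia
    nlinarith [sq_nonneg w]
  have s_cube_le : 2 * s ^ 2 ≤ |s ^ 3 * v| := by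
    rw [abs_mul, abs_pow, ← sq_abs s]
    nlinarith [Int.one_le_abs v_ne_zero, pow_pos (two_pos.trans_le two_le_s) 3,
      pow_pos (two_pos.trans_le two_le_s) 2]
  have := two_mul_abs_sub_one_le_sq_sub_sq (u := s ^ 3 * v) (w := w) (by lia)
  lia

/-- `c` is divisible by `p` to an odd power, when `p` is a prime. -/
def OddlyDivides (p : ℕ) (c : ℤ) : Prop :=
  ∃ a b : ℤ, c = b ^ 2 * a ∧ b ≠ 0 ∧ (p : ℤ) ∣ a ∧ ¬(p : ℤ) ^ 2 ∣ a

theorem OddlyDivides.dvd {p : ℕ} {c : ℤ} (h : OddlyDivides p c) : (p : ℤ) ∣ c := by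
  obtain ⟨a, b, rfl, _, hpa, _⟩ := h
  exact hpa.mul_left _

theorem OddlyDivides.mul_left {p : ℕ} {c u : ℤ} (h : OddlyDivides p c)
    (hu : IsCoprime (p : ℤ) u) : OddlyDivides p (u * c) := by
  obtain ⟨a, b, rfl, hb, hpa, hp2a⟩ := h
  exact ⟨u * a, b, by ring, hb, hpa.mul_left u, fun h => hp2a (hu.pow_left.dvd_of_dvd_mul_left h)⟩

theorem exists_prime_oddlyDivides {c : ℤ} (hc : 0 < c) (hsq : ¬IsSquare c) :
    ∃ p : ℕ, p.Prime ∧ OddlyDivides p c := by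
  lift c to ℕ using hc.le
  obtain ⟨a, b, rfl, ha⟩ := Nat.sq_mul_squarefree c
  have ha1 : a ≠ 1 := by
    rintro rfl
    exact hsq ⟨b, by push_cast; ring⟩
  obtain ⟨p, hp, hpa⟩ := Nat.exists_prime_and_dvd ha1
  refine ⟨p, hp, a, b, by push_cast; rfl, ?_, mod_cast hpa, fun h => ?_⟩
  · intro hb
    simp [Int.natCast_eq_zero.1 hb] at hc
  · rw [sq] at h
    exact hp.one_lt.ne' (Nat.isUnit_iff.1 (ha p (mod_cast h)))

theorem exists_odd_prime_oddlyDivides {c : ℤ} (hc : c < 0) (hc6 : c ≡ 1 [ZMOD 6]) :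
    ∃ p : ℕ, p.Prime ∧ p ≠ 2 ∧ OddlyDivides p (-c) := by
  have hsq : ¬IsSquare (-c) := by
    rintro ⟨z, hz⟩
    have hz3 : z * z % 3 = 2 := by unfold Int.ModEq at hc6; lia
    rw [Int.mul_emod] at hz3
    have : z % 3 = 0 ∨ z % 3 = 1 ∨ z % 3 = 2 := by lia
    rcases this with h | h | h <;> simp [h] at hz3
  obtain ⟨p, hp, hpc⟩ := exists_prime_oddlyDivides (neg_pos.2 hc) hsq
  refine ⟨p, hp, ?_, hpc⟩
  rintro rfl
  have := hpc.dvd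
  unfold Int.ModEq at hc6
  lia

/-- The `n`-th term of the orbit has a primitive odd prime divisor, and moreover one which divides
it to an odd power. -/
def HasOddPrimitiveDivisor (k : ℤ) (n : ℕ) : Prop :=
  ∃ p : ℕ, p.Prime ∧ p ≠ 2 ∧ (∀ i, 1 ≤ i → i < n → ¬(p : ℤ) ∣ scaledOrbit k i) ∧
    OddlyDivides p (scaledOrbit k n)

theorem not_dvd_scaledOrbit_of_coprime {p m n : ℕ} (hp : p.Prime) (hmn : m.Coprime n)
    (hn : (p : ℤ) ∣ scaledOrbit k n) : ¬(p : ℤ) ∣ scaledOrbit k m := fun hm =>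
  (Nat.prime_iff_prime_int.1 hp).not_isUnit ((isCoprime_scaledOrbit hmn).isUnit_of_dvd' hm hn)

theorem not_dvd_of_dvd_scaledOrbit {p n : ℕ} (hp : p.Prime) (hn : 1 ≤ n)
    (hpn : (p : ℤ) ∣ scaledOrbit k n) : ¬(p : ℤ) ∣ k := fun hpk => by
  obtain ⟨n, rfl⟩ := Nat.exists_eq_add_of_le' hn
  exact (Nat.prime_iff_prime_int.1 hp).not_isUnit
    ((isCoprime_self_scaledOrbit_succ k n).isUnit_of_dvd' hpk hpn)

theorem scaledOrbit_modEq_six {n : ℕ} (hn : Odd n) : scaledOrbit k n ≡ 1 [ZMOD 6] := by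
  obtain ⟨n, rfl⟩ := hn
  induction n with
  | zero => rw [mul_zero, zero_add, scaledOrbit_one]
  | succ n ih =>
    have three : scaledOrbit k 3 ≡ 1 [ZMOD 6] := by
      rw [scaledOrbit_three]
      have : k % 6 = 0 ∨ k % 6 = 1 ∨ k % 6 = 2 ∨ k % 6 = 3 ∨ k % 6 = 4 ∨ k % 6 = 5 := by lia
      rcases this with h | h | h | h | h | h <;>
        simp [Int.ModEq, Int.add_emod, Int.sub_emod, pow_succ, Int.mul_emod, h]
    have := scaledOrbit_add_modEq (i := 2 * n + 1) (j := 1) (by rwa [scaledOrbit_one]) 2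
    exact this.trans three

theorem scaledOrbit_add_three_neg (hk : k ≤ -2) (n : ℕ) : scaledOrbit k (n + 3) < 0 := by
  induction n with
  | zero =>
    rw [zero_add, scaledOrbit_three]
    nlinarith [sq_nonneg k]
  | succ n ih =>
    rw [Nat.add_right_comm, scaledOrbit_succ]
    set y := scaledOrbit k (n + 3)
    have : 3 ≤ y * (y - 2) := by nlinarith
    nlinarith

theorem scaledOrbit_add_three_pos (hk : 2 ≤ k) (n : ℕ) : 0 < scaledOrbit k (n + 3) := by
  suffices 3 ≤ scaledOrbit k (n + 3) by lia
  induction n with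
  | zero =>
    rw [zero_add, scaledOrbit_three]
    nlinarith [sq_nonneg k]
  | succ n ih =>
    rw [Nat.add_right_comm, scaledOrbit_succ]
    have : 3 ≤ scaledOrbit k (n + 3) * (scaledOrbit k (n + 3) - 2) := by nlinarith
    nlinarith

theorem hasOddPrimitiveDivisor_of_le_neg_two (hk : k ≤ -2) {q : ℕ} (hq : q.Prime) (hq3 : 3 ≤ q) :
    HasOddPrimitiveDivisor k q := by
  have neg : scaledOrbit k q < 0 := by
    obtain ⟨n, rfl⟩ := Nat.exists_eq_add_of_le' hq3
    exact scaledOrbit_add_three_neg hk n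
  obtain ⟨p, hp, hp2, hpq⟩ :=
    exists_odd_prime_oddlyDivides neg (scaledOrbit_modEq_six (hq.odd_of_ne_two (by lia)))
  refine ⟨p, hp, hp2, fun i hi hiq => ?_, ?_⟩
  · exact not_dvd_scaledOrbit_of_coprime hp (Nat.coprime_of_lt_prime (by lia) hiq hq).symm
      (dvd_neg.1 hpq.dvd)
  · simpa using hpq.mul_left isCoprime_one_right.neg_right

/-- The quotients of the even-indexed terms by the second one, `1 - k`. -/
def evenQuotient (k : ℤ) : ℕ → ℤ
  | 0 => 1
  | n + 1 => 1 - k ^ 3 * (k - 1) * (evenQuotient k n ^ 2 * ((k - 1) * evenQuotient k n + 2) ^ 2)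

theorem scaledOrbit_two_mul_add_two (k : ℤ) (n : ℕ) :
    scaledOrbit k (2 * n + 2) = (1 - k) * evenQuotient k n := by
  induction n with
  | zero => rw [mul_zero, zero_add, scaledOrbit_two, evenQuotient, mul_one]
  | succ n ih =>
    rw [show 2 * (n + 1) + 2 = 2 * n + 2 + 1 + 1 by ring, scaledOrbit_succ, scaledOrbit_succ, ih,
      evenQuotient]
    ring

theorem evenQuotient_modEq_six (k : ℤ) (n : ℕ) : evenQuotient k n ≡ 1 [ZMOD 6] := by
  induction n with
  | zero => rfl
  | succ n ih =>
    have ih : evenQuotient k n % 6 = 1 := ih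
    have : k % 6 = 0 ∨ k % 6 = 1 ∨ k % 6 = 2 ∨ k % 6 = 3 ∨ k % 6 = 4 ∨ k % 6 = 5 := by lia
    rcases this with h | h | h | h | h | h <;>
      simp [evenQuotient, Int.ModEq, Int.add_emod, Int.sub_emod, pow_succ, Int.mul_emod, h, ih]

theorem isCoprime_evenQuotient (k : ℤ) (n : ℕ) : IsCoprime (evenQuotient k n) (1 - k) := by
  cases n with
  | zero => exact isCoprime_one_left
  | succ n =>
    exact ⟨1, -k ^ 3 * (evenQuotient k n ^ 2 * ((k - 1) * evenQuotient k n + 2) ^ 2), by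
      rw [evenQuotient]; ring⟩

theorem exists_scaledOrbit_two_mul_eq (k : ℤ) {n : ℕ} (hn : 2 ≤ n) :
    ∃ t, scaledOrbit k (2 * n) = scaledOrbit k n * (1 + scaledOrbit k n * t) := by
  have period : scaledOrbit k (n + 2) ≡ scaledOrbit k 2 [ZMOD scaledOrbit k n ^ 2] := by
    rw [scaledOrbit_two, scaledOrbit_succ, scaledOrbit_succ]
    exact Int.modEq_iff_dvd.2 ⟨-(k * (k * (scaledOrbit k n - 2)) ^ 2), by ring⟩
  have := scaledOrbit_add_modEq period (n - 2)
  rw [show n + 2 + (n - 2) = 2 * n by lia, show 2 + (n - 2) = n by lia] at this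
  obtain ⟨t, ht⟩ := this.symm.dvd
  exact ⟨t, by linear_combination ht⟩

theorem exists_primitive_part (hk : 2 ≤ k) {q : ℕ} (hq : Odd q) (hq3 : 3 ≤ q) :
    ∃ c, scaledOrbit k (2 * q) = (1 - k) * scaledOrbit k q * c ∧ c < 0 ∧ c ≡ 1 [ZMOD 6] ∧
      IsCoprime c (1 - k) ∧ IsCoprime c (scaledOrbit k q) := by
  have pos : 0 < scaledOrbit k q := by
    obtain ⟨n, rfl⟩ := Nat.exists_eq_add_of_le' hq3
    exact scaledOrbit_add_three_pos hk n
  have pos_two_mul : 0 < scaledOrbit k (2 * q) := by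
    have := scaledOrbit_add_three_pos hk (2 * q - 3)
    rwa [show 2 * q - 3 + 3 = 2 * q by lia] at this
  have even_eq : scaledOrbit k (2 * q) = (1 - k) * evenQuotient k (q - 1) := by
    rw [← scaledOrbit_two_mul_add_two, show 2 * (q - 1) + 2 = 2 * q by lia]
  obtain ⟨t, ht⟩ := exists_scaledOrbit_two_mul_eq k (n := q) (by lia)
  obtain ⟨c, hc⟩ : scaledOrbit k q ∣ evenQuotient k (q - 1) := by
    have coprime := isCoprime_scaledOrbit (k := k) (Nat.coprime_two_right.2 hq)
    rw [scaledOrbit_two] at coprime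
    exact coprime.dvd_of_dvd_mul_left (even_eq ▸ ht ▸ dvd_mul_right _ _)
  rw [hc] at even_eq
  refine ⟨c, by rw [even_eq, mul_assoc], ?_, ?_, ?_, ?_⟩
  · rw [even_eq] at pos_two_mul
    exact neg_of_mul_neg_right (neg_of_mul_pos_right pos_two_mul (by lia)) pos.le
  · have := (scaledOrbit_modEq_six (k := k) hq).mul_right c
    rw [← hc, one_mul] at this
    exact this.symm.trans (evenQuotient_modEq_six k _)
  · exact (hc ▸ isCoprime_evenQuotient k (q - 1)).of_mul_left_right
  · have : (1 - k) * c = 1 + scaledOrbit k q * t :=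
      mul_left_cancel₀ pos.ne' (by linear_combination ht - even_eq)
    exact ⟨1 - k, -t, by linear_combination this⟩

theorem hasOddPrimitiveDivisor_two_mul (hk : 2 ≤ k) {q : ℕ} (hq : q.Prime) (hq3 : 3 ≤ q) :
    HasOddPrimitiveDivisor k (2 * q) := by
  obtain ⟨c, hc, c_neg, hc6, coprime_two, coprime_q⟩ :=
    exists_primitive_part hk (hq.odd_of_ne_two (by lia)) hq3
  obtain ⟨p, hp, hp2, hpc⟩ := exists_odd_prime_oddlyDivides c_neg hc6
  have hp_unit : ¬IsUnit (p : ℤ) := (Nat.prime_iff_prime_int.1 hp).not_isUnit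
  have hp_dvd : (p : ℤ) ∣ c := dvd_neg.1 hpc.dvd
  have oddlyDivides : OddlyDivides p (scaledOrbit k (2 * q)) := by
    have := hpc.mul_left (u := -((1 - k) * scaledOrbit k q))
      ((coprime_two.mul_right coprime_q).of_isCoprime_of_dvd_left hp_dvd).neg_right
    rwa [neg_mul_neg, ← hc] at this
  refine ⟨p, hp, hp2, fun i hi hiq hpi => ?_, oddlyDivides⟩
  have hp_gcd := dvd_scaledOrbit_gcd hpi oddlyDivides.dvd
  have gcd_lt : i.gcd (2 * q) < 2 * q := (Nat.gcd_le_left _ hi).trans_lt hiq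
  obtain ⟨u, v, hu, hv, huv⟩ := Nat.dvd_mul.1 (Nat.gcd_dvd_right i (2 * q))
  rw [← huv] at hp_gcd gcd_lt
  rcases (Nat.dvd_prime Nat.prime_two).1 hu with rfl | rfl <;>
    rcases (Nat.dvd_prime hq).1 hv with rfl | rfl
  · exact hp_unit (isUnit_of_dvd_one (by simpa [scaledOrbit_one] using hp_gcd))
  · exact hp_unit (coprime_q.isUnit_of_dvd' hp_dvd (by simpa using hp_gcd))
  · exact hp_unit (coprime_two.isUnit_of_dvd' hp_dvd (by simpa [scaledOrbit_two] using hp_gcd))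
  · exact gcd_lt.false

theorem frequently_hasOddPrimitiveDivisor (hk : 1 < |k|) :
    ∃ᶠ n in atTop, HasOddPrimitiveDivisor k n := by
  refine frequently_atTop.2 fun N => ?_
  obtain ⟨q, hq, hq_prime⟩ := Nat.exists_infinite_primes (N + 3)
  rcases lt_abs.1 hk with hk | hk
  · exact ⟨2 * q, by lia, hasOddPrimitiveDivisor_two_mul hk hq_prime (by lia)⟩
  · exact ⟨q, by lia, hasOddPrimitiveDivisor_of_le_neg_two (by lia) hq_prime (by lia)⟩

end CriticalOrbit

section QuadMap

variable {A B F : Type*} [CommRing A] [CommRing B] [FunLike F A B] [RingHomClass F A B] (k : ℤ)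

/-- The polynomial `x ^ 2 - 2 * k * x + k` as a self-map of any commutative ring. -/
def quadMap (x : A) : A := x ^ 2 - 2 * k * x + k

theorem quadMap_self : quadMap k (k : A) = k - k ^ 2 := by
  rw [quadMap]
  ring

theorem quadMap_two_mul_sub (y : A) : quadMap k (2 * k - y) = quadMap k y := by
  simp only [quadMap]
  ring

theorem sub_sq_eq_quadMap_sub (y : A) : (y - k) ^ 2 = quadMap k y - quadMap k (k : A) := by
  simp only [quadMap]
  ring

theorem quadMap_eq_quadMap_iff [IsDomain A] {x y : A} :
    quadMap k x = quadMap k y ↔ x = y ∨ x = 2 * k - y := by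
  have factored : quadMap k x - quadMap k y = (x - y) * (x - (2 * k - y)) := by
    simp only [quadMap]
    ring
  rw [← sub_eq_zero, factored, mul_eq_zero, sub_eq_zero, sub_eq_zero]

theorem map_two_mul_intCast_sub (φ : F) (y : A) : φ (2 * k - y) = 2 * k - φ y := by
  simp [map_ofNat φ 2]

theorem map_quadMap (φ : F) (x : A) : φ (quadMap k x) = quadMap k (φ x) := by
  simp [quadMap, map_ofNat φ 2]

theorem map_quadMap_iterate (φ : F) (n : ℕ) (x : A) :
    φ ((quadMap k)^[n] x) = (quadMap k)^[n] (φ x) :=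
  (Function.Semiconj.iterate_right (map_quadMap k φ) n).eq x

theorem quadMap_iterate_self (n : ℕ) :
    (quadMap k)^[n] (k : A) = ((k * scaledOrbit k (n + 1) : ℤ) : A) := by
  induction n with
  | zero => simp [scaledOrbit_one]
  | succ n ih =>
    rw [Function.iterate_succ_apply', ih, scaledOrbit_succ k (n + 1), quadMap]
    push_cast
    ring

end QuadMap

section IterRoots

open Finset

variable {L : Type*} [Field L]

theorem finite_quadMap_iterate_eq_zero (k : ℤ) (n : ℕ) :
    {x : L | (quadMap k)^[n] x = 0}.Finite := by
  induction n with
  | zero => simp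
  | succ n ih =>
    refine ih.preimage' (f := quadMap k) fun b _ => ?_
    by_cases h : ∃ y, quadMap k y = b
    · obtain ⟨y, rfl⟩ := h
      exact (Set.toFinite {y, 2 * (k : L) - y}).subset fun x => (quadMap_eq_quadMap_iff k).1
    · exact Set.finite_empty.subset fun x hx => h ⟨x, hx⟩

variable (L) in
/-- The roots in `L` of the `n`-th iterate of `quadMap k`: the `n`-th level of the tree of
preimages of `0`. -/
noncomputable def iterRoots (k : ℤ) (n : ℕ) : Finset L :=
  (finite_quadMap_iterate_eq_zero (L := L) k n).toFinset

variable {k : ℤ} {n : ℕ} {x y : L}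

theorem mem_iterRoots : x ∈ iterRoots L k n ↔ (quadMap k)^[n] x = 0 := by simp [iterRoots]

theorem iterRoots_zero : iterRoots L k 0 = {0} := by
  ext
  simp [mem_iterRoots]

theorem mem_iterRoots_succ : x ∈ iterRoots L k (n + 1) ↔ quadMap k x ∈ iterRoots L k n := by
  rw [mem_iterRoots, mem_iterRoots, Function.iterate_succ_apply]

theorem two_mul_sub_mem_iterRoots (hy : y ∈ iterRoots L k (n + 1)) :
    2 * (k : L) - y ∈ iterRoots L k (n + 1) := by
  rwa [mem_iterRoots_succ, quadMap_two_mul_sub, ← mem_iterRoots_succ]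

theorem filter_quadMap_eq [DecidableEq L] (hy : y ∈ iterRoots L k (n + 1)) :
    {x ∈ iterRoots L k (n + 1) | quadMap k x = quadMap k y} = {y, 2 * (k : L) - y} := by
  ext x
  simp only [mem_filter, mem_insert, mem_singleton, quadMap_eq_quadMap_iff,
    and_iff_right_iff_imp]
  rintro (rfl | rfl)
  exacts [hy, two_mul_sub_mem_iterRoots hy]

variable [CharZero L]

theorem map_mem_iterRoots (σ : Gal(L/ℚ)) : σ x ∈ iterRoots L k n ↔ x ∈ iterRoots L k n := by
  rw [mem_iterRoots, mem_iterRoots, ← map_quadMap_iterate, map_eq_zero_iff σ σ.injective]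

theorem ne_intCast_of_mem_iterRoots (hk : 1 < |k|) (hx : x ∈ iterRoots L k n) : x ≠ k := by
  rintro rfl
  rw [mem_iterRoots, quadMap_iterate_self, Int.cast_eq_zero] at hx
  exact mul_scaledOrbit_succ_ne_zero hk n hx

theorem ne_two_mul_sub_of_mem_iterRoots (hk : 1 < |k|) (hx : x ∈ iterRoots L k n) :
    x ≠ 2 * k - x := fun h =>
  ne_intCast_of_mem_iterRoots hk hx
    (mul_left_cancel₀ (two_ne_zero' L) (by linear_combination h))

theorem pow_two_pow_apply_of_mem_iterRoots (σ : Gal(L/ℚ)) (hx : x ∈ iterRoots L k n) :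
    (σ ^ 2 ^ n) x = x := by
  induction n generalizing x with
  | zero =>
    rw [iterRoots_zero, mem_singleton] at hx
    rw [hx, map_zero]
  | succ n ih =>
    have fixes_image := ih (mem_iterRoots_succ.1 hx)
    rw [map_quadMap, quadMap_eq_quadMap_iff] at fixes_image
    rw [pow_succ, mul_comm, two_mul, pow_add, AlgEquiv.mul_apply]
    rcases fixes_image with h | h
    · rw [h, h]
    · rw [h, map_two_mul_intCast_sub, h, sub_sub_cancel]

end IterRoots

section FixedElements

variable {L : Type*} [Field L] [CharZero L]

theorem map_prod_sub_intCast_of_mapsTo {S : Finset L} {σ : Gal(L/ℚ)} (hS : Set.MapsTo σ S S)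
    (a : ℤ) : σ (∏ z ∈ S, (z - a)) = ∏ z ∈ S, (z - a) := by
  rw [map_prod]
  exact Finset.prod_nbij σ hS σ.injective.injOn
    (Finset.surjOn_of_injOn_of_card_le σ hS σ.injective.injOn le_rfl) fun z _ => by simp

theorem isSquare_of_sq_eq_of_forall_fixed [IsGalois ℚ L] {t : L} {w : ℤ} (ht : t ^ 2 = w)
    (hfix : ∀ σ : Gal(L/ℚ), σ t = t) : IsSquare w := by
  obtain ⟨r, rfl⟩ := (InfiniteGalois.mem_range_algebraMap_iff_fixed t).2 hfix
  refine Rat.isSquare_intCast_iff.1 ⟨r, (algebraMap ℚ L).injective ?_⟩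
  rw [← sq, map_pow, ht, map_intCast]

end FixedElements

section TreeField

open Finset

/-- `L` is the splitting field over `ℚ` of the first `N` iterates of `quadMap k`: it is Galois,
every root at a level below `N` has a preimage, and automorphisms are determined by their action on
the roots up to level `N`. -/
structure IsTreeField (k : ℤ) (N : ℕ) (L : Type*) [Field L] [NumberField L] : Prop where
  isGalois : IsGalois ℚ L
  exists_quadMap_eq : ∀ n < N, ∀ α ∈ iterRoots L k n, ∃ y, quadMap k y = α
  faithful : ∀ σ : Gal(L/ℚ), (∀ n ≤ N, ∀ x ∈ iterRoots L k n, σ x = x) → σ = 1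

variable {L : Type*} [Field L] [NumberField L] {k : ℤ} {N n : ℕ}

namespace IsTreeField

theorem exists_mem_iterRoots_succ (T : IsTreeField k N L) (hn : n < N) {α : L}
    (hα : α ∈ iterRoots L k n) : ∃ y ∈ iterRoots L k (n + 1), quadMap k y = α := by
  obtain ⟨y, rfl⟩ := T.exists_quadMap_eq n hn α hα
  exact ⟨y, mem_iterRoots_succ.2 hα, rfl⟩

theorem prod_sub (T : IsTreeField k N L) (hk : 1 < |k|) (hn : n ≤ N) (x : L) :
    ∏ α ∈ iterRoots L k n, (x - α) = (quadMap k)^[n] x := by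
  classical
  induction n generalizing x with
  | zero => simp [iterRoots_zero]
  | succ n ih =>
    rw [← prod_fiberwise_of_maps_to (t := iterRoots L k n) (g := quadMap k)
      (fun x hx => mem_iterRoots_succ.1 hx), Function.iterate_succ_apply, ← ih (by lia)]
    refine prod_congr rfl fun α hα => ?_
    obtain ⟨y, hy, rfl⟩ := T.exists_mem_iterRoots_succ (by lia) hα
    rw [filter_quadMap_eq hy, prod_pair (ne_two_mul_sub_of_mem_iterRoots hk hy)]
    simp only [quadMap]
    ring

theorem card_iterRoots (T : IsTreeField k N L) (hk : 1 < |k|) (hn : n ≤ N) :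
    #(iterRoots L k n) = 2 ^ n := by
  classical
  induction n with
  | zero => simp [iterRoots_zero]
  | succ n ih =>
    rw [pow_succ, ← ih (by lia), card_eq_sum_card_fiberwise (f := quadMap k)
      (fun x hx => mem_iterRoots_succ.1 hx)]
    refine sum_const_nat fun α hα => ?_
    obtain ⟨y, hy, rfl⟩ := T.exists_mem_iterRoots_succ (by lia) hα
    rw [filter_quadMap_eq hy, card_pair (ne_two_mul_sub_of_mem_iterRoots hk hy)]

theorem prod_sub_quadMap_self (T : IsTreeField k N L) (hk : 1 < |k|) (hn : n ≤ N) :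
    ∏ α ∈ iterRoots L k n, (α - quadMap k (k : L)) =
      ((-1) ^ 2 ^ n * (k * scaledOrbit k (n + 2)) : ℤ) := by
  simp_rw [← neg_sub (quadMap k (k : L))]
  rw [prod_neg, T.prod_sub hk hn, T.card_iterRoots hk hn, ← Function.iterate_succ_apply,
    quadMap_iterate_self]
  push_cast
  ring

end IsTreeField

theorem not_isSquare_neg_one_pow_mul (hk : 1 < |k|) (n : ℕ) :
    ¬IsSquare ((-1) ^ 2 ^ n * (k * scaledOrbit k (n + 2))) := by
  rcases n with _ | n
  · rw [pow_zero, pow_one, scaledOrbit_two, show -1 * (k * (1 - k)) = k ^ 2 - k by ring]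
    exact not_isSquare_sq_sub_self hk
  · rw [(even_two.pow_of_ne_zero (Nat.succ_ne_zero n)).neg_one_pow, one_mul]
    exact not_isSquare_mul_scaledOrbit hk (by lia)

namespace IsTreeField

/- Otherwise the orbit of `y` meets each fibre of `quadMap k` exactly once, and the product of
`z - k` over this orbit is a rational square root of a nonsquare integer. -/
theorem exists_apply_eq_two_mul_sub (T : IsTreeField k N L) (hk : 1 < |k|) (hn : n ≤ N) {y : L}
    (transitive : ∀ α ∈ iterRoots L k n, ∃ σ : Gal(L/ℚ), σ (quadMap k y) = α)
    (hy : y ∈ iterRoots L k (n + 1)) : ∃ σ : Gal(L/ℚ), σ y = 2 * k - y := by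
  classical
  have := T.isGalois
  by_contra! not_reflected
  set O : Finset L := univ.image fun g : Gal(L/ℚ) => g y
  have mapsTo (σ : Gal(L/ℚ)) : Set.MapsTo σ O O := fun z hz => by
    obtain ⟨g, -, rfl⟩ := mem_image.1 hz
    exact mem_image_of_mem _ (mem_univ (σ * g))
  have sq_eq : (∏ z ∈ O, (z - k)) ^ 2 = ∏ α ∈ iterRoots L k n, (α - quadMap k (k : L)) := by
    rw [← prod_pow]
    refine prod_nbij (quadMap k) ?_ ?_ ?_ fun z _ => sub_sq_eq_quadMap_sub k z
    · intro z hz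
      obtain ⟨g, -, rfl⟩ := mem_image.1 hz
      exact mem_iterRoots_succ.1 ((map_mem_iterRoots g).2 hy)
    · intro z hz z' hz' h
      obtain ⟨g, -, rfl⟩ := mem_image.1 hz
      obtain ⟨g', -, rfl⟩ := mem_image.1 hz'
      refine ((quadMap_eq_quadMap_iff k).1 h).resolve_right fun h => not_reflected (g'.symm * g) ?_
      rw [AlgEquiv.mul_apply, h, map_two_mul_intCast_sub, g'.symm_apply_apply]
    · intro α hα
      obtain ⟨g, rfl⟩ := transitive α hα
      exact ⟨g y, mem_image_of_mem _ (mem_univ g), (map_quadMap k g y).symm⟩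
  rw [T.prod_sub_quadMap_self hk hn] at sq_eq
  exact not_isSquare_neg_one_pow_mul hk n <| isSquare_of_sq_eq_of_forall_fixed sq_eq
    fun σ => map_prod_sub_intCast_of_mapsTo (mapsTo σ) k

theorem exists_apply_eq (T : IsTreeField k N L) (hk : 1 < |k|) (hn : n ≤ N) {x y : L}
    (hx : x ∈ iterRoots L k n) (hy : y ∈ iterRoots L k n) : ∃ σ : Gal(L/ℚ), σ x = y := by
  induction n generalizing x y with
  | zero =>
    rw [iterRoots_zero, mem_singleton] at hx hy
    exact ⟨1, by rw [hx, hy, map_zero]⟩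
  | succ n ih =>
    obtain ⟨σ, hσ⟩ := ih (by lia) (mem_iterRoots_succ.1 hx) (mem_iterRoots_succ.1 hy)
    rw [map_quadMap, quadMap_eq_quadMap_iff] at hσ
    rcases hσ with hσ | hσ
    · exact ⟨σ, hσ⟩
    · obtain ⟨τ, hτ⟩ := T.exists_apply_eq_two_mul_sub hk (by lia)
        (fun α => ih (by lia) (mem_iterRoots_succ.1 hy)) hy
      exact ⟨τ * σ, by rw [AlgEquiv.mul_apply, hσ, map_two_mul_intCast_sub, hτ, sub_sub_cancel]⟩

theorem isPGroup (T : IsTreeField k N L) : IsPGroup 2 Gal(L/ℚ) := by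
  refine fun σ => ⟨N, T.faithful _ fun n hn x hx => ?_⟩
  have := pow_two_pow_apply_of_mem_iterRoots (σ ^ 2 ^ (N - n)) hx
  rwa [← pow_mul, ← pow_add, Nat.sub_add_cancel hn] at this

end IsTreeField

end TreeField

open NumberField

section GoodPrime

theorem natCast_mem_of_liesOver {A : Type*} [CommRing A] (P : Ideal A) (p : ℕ)
    [hP : P.LiesOver (Ideal.span {(p : ℤ)})] : (p : A) ∈ P := by
  have p_mem_under : (p : ℤ) ∈ P.under ℤ := hP.over ▸ Ideal.mem_span_singleton_self _
  simpa [Ideal.mem_comap] using p_mem_under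

theorem dvd_of_intCast_mem {A : Type*} [CommRing A] {P : Ideal A} (hP : P ≠ ⊤) {p : ℕ}
    (hp : p.Prime) (hpP : (p : A) ∈ P) {w : ℤ} (hw : (w : A) ∈ P) : (p : ℤ) ∣ w := by
  by_contra h
  obtain ⟨u, v, huv⟩ := (Nat.prime_iff_prime_int.1 hp).coprime_iff_not_dvd.2 h
  refine hP ((Ideal.eq_top_iff_one P).2 ?_)
  have one_eq : (u : A) * p + v * w = 1 := by exact_mod_cast congrArg (Int.cast : ℤ → A) huv
  rw [← one_eq]
  exact P.add_mem (P.mul_mem_left _ hpP) (P.mul_mem_left _ hw)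

theorem quadMap_iterate_sub_mem {A : Type*} [CommRing A] {P : Ideal A} (k : ℤ) {x y : A}
    (h : x - y ∈ P) (n : ℕ) : (quadMap k)^[n] x - (quadMap k)^[n] y ∈ P := by
  induction n generalizing x y with
  | zero => exact h
  | succ _ ih =>
    refine ih ?_
    rw [show quadMap k x - quadMap k y = (x + y - 2 * k) * (x - y) by simp only [quadMap]; ring]
    exact P.mul_mem_left _ h

/-- The primes of good reduction for the first `n` levels of the tree of preimages of `0` under
`quadMap k`: modulo `p`, the critical point `k` is not a root of any of the first `n` iterates. -/
structure IsGoodPrime (k : ℤ) (n p : ℕ) : Prop where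
  prime : p.Prime
  ne_two : p ≠ 2
  not_dvd : ¬(p : ℤ) ∣ k
  not_dvd_scaledOrbit : ∀ i, 1 ≤ i → i ≤ n + 1 → ¬(p : ℤ) ∣ scaledOrbit k i

variable {k : ℤ} {n p : ℕ}

theorem IsGoodPrime.mono {m : ℕ} (h : IsGoodPrime k n p) (hm : m ≤ n) : IsGoodPrime k m p :=
  ⟨h.prime, h.ne_two, h.not_dvd, fun i hi hi' => h.not_dvd_scaledOrbit i hi (by lia)⟩

theorem IsGoodPrime.eq_of_sub_mem {A : Type*} [CommRing A] [IsDomain A] (hp : IsGoodPrime k n p)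
    {P : Ideal A} [hP : P.IsPrime] (hpP : (p : A) ∈ P) {r s : A} (hr : (quadMap k)^[n] r = 0)
    (hs : (quadMap k)^[n] s = 0) (h : r - s ∈ P) : r = s := by
  induction n generalizing r s with
  | zero => exact hr.trans hs.symm
  | succ n ih =>
    have images_eq := ih (hp.mono (Nat.le_succ _)) hr hs (quadMap_iterate_sub_mem k h 1)
    refine ((quadMap_eq_quadMap_iff k).1 images_eq).resolve_right ?_
    rintro rfl
    rw [show 2 * (k : A) - s - s = 2 * (k - s) by ring] at h
    rcases hP.mem_or_mem h with h | h
    · have two_mem : ((2 : ℤ) : A) ∈ P := by exact_mod_cast h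
      have p_dvd_two : p ∣ 2 := by exact_mod_cast dvd_of_intCast_mem hP.ne_top hp.prime hpP two_mem
      exact hp.ne_two ((Nat.prime_dvd_prime_iff_eq hp.prime Nat.prime_two).1 p_dvd_two)
    · have critical_mem := quadMap_iterate_sub_mem k h (n + 1)
      rw [hs, sub_zero, quadMap_iterate_self] at critical_mem
      rcases (Nat.prime_iff_prime_int.1 hp.prime).dvd_or_dvd
        (dvd_of_intCast_mem hP.ne_top hp.prime hpP critical_mem) with h | h
      · exact hp.not_dvd h
      · exact hp.not_dvd_scaledOrbit _ (by lia) (by lia) h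

end GoodPrime

section Ramification

variable {L : Type*} [Field L]

theorem isIntegral_of_mem_iterRoots {k : ℤ} {n : ℕ} {x : L} (hx : x ∈ iterRoots L k n) :
    IsIntegral ℤ x := by
  induction n generalizing x with
  | zero =>
    rw [iterRoots_zero, Finset.mem_singleton] at hx
    exact hx ▸ isIntegral_zero
  | succ n ih =>
    have hk : IsIntegral ℤ (k : L) := isIntegral_algebraMap (R := ℤ) (x := k)
    have sq_integral : IsIntegral ℤ ((x - k) ^ 2) := by
      rw [sub_sq_eq_quadMap_sub, quadMap_self]
      exact (ih (mem_iterRoots_succ.1 hx)).sub (hk.sub (hk.pow 2))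
    rw [← sub_add_cancel x (k : L)]
    exact (sq_integral.of_pow two_pos).add hk

theorem exists_ringOfIntegers_eq_of_mem_iterRoots {k : ℤ} {n : ℕ} {x : L}
    (hx : x ∈ iterRoots L k n) : ∃ r : 𝓞 L, (r : L) = x ∧ (quadMap k)^[n] r = 0 := by
  obtain ⟨r, rfl⟩ :=
    (IsIntegralClosure.isIntegral_iff (A := 𝓞 L)).1 (isIntegral_of_mem_iterRoots hx)
  refine ⟨r, rfl, RingOfIntegers.coe_injective ?_⟩
  rw [map_quadMap_iterate, map_zero]
  exact mem_iterRoots.1 hx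

variable [NumberField L]

theorem IsTreeField.inertia_eq_bot {k : ℤ} {N p : ℕ} (T : IsTreeField k N L)
    (hp : IsGoodPrime k N p) {P : Ideal (𝓞 L)} [P.IsPrime] (hpP : (p : 𝓞 L) ∈ P) :
    P.inertia Gal(L/ℚ) = ⊥ := by
  refine eq_bot_iff.2 fun σ hσ => T.faithful σ fun n hn x hx => ?_
  obtain ⟨r, rfl, hr⟩ := exists_ringOfIntegers_eq_of_mem_iterRoots hx
  have hσr : (quadMap k)^[n] (σ • r) = 0 := by
    have := map_quadMap_iterate k (MulSemiringAction.toRingHom Gal(L/ℚ) (𝓞 L) σ) n r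
    rw [hr, map_zero] at this
    exact this.symm
  exact congrArg (algebraMap (𝓞 L) L) ((hp.mono hn).eq_of_sub_mem hpP hσr hr (hσ r))

theorem natCast_notMem_sq_of_inertia_eq_bot [IsGalois ℚ L] {p : ℕ} (hp : p.Prime)
    {P : Ideal (𝓞 L)} [hP : P.IsPrime] (hpP : (p : 𝓞 L) ∈ P) (h : P.inertia Gal(L/ℚ) = ⊥) :
    (p : 𝓞 L) ∉ P ^ 2 := by
  have : Fact p.Prime := ⟨hp⟩
  set I : Ideal ℤ := Ideal.span {(p : ℤ)} with hI
  have hIm : I.IsMaximal := Int.ideal_span_isMaximal_of_prime p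
  have : P.LiesOver I := ⟨hIm.eq_of_le (Ideal.IsPrime.under ℤ P).ne_top <|
    (Ideal.span_singleton_le_iff_mem _).2 (by simpa [Ideal.mem_comap] using hpP)⟩
  have : Finite (ℤ ⧸ I) := Ring.HasFiniteQuotients.finiteQuotient (by simp [hI, hp.ne_zero])
  have map_eq : Ideal.map (algebraMap ℤ (𝓞 L)) I = Ideal.span {(p : 𝓞 L)} := by
    rw [hI, Ideal.map_span]
    simp
  have map_ne_bot : Ideal.map (algebraMap ℤ (𝓞 L)) I ≠ ⊥ := by
    rw [map_eq]
    simpa using hp.ne_zero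
  have multiplicity_eq := Ideal.card_inertia_eq_ramificationIdxIn (G := Gal(L/ℚ)) I P
  rw [h, Ideal.ramificationIdxIn_eq_ramificationIdx I P Gal(L/ℚ), Subgroup.card_bot,
    Ideal.IsDedekindDomain.ramificationIdx_eq_multiplicity I P map_ne_bot] at multiplicity_eq
  have hP_ne_bot : P ≠ ⊥ := by
    rintro rfl
    exact hp.ne_zero (by simpa using hpP)
  have := (FiniteMultiplicity.of_prime_left (Ideal.prime_of_isPrime hP_ne_bot hP)
    map_ne_bot).not_pow_dvd_of_multiplicity_lt (m := 2) (by lia)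
  rwa [Ideal.dvd_iff_le, map_eq, Ideal.span_singleton_le_iff_mem] at this

theorem sq_ne_intCast_of_natCast_notMem_sq {A : Type*} [CommRing A] {P : Ideal A} [hP : P.IsPrime]
    {p : ℕ} (hp : p.Prime) (hpP : (p : A) ∈ P) (hpP2 : (p : A) ∉ P ^ 2) {w : ℤ}
    (hw : (p : ℤ) ∣ w) (hw2 : ¬(p : ℤ) ^ 2 ∣ w) (z : A) : z ^ 2 ≠ w := by
  intro hz
  obtain ⟨v, rfl⟩ := hw
  rw [sq, mul_dvd_mul_iff_left (Int.natCast_ne_zero.2 hp.ne_zero)] at hw2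
  obtain ⟨a, b, hab⟩ := (Nat.prime_iff_prime_int.1 hp).coprime_iff_not_dvd.2 hw2
  have p_eq : (p : A) = a * p ^ 2 + b * z ^ 2 := by
    have := congrArg (Int.cast : ℤ → A) hab
    push_cast at this hz
    linear_combination -(p : A) * this - b * hz
  have hzP : z ∈ P := hP.mem_of_pow_mem 2 <| by
    rw [hz, Int.cast_mul, Int.cast_natCast]
    exact P.mul_mem_right _ hpP
  rw [p_eq] at hpP2
  exact hpP2 (Ideal.add_mem _ (Ideal.mul_mem_left _ _ (Ideal.pow_mem_pow hpP 2))
    (Ideal.mul_mem_left _ _ (Ideal.pow_mem_pow hzP 2)))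

theorem IsTreeField.sq_ne_intCast {k : ℤ} {N p : ℕ} (T : IsTreeField k N L)
    (hp : IsGoodPrime k N p) {w : ℤ} (hw : OddlyDivides p w) (y : L) : y ^ 2 ≠ w := by
  intro hy
  obtain ⟨a, b, rfl, hb, hpa, hpa2⟩ := hw
  have := T.isGalois
  have : Fact p.Prime := ⟨hp.prime⟩
  obtain ⟨P, hP, hPI⟩ :=
    Ideal.exists_maximal_ideal_liesOver_of_isIntegral (S := 𝓞 L) (Ideal.span {(p : ℤ)})
  have hpP := natCast_mem_of_liesOver P p
  have hya : (y / b) ^ 2 = (a : L) := by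
    rw [div_pow, hy, div_eq_iff (by exact_mod_cast pow_ne_zero 2 hb)]
    push_cast
    ring
  obtain ⟨z, hz⟩ := (IsIntegralClosure.isIntegral_iff (A := 𝓞 L)).1 <|
    IsIntegral.of_pow two_pos <| show IsIntegral ℤ ((y / b) ^ 2) from
      hya ▸ isIntegral_algebraMap (R := ℤ) (x := a)
  refine sq_ne_intCast_of_natCast_notMem_sq hp.prime hpP
    (natCast_notMem_sq_of_inertia_eq_bot hp.prime hpP (T.inertia_eq_bot hp hpP)) hpa hpa2
    z (RingOfIntegers.coe_injective ?_)
  rw [map_pow, map_intCast]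
  exact hz ▸ hya

end Ramification

section LevelFixingSubgroup

variable {L : Type*} [Field L] [NumberField L] {k : ℤ} {N m n : ℕ}

variable (L) in
/-- The subgroup of automorphisms fixing every root at the levels up to `m`. -/
noncomputable def levelFixingSubgroup (k : ℤ) (m : ℕ) : Subgroup Gal(L/ℚ) :=
  fixingSubgroup Gal(L/ℚ) {x : L | ∃ j ≤ m, x ∈ iterRoots L k j}

theorem mem_levelFixingSubgroup {σ : Gal(L/ℚ)} :
    σ ∈ levelFixingSubgroup L k m ↔ ∀ j ≤ m, ∀ x ∈ iterRoots L k j, σ x = x := by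
  rw [levelFixingSubgroup, mem_fixingSubgroup_iff]
  exact ⟨fun h j hj x hx => h x ⟨j, hj, hx⟩, fun h x ⟨j, hj, hx⟩ => h j hj x hx⟩

instance levelFixingSubgroup_normal : (levelFixingSubgroup L k m).Normal where
  conj_mem h hh g := mem_levelFixingSubgroup.2 fun j hj x hx => by
    have := mem_levelFixingSubgroup.1 hh j hj (g⁻¹ x) ((map_mem_iterRoots _).2 hx)
    rw [AlgEquiv.mul_apply, AlgEquiv.mul_apply, this]
    exact g.apply_symm_apply x

theorem apply_eq_or_eq_two_mul_sub {h : Gal(L/ℚ)} (hh : h ∈ levelFixingSubgroup L k n) {y : L}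
    (hy : y ∈ iterRoots L k (n + 1)) : h y = y ∨ h y = 2 * k - y := by
  have := mem_levelFixingSubgroup.1 hh n le_rfl _ (mem_iterRoots_succ.1 hy)
  rwa [map_quadMap, quadMap_eq_quadMap_iff] at this

theorem IsTreeField.fixedField (T : IsTreeField k N L) (hm : m ≤ N) :
    IsTreeField k m (IntermediateField.fixedField (levelFixingSubgroup L k m)) := by
  have := T.isGalois
  set F := IntermediateField.fixedField (levelFixingSubgroup L k m)
  have mem_F {j : ℕ} (hj : j ≤ m) {x : L} (hx : x ∈ iterRoots L k j) : x ∈ F :=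
    (IntermediateField.mem_fixedField_iff _ _).2 fun _ hf =>
      mem_levelFixingSubgroup.1 hf j hj x hx
  have coe_mem_iff {j : ℕ} {x : F} : (x : L) ∈ iterRoots L k j ↔ x ∈ iterRoots F k j := by
    rw [mem_iterRoots, mem_iterRoots, ← F.algebraMap_apply, ← map_quadMap_iterate,
      map_eq_zero_iff _ (algebraMap F L).injective]
  have hF : IsGalois ℚ F := IsGalois.of_fixedField_normal_subgroup _
  refine ⟨hF, fun n hn α hα => ?_, fun σ hσ => ?_⟩
  · obtain ⟨y, hy, hyα⟩ := T.exists_mem_iterRoots_succ (hn.trans_le hm) (coe_mem_iff.2 hα)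
    refine ⟨⟨y, mem_F hn hy⟩, (algebraMap F L).injective ?_⟩
    rw [map_quadMap]
    exact hyα
  · have lift_mem : σ.liftNormal L ∈ levelFixingSubgroup L k m :=
      mem_levelFixingSubgroup.2 fun j hj x hx =>
        (σ.liftNormal_commutes L ⟨x, mem_F hj hx⟩).trans
          (congrArg (algebraMap F L) (hσ j hj ⟨x, mem_F hj hx⟩ (coe_mem_iff.1 hx)))
    ext x
    exact (σ.liftNormal_commutes L x).symm.trans
      ((IntermediateField.mem_fixedField_iff _ _).1 x.2 _ lift_mem)

end LevelFixingSubgroup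

section Duality

theorem eq_top_of_forall_sum_mul_eq_zero {ι K : Type*} [Fintype ι] [Field K]
    {W : Submodule K (ι → K)}
    (hW : ∀ c : ι → K, (∀ v ∈ W, ∑ i, c i * v i = 0) → c = 0) : W = ⊤ := by
  classical
  by_contra hne
  obtain ⟨f, hf, hfW⟩ := Submodule.exists_le_ker_of_lt_top W (lt_top_iff_ne_top.2 hne)
  refine hf (LinearMap.pi_ext' fun i => LinearMap.ext_ring ?_)
  refine congrFun (hW (fun i => f (Pi.single i 1)) fun v hv => ?_) i
  rw [← LinearMap.mem_ker.1 (hfW hv), LinearMap.pi_apply_eq_sum_univ]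
  refine Finset.sum_congr rfl fun j _ => (mul_comm _ _).trans (congrArg (v j * f ·) ?_)
  ext l
  simp only [Pi.single_apply, eq_comm]

/- A `p`-group acting linearly on a nonzero `𝔽_p`-space fixes a nonzero vector, and here a fixed
vector has constant coordinates. -/
theorem one_mem_of_isPGroup {ι G : Type*} [Finite ι] [Group G] [MulAction G ι]
    [MulAction.IsPretransitive G ι] {p : ℕ} [Fact p.Prime] (hG : IsPGroup p G)
    {A : Submodule (ZMod p) (ι → ZMod p)}
    (hA : ∀ g : G, ∀ c ∈ A, (fun i => c (g • i)) ∈ A) (hne : A ≠ ⊥) : 1 ∈ A := by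
  let : MulAction G (ι → ZMod p) := arrowAction
  let S : SubMulAction G (ι → ZMod p) := ⟨A, fun g c hc => hA g⁻¹ c hc⟩
  have p_dvd : p ∣ Nat.card S := by
    have : Nontrivial A := Submodule.nontrivial_iff_ne_bot.2 hne
    change p ∣ Nat.card A
    rw [Module.natCard_eq_pow_finrank (K := ZMod p), Nat.card_zmod]
    exact dvd_pow_self p Module.finrank_pos.ne'
  obtain ⟨⟨c, hc⟩, c_fixed, c_ne⟩ := hG.exists_fixed_point_of_prime_dvd_card_of_fixed_point S p_dvd
    (a := ⟨0, A.zero_mem⟩) fun g => rfl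
  have c_apply (g : G) (i : ι) : c (g • i) = c i := by
    have := congrFun (congrArg Subtype.val (c_fixed g⁻¹)) i
    rwa [← inv_inv g]
  obtain ⟨i, hi⟩ : ∃ i, c i ≠ 0 := Function.ne_iff.1 fun h => c_ne (Subtype.ext h.symm)
  have one_eq : (1 : ι → ZMod p) = (c i)⁻¹ • c := by
    ext j
    obtain ⟨g, rfl⟩ := MulAction.exists_smul_eq G i j
    rw [Pi.smul_apply, c_apply, smul_eq_mul, inv_mul_cancel₀ hi, Pi.one_apply]
  exact one_eq ▸ A.smul_mem _ hc

end Duality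

section SwapIndicator

variable {L : Type*} [Field L] [NumberField L] {k : ℤ} {N n : ℕ}

instance iterRootsMulAction (k : ℤ) (n : ℕ) : MulAction Gal(L/ℚ) (iterRoots L k n) where
  smul g x := ⟨g x, (map_mem_iterRoots g).2 x.2⟩
  one_smul _ := rfl
  mul_smul _ _ _ := rfl

theorem coe_smul_iterRoots (g : Gal(L/ℚ)) (x : iterRoots L k n) :
    ((g • x : iterRoots L k n) : L) = g x := rfl

theorem IsTreeField.isPretransitive (T : IsTreeField k N L) (hk : 1 < |k|) (hn : n ≤ N) :
    MulAction.IsPretransitive Gal(L/ℚ) (iterRoots L k n) where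
  exists_smul_eq x y := by
    obtain ⟨σ, hσ⟩ := T.exists_apply_eq hk hn x.2 y.2
    exact ⟨σ, Subtype.ext hσ⟩

open scoped Classical in
/-- For `h` fixing the root `i`, the element of `𝔽₂` recording whether `h` exchanges the two
preimages of `i` under `quadMap k`. -/
noncomputable def swapIndicator (k : ℤ) (h : Gal(L/ℚ)) (i : L) : ZMod 2 :=
  if ∀ y, quadMap k y = i → h y = y then 0 else 1

variable {h g : Gal(L/ℚ)} {y i : L}

theorem swapIndicator_quadMap_eq_zero_iff : swapIndicator k h (quadMap k y) = 0 ↔ h y = y := by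
  classical
  rw [swapIndicator, ite_eq_left_iff, imp_iff_not_or, not_not, or_iff_left one_ne_zero]
  refine ⟨fun H => H y rfl, fun hy z hz => ?_⟩
  rcases (quadMap_eq_quadMap_iff k).1 hz with rfl | rfl
  · exact hy
  · rw [map_two_mul_intCast_sub, hy]

theorem swapIndicator_one : swapIndicator k (1 : Gal(L/ℚ)) i = 0 :=
  if_pos fun _ _ => rfl

theorem swapIndicator_apply : swapIndicator k h (g i) = swapIndicator k (g⁻¹ * h * g) i := by
  classical
  refine if_congr (g.surjective.forall.trans (forall_congr' fun z => ?_)) rfl rfl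
  rw [← map_quadMap, g.injective.eq_iff, AlgEquiv.mul_apply, AlgEquiv.mul_apply]
  exact imp_congr_right fun _ => g.symm_apply_eq.symm

theorem apply_sub_intCast_of_swapIndicator (hh : h ∈ levelFixingSubgroup L k n)
    (hy : y ∈ iterRoots L k (n + 1)) :
    h y - k = (-1) ^ (swapIndicator k h (quadMap k y)).val * (y - k) := by
  have eq_one_of_ne_zero : ∀ a : ZMod 2, a ≠ 0 → a = 1 := by decide
  by_cases fixed : h y = y
  · rw [swapIndicator_quadMap_eq_zero_iff.2 fixed, fixed, ZMod.val_zero, pow_zero, one_mul]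
  · rw [eq_one_of_ne_zero _ fun h0 => fixed (swapIndicator_quadMap_eq_zero_iff.1 h0),
      (apply_eq_or_eq_two_mul_sub hh hy).resolve_left fixed, ZMod.val_one]
    ring

theorem swapIndicator_mul (hk : 1 < |k|) (hh : h ∈ levelFixingSubgroup L k n)
    (hg : g ∈ levelFixingSubgroup L k n) (hy : y ∈ iterRoots L k (n + 1)) :
    swapIndicator k (h * g) (quadMap k y) =
      swapIndicator k h (quadMap k y) + swapIndicator k g (quadMap k y) := by
  have eq_add_of_zero_iff : ∀ a b c : ZMod 2, (a = 0 ↔ (b = 0 ↔ c = 0)) → a = b + c := by decide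
  refine eq_add_of_zero_iff _ _ _ ?_
  simp only [swapIndicator_quadMap_eq_zero_iff, AlgEquiv.mul_apply]
  have hne := ne_two_mul_sub_of_mem_iterRoots hk hy
  rcases apply_eq_or_eq_two_mul_sub hg hy with hgy | hgy <;>
    rcases apply_eq_or_eq_two_mul_sub hh hy with hhy | hhy <;>
    simp [hgy, hhy, map_two_mul_intCast_sub, hne.symm]

variable (L) in
/-- The linear forms over `𝔽₂` on level `n` that vanish on the swap indicators of all automorphisms
fixing that level. -/
noncomputable def swapAnnihilator (k : ℤ) (n : ℕ) : Submodule (ZMod 2) (iterRoots L k n → ZMod 2) :=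
  ⨅ h ∈ levelFixingSubgroup L k n,
    (∑ i : iterRoots L k n, swapIndicator k h i • LinearMap.proj i).ker

theorem mem_swapAnnihilator {c : iterRoots L k n → ZMod 2} :
    c ∈ swapAnnihilator L k n ↔
      ∀ h ∈ levelFixingSubgroup L k n, ∑ i, c i * swapIndicator k h i = 0 := by
  simp [swapAnnihilator, mul_comm]

theorem comp_smul_mem_swapAnnihilator {c : iterRoots L k n → ZMod 2}
    (hc : c ∈ swapAnnihilator L k n) (g : Gal(L/ℚ)) :
    (fun i => c (g • i)) ∈ swapAnnihilator L k n := by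
  rw [mem_swapAnnihilator] at hc ⊢
  intro h hh
  rw [← hc (g * h * g⁻¹) (levelFixingSubgroup_normal.conj_mem h hh g),
    ← Equiv.sum_comp (MulAction.toPerm g) fun i => c i * swapIndicator k (g * h * g⁻¹) i]
  refine Finset.sum_congr rfl fun i _ => ?_
  rw [MulAction.toPerm_apply, coe_smul_iterRoots, swapIndicator_apply, mul_assoc g,
    inv_mul_cancel_left, inv_mul_cancel_right]

theorem map_prod_sub_intCast_of_sum_swapIndicator (hh : h ∈ levelFixingSubgroup L k n)
    {s : iterRoots L k n → L} (hs : ∀ i, s i ∈ iterRoots L k (n + 1))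
    (hsi : ∀ i, quadMap k (s i) = i)
    (hsum : ∑ i : iterRoots L k n, swapIndicator k h i = 0) :
    h (∏ i, (s i - k)) = ∏ i, (s i - k) := by
  have even_sum : Even (∑ i : iterRoots L k n, (swapIndicator k h i).val) := by
    rw [even_iff_two_dvd, ← ZMod.natCast_eq_zero_iff, Nat.cast_sum]
    simpa using hsum
  calc h (∏ i, (s i - k))
      = ∏ i : iterRoots L k n, ((-1) ^ (swapIndicator k h i).val * (s i - k)) := by
        rw [map_prod]
        refine Finset.prod_congr rfl fun i _ => ?_
        rw [map_sub, map_intCast, apply_sub_intCast_of_swapIndicator hh (hs i), hsi]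
    _ = _ := by
        rw [Finset.prod_mul_distrib, Finset.prod_pow_eq_pow_sum, even_sum.neg_one_pow, one_mul]

/- Otherwise a product of half of the differences `s - k` over level `n + 1` is fixed by the
automorphisms fixing level `n`. Its square is `k * scaledOrbit k (n + 2)` up to sign, which has no
square root in a field unramified at an odd primitive divisor. -/
theorem IsTreeField.one_notMem_swapAnnihilator (T : IsTreeField k N L) (hk : 1 < |k|) (hn : n < N)
    (hdiv : HasOddPrimitiveDivisor k (n + 2)) : 1 ∉ swapAnnihilator L k n := by
  intro one_mem
  rw [mem_swapAnnihilator] at one_mem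
  simp only [Pi.one_apply, one_mul] at one_mem
  choose s hs hsi using fun i : iterRoots L k n => T.exists_mem_iterRoots_succ hn i.2
  have sq_eq : (∏ i, (s i - k)) ^ 2 =
      (((-1) ^ 2 ^ n * (k * scaledOrbit k (n + 2)) : ℤ) : L) := by
    rw [← T.prod_sub_quadMap_self hk hn.le, ← Finset.prod_pow,
      ← (iterRoots L k n).prod_coe_sort fun α => α - quadMap k (k : L)]
    exact Finset.prod_congr rfl fun i _ => by rw [sub_sq_eq_quadMap_sub, hsi]
  set F := IntermediateField.fixedField (levelFixingSubgroup L k n)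
  have mem_F : ∏ i, (s i - k) ∈ F := (IntermediateField.mem_fixedField_iff _ _).2 fun h hh =>
    map_prod_sub_intCast_of_sum_swapIndicator hh hs hsi (one_mem h hh)
  obtain ⟨p, hp, hp2, hprim, hodd⟩ := hdiv
  have hpk : ¬(p : ℤ) ∣ k := not_dvd_of_dvd_scaledOrbit hp (by lia) hodd.dvd
  have coprime : IsCoprime (p : ℤ) k := (Nat.prime_iff_prime_int.1 hp).coprime_iff_not_dvd.2 hpk
  have good : IsGoodPrime k n p := ⟨hp, hp2, hpk, fun i hi hi' => hprim i hi (by lia)⟩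
  refine (T.fixedField hn.le).sq_ne_intCast good
    ((hodd.mul_left coprime).mul_left (u := (-1) ^ 2 ^ n) ?_) ⟨_, mem_F⟩
    ((algebraMap F L).injective ?_)
  · exact isCoprime_one_right.neg_right.pow_right
  · rw [map_pow, map_intCast]
    exact sq_eq

theorem IsTreeField.swapAnnihilator_eq_bot (T : IsTreeField k N L) (hk : 1 < |k|) (hn : n < N)
    (hdiv : HasOddPrimitiveDivisor k (n + 2)) : swapAnnihilator L k n = ⊥ := by
  have := T.isPretransitive hk hn.le
  by_contra hne
  exact T.one_notMem_swapAnnihilator hk hn hdiv <| one_mem_of_isPGroup T.isPGroup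
    (fun g _ hc => comp_smul_mem_swapAnnihilator hc g) hne

theorem IsTreeField.exists_swapIndicator_eq (T : IsTreeField k N L) (hk : 1 < |k|) (hn : n < N)
    (hdiv : HasOddPrimitiveDivisor k (n + 2)) (v : iterRoots L k n → ZMod 2) :
    ∃ h ∈ levelFixingSubgroup L k n, ∀ i : iterRoots L k n, swapIndicator k h i = v i := by
  let W : Submodule (ZMod 2) (iterRoots L k n → ZMod 2) :=
    { carrier := {v | ∃ h ∈ levelFixingSubgroup L k n, ∀ i : iterRoots L k n,
        swapIndicator k h i = v i}
      add_mem' := by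
        rintro a b ⟨h, hh, ha⟩ ⟨g, hg, hb⟩
        refine ⟨h * g, mul_mem hh hg, fun i => ?_⟩
        obtain ⟨y, hy, hyi⟩ := T.exists_mem_iterRoots_succ hn i.2
        rw [← hyi, swapIndicator_mul hk hh hg hy, hyi, ha, hb, Pi.add_apply]
      zero_mem' := ⟨1, one_mem _, fun _ => swapIndicator_one⟩
      smul_mem' := by
        rintro c x ⟨h, hh, hx⟩
        fin_cases c
        · exact ⟨1, one_mem _, fun i => swapIndicator_one.trans (zero_mul (x i)).symm⟩
        · exact ⟨h, hh, fun i => (hx i).trans (one_mul (x i)).symm⟩ }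
  have W_eq_top : W = ⊤ := eq_top_of_forall_sum_mul_eq_zero fun c hc => by
    rw [← Submodule.mem_bot (ZMod 2), ← T.swapAnnihilator_eq_bot hk hn hdiv, mem_swapAnnihilator]
    exact fun h hh => hc (fun i => swapIndicator k h i) ⟨h, hh, fun _ => rfl⟩
  exact (W_eq_top ▸ Submodule.mem_top : v ∈ W)

end SwapIndicator

section FixedRoots

open Finset

variable {L : Type*} [Field L] [NumberField L] {k : ℤ} {N n : ℕ} {g h σ : Gal(L/ℚ)} {x : L}

open scoped Classical in
/-- The roots at level `n` fixed by `σ`. -/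
noncomputable def fixedRoots (k : ℤ) (n : ℕ) (σ : Gal(L/ℚ)) : Finset L :=
  {x ∈ iterRoots L k n | σ x = x}

theorem mem_fixedRoots : x ∈ fixedRoots k n σ ↔ x ∈ iterRoots L k n ∧ σ x = x := by
  simp only [fixedRoots, mem_filter]

theorem fixedRoots_mul (hh : h ∈ levelFixingSubgroup L k n) :
    fixedRoots k n (g * h) = fixedRoots k n g := by
  ext x
  rw [mem_fixedRoots, mem_fixedRoots]
  refine and_congr_right fun hx => ?_
  rw [AlgEquiv.mul_apply, mem_levelFixingSubgroup.1 hh n le_rfl x hx]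

open scoped Classical in
variable (L) in
/-- The automorphisms fixing at least one root at level `n`. -/
noncomputable def autsFixingRoot (k : ℤ) (n : ℕ) : Finset Gal(L/ℚ) :=
  {σ | (fixedRoots k n σ).Nonempty}

theorem mem_autsFixingRoot_iff_nonempty :
    σ ∈ autsFixingRoot L k n ↔ (fixedRoots k n σ).Nonempty := by
  rw [autsFixingRoot, mem_filter_univ]

theorem mem_autsFixingRoot : σ ∈ autsFixingRoot L k n ↔ ∃ x ∈ iterRoots L k n, σ x = x := by
  simp only [mem_autsFixingRoot_iff_nonempty, Finset.Nonempty, mem_fixedRoots]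

theorem autsFixingRoot_succ_subset : autsFixingRoot L k (n + 1) ⊆ autsFixingRoot L k n := by
  intro σ hσ
  obtain ⟨x, hx, hσx⟩ := mem_autsFixingRoot.1 hσ
  exact mem_autsFixingRoot.2 ⟨quadMap k x, mem_iterRoots_succ.1 hx, by rw [map_quadMap, hσx]⟩

theorem IsTreeField.sum_card_fixedRoots (T : IsTreeField k N L) (hk : 1 < |k|) (hn : n ≤ N) :
    ∑ σ : Gal(L/ℚ), #(fixedRoots k n σ) = Fintype.card Gal(L/ℚ) := by
  classical
  have := T.isPretransitive hk hn
  have : Nonempty (iterRoots L k n) := by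
    rw [nonempty_coe_sort, ← card_pos, T.card_iterRoots hk hn]
    positivity
  have card_orbits : Fintype.card (MulAction.orbitRel.Quotient Gal(L/ℚ) (iterRoots L k n)) = 1 := by
    have := (MulAction.pretransitive_iff_subsingleton_quotient Gal(L/ℚ) (iterRoots L k n)).1 ‹_›
    exact le_antisymm (Fintype.card_le_one_iff_subsingleton.2 this)
      (Fintype.card_pos_iff.2 ⟨Quotient.mk'' (Classical.arbitrary _)⟩)
  calc ∑ σ : Gal(L/ℚ), #(fixedRoots k n σ)
      = ∑ σ : Gal(L/ℚ), Fintype.card (MulAction.fixedBy (iterRoots L k n) σ) := by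
        refine sum_congr rfl fun σ _ => ?_
        have : fixedRoots k n σ =
            (MulAction.fixedBy (iterRoots L k n) σ).toFinset.map
              (Function.Embedding.subtype _) := by
          ext x
          simp [mem_fixedRoots, Subtype.ext_iff, coe_smul_iterRoots, and_comm]
        rw [this, card_map, Set.toFinset_card]
    _ = Fintype.card Gal(L/ℚ) := by
        rw [MulAction.sum_card_fixedBy_eq_card_orbits_mul_card_group, card_orbits, one_mul]

theorem IsTreeField.exists_swap_iff_quadMap_mem (T : IsTreeField k N L) (hk : 1 < |k|)
    (hn : n < N) (hdiv : HasOddPrimitiveDivisor k (n + 2)) (A : Finset L) :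
    ∃ h ∈ levelFixingSubgroup L k n, ∀ y ∈ iterRoots L k (n + 1), (h y = y ↔ quadMap k y ∉ A) := by
  classical
  obtain ⟨h, hh, hA⟩ := T.exists_swapIndicator_eq hk hn hdiv fun i => if ↑i ∈ A then 1 else 0
  refine ⟨h, hh, fun y hy => ?_⟩
  rw [← swapIndicator_quadMap_eq_zero_iff (k := k), hA ⟨_, mem_iterRoots_succ.1 hy⟩,
    ite_eq_right_iff]
  simp

/- Given `g`, twist it at exactly those fixed roots of level `n` whose two preimages are fixed. -/
theorem IsTreeField.exists_mul_notMem_autsFixingRoot (T : IsTreeField k N L) (hk : 1 < |k|)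
    (hn : n < N) (hdiv : HasOddPrimitiveDivisor k (n + 2)) :
    ∃ t : Finset L → Gal(L/ℚ), (∀ A, t A ∈ levelFixingSubgroup L k n) ∧
      ∀ g, ∃ A ⊆ fixedRoots k n g, g * t A ∉ autsFixingRoot L k (n + 1) := by
  classical
  choose t ht htA using T.exists_swap_iff_quadMap_mem hk hn hdiv
  refine ⟨t, ht, fun g =>
    ⟨{i ∈ fixedRoots k n g | swapIndicator k g i = 0}, filter_subset _ _, fun hmem => ?_⟩⟩
  set A : Finset L := {i ∈ fixedRoots k n g | swapIndicator k g i = 0}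
  obtain ⟨y, hy, gty⟩ := mem_autsFixingRoot.1 hmem
  have quadMap_mem : quadMap k y ∈ fixedRoots k n g := by
    rw [← fixedRoots_mul (ht A), mem_fixedRoots, map_quadMap, gty]
    exact ⟨mem_iterRoots_succ.1 hy, rfl⟩
  have quadMap_mem_iff : quadMap k y ∈ A ↔ g y = y := by
    rw [mem_filter, and_iff_right quadMap_mem, swapIndicator_quadMap_eq_zero_iff]
  have swap_iff := (htA A y hy).trans (not_congr quadMap_mem_iff)
  rw [AlgEquiv.mul_apply] at gty
  by_cases fixed : t A y = y
  · exact swap_iff.1 fixed (by rwa [fixed] at gty)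
  · rw [(apply_eq_or_eq_two_mul_sub (ht A) hy).resolve_left fixed, map_two_mul_intCast_sub,
      not_not.1 (mt swap_iff.2 fixed)] at gty
    exact ne_two_mul_sub_of_mem_iterRoots hk hy gty.symm

open scoped Classical in
theorem IsTreeField.card_filter_card_fixedRoots_le (T : IsTreeField k N L) (hk : 1 < |k|)
    (hn : n < N) (hdiv : HasOddPrimitiveDivisor k (n + 2)) (B : ℕ) :
    #{σ ∈ autsFixingRoot L k n | #(fixedRoots k n σ) ≤ B} ≤
      2 ^ B * #(autsFixingRoot L k n \ autsFixingRoot L k (n + 1)) := by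
  obtain ⟨t, ht, hA⟩ := T.exists_mul_notMem_autsFixingRoot hk hn hdiv
  choose A hAsub hAnot using hA
  have fixedRoots_twist (g : Gal(L/ℚ)) : fixedRoots k n (g * t (A g)) = fixedRoots k n g :=
    fixedRoots_mul (ht _)
  have maps_to : ∀ g ∈ ({σ ∈ autsFixingRoot L k n | #(fixedRoots k n σ) ≤ B} : Finset _),
      g * t (A g) ∈ ({σ ∈ autsFixingRoot L k n \ autsFixingRoot L k (n + 1) |
        #(fixedRoots k n σ) ≤ B} : Finset _) := by
    intro g hg
    rw [mem_filter, mem_autsFixingRoot_iff_nonempty] at hg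
    rw [mem_filter, Finset.mem_sdiff, mem_autsFixingRoot_iff_nonempty, fixedRoots_twist]
    exact ⟨⟨hg.1, hAnot g⟩, hg.2⟩
  refine (card_le_mul_card_image_of_maps_to maps_to (2 ^ B) fun r hr => ?_).trans
    (Nat.mul_le_mul_left _ (card_le_card (filter_subset _ _)))
  have fiber_subset : ({g ∈ ({σ ∈ autsFixingRoot L k n | #(fixedRoots k n σ) ≤ B} : Finset _) |
      g * t (A g) = r} : Finset _) ⊆ (fixedRoots k n r).powerset.image fun A => r * (t A)⁻¹ := by
    rintro g hg
    obtain rfl := (mem_filter.1 hg).2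
    exact mem_image.2 ⟨A g, mem_powerset.2 (fixedRoots_twist g ▸ hAsub g), mul_inv_cancel_right _ _⟩
  calc _ ≤ #((fixedRoots k n r).powerset.image fun A => r * (t A)⁻¹) := card_le_card fiber_subset
    _ ≤ #(fixedRoots k n r).powerset := card_image_le
    _ = 2 ^ #(fixedRoots k n r) := card_powerset _
    _ ≤ 2 ^ B := Nat.pow_le_pow_right two_pos (mem_filter.1 hr).2

theorem IsTreeField.card_filter_lt_card_fixedRoots_le (T : IsTreeField k N L) (hk : 1 < |k|)
    (hn : n ≤ N) {B : ℕ} (hB : 0 < B) :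
    (#{σ ∈ autsFixingRoot L k n | ¬#(fixedRoots k n σ) ≤ B} : ℝ) ≤ Fintype.card Gal(L/ℚ) / B := by
  rw [le_div_iff₀ (by exact_mod_cast hB), ← T.sum_card_fixedRoots hk hn]
  norm_cast
  rw [← smul_eq_mul]
  exact (card_nsmul_le_sum _ (fun σ => #(fixedRoots k n σ)) _ fun σ hσ =>
    (not_le.1 (mem_filter.1 hσ).2).le).trans (sum_le_sum_of_subset (subset_univ _))

theorem IsTreeField.dens_autsFixingRoot_sub_le (T : IsTreeField k N L) (hk : 1 < |k|)
    (hn : n < N) (hdiv : HasOddPrimitiveDivisor k (n + 2)) {B : ℕ} (hB : 0 < B) :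
    ((autsFixingRoot L k n).dens : ℝ) - 1 / B ≤
      2 ^ B * ((autsFixingRoot L k n).dens - (autsFixingRoot L k (n + 1)).dens) := by
  classical
  have few : (#{σ ∈ autsFixingRoot L k n | #(fixedRoots k n σ) ≤ B} : ℝ) ≤
      2 ^ B * (#(autsFixingRoot L k n) - #(autsFixingRoot L k (n + 1))) := by
    rw [← cast_card_sdiff autsFixingRoot_succ_subset]
    exact_mod_cast T.card_filter_card_fixedRoots_le hk hn hdiv B
  have many := T.card_filter_lt_card_fixedRoots_le hk hn.le hB
  have split : (#(autsFixingRoot L k n) : ℝ) =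
      #{σ ∈ autsFixingRoot L k n | #(fixedRoots k n σ) ≤ B} +
        #{σ ∈ autsFixingRoot L k n | ¬#(fixedRoots k n σ) ≤ B} := by
    exact_mod_cast (card_filter_add_card_filter_not _).symm
  calc ((autsFixingRoot L k n).dens : ℝ) - 1 / B
      = (#(autsFixingRoot L k n) - Fintype.card Gal(L/ℚ) / B) / Fintype.card Gal(L/ℚ) := by
        rw [nnratCast_dens]
        field_simp
    _ ≤ 2 ^ B * (#(autsFixingRoot L k n) - #(autsFixingRoot L k (n + 1))) /
        Fintype.card Gal(L/ℚ) := by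
        gcongr
        linarith
    _ = _ := by
        rw [nnratCast_dens, nnratCast_dens, mul_div_assoc, sub_div]

open scoped Classical in
theorem IsTreeField.dens_autsFixingRoot_le (T : IsTreeField k N L) (hk : 1 < |k|) {B : ℕ}
    (hB : 0 < B) (hn : n ≤ N) :
    ((autsFixingRoot L k n).dens : ℝ) ≤
      1 / B + (1 - (1 / 2) ^ B) ^ Nat.count (fun j => HasOddPrimitiveDivisor k (j + 2)) n := by
  have B_inv_pos : (0 : ℝ) < 1 / B := by positivity
  have half_pow_le_one : (1 / 2 : ℝ) ^ B ≤ 1 := pow_le_one₀ (by norm_num) (by norm_num)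
  induction n with
  | zero =>
    have : ((autsFixingRoot L k 0).dens : ℝ) ≤ 1 := by exact_mod_cast dens_le_one
    rw [Nat.count_zero, pow_zero]
    linarith
  | succ n ih =>
    have ih := ih (by lia)
    rw [Nat.count_succ]
    split_ifs with hdiv
    · have drop : (1 / 2 : ℝ) ^ B * ((autsFixingRoot L k n).dens - 1 / B) ≤
          (autsFixingRoot L k n).dens - (autsFixingRoot L k (n + 1)).dens := by
        rw [one_div, inv_pow, inv_mul_le_iff₀ (by positivity)]
        exact T.dens_autsFixingRoot_sub_le hk (by lia) hdiv hB
      rw [pow_succ']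
      linarith [mul_le_mul_of_nonneg_left ih (sub_nonneg.2 half_pow_le_one)]
    · exact le_trans (mod_cast dens_le_dens autsFixingRoot_succ_subset) ih

end FixedRoots

theorem exists_forall_dens_autsFixingRoot_le {k : ℤ} (hk : 1 < |k|) {ε : ℝ} (hε : 0 < ε) :
    ∃ N : ℕ, ∀ (L : Type) [Field L] [NumberField L], IsTreeField k N L →
      ((autsFixingRoot L k N).dens : ℝ) ≤ ε := by
  classical
  obtain ⟨B, hB⟩ := exists_nat_one_div_lt (half_pos hε)
  obtain ⟨m, hm⟩ := exists_pow_lt_of_lt_one (half_pos hε) (y := 1 - (1 / 2 : ℝ) ^ (B + 1))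
    (sub_lt_self 1 (by positivity))
  have infinite : {j | HasOddPrimitiveDivisor k (j + 2)}.Infinite :=
    Nat.frequently_atTop_iff_infinite.1 <| by
      refine frequently_atTop.2 fun a => ?_
      obtain ⟨n, hn, hdiv⟩ := frequently_atTop.1 (frequently_hasOddPrimitiveDivisor hk) (a + 2)
      exact ⟨n - 2, by lia, by rwa [Nat.sub_add_cancel (by lia)]⟩
  refine ⟨Nat.nth (fun j => HasOddPrimitiveDivisor k (j + 2)) m, fun L _ _ T => ?_⟩
  have bound := T.dens_autsFixingRoot_le hk B.succ_pos le_rfl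
  rw [Nat.count_nth_of_infinite infinite, Nat.cast_succ, Nat.succ_eq_add_one] at bound
  linarith

section Existence

open NumberField Polynomial

theorem quadMap_iterate_X_ne_zero {F : Type*} [Field F] [Infinite F] (k : ℤ) (n : ℕ) :
    (quadMap k)^[n] (X : F[X]) ≠ 0 := fun h => by
  refine Set.infinite_univ ((finite_quadMap_iterate_eq_zero (L := F) k n).subset fun x _ => ?_)
  rw [Set.mem_ofPred_eq, ← aeval_X (R := F) x, ← map_quadMap_iterate, h, map_zero]

theorem quadMap_X_sub_C_dvd {A : Type*} [CommRing A] {k : ℤ} {n : ℕ} {α : A}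
    (hα : (quadMap k)^[n] α = 0) : quadMap k (X : A[X]) - C α ∣ (quadMap k)^[n + 1] X := by
  have := quadMap_iterate_sub_mem k (Ideal.mem_span_singleton_self (quadMap k (X : A[X]) - C α)) n
  rwa [← map_quadMap_iterate, hα, C_0, sub_zero, ← Function.iterate_succ_apply,
    Ideal.mem_span_singleton] at this

theorem natDegree_quadMap_X_sub_C {A : Type*} [CommRing A] [Nontrivial A] (k : ℤ) (α : A) :
    (quadMap k (X : A[X]) - C α).natDegree = 2 := by
  have expanded : quadMap k (X : A[X]) - C α = X ^ 2 - C (2 * k : A) * X + C (k - α : A) := by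
    simp only [quadMap, C_sub, C_mul, map_intCast, map_ofNat C 2]
    ring
  rw [expanded]
  compute_degree!

theorem isTreeField_of_isSplittingField {k : ℤ} {N : ℕ} {L : Type*} [Field L] [NumberField L]
    [hL : IsSplittingField ℚ L (∏ n ∈ Finset.range (N + 1), (quadMap k)^[n] X)] :
    IsTreeField k N L where
  isGalois :=
    have : Normal ℚ L := .of_isSplittingField (∏ n ∈ Finset.range (N + 1), (quadMap k)^[n] X)
    ⟨⟩
  exists_quadMap_eq n hn α hα := by
    have dvd_prod : quadMap k X - C α ∣
        (∏ n ∈ Finset.range (N + 1), (quadMap k)^[n] X).map (algebraMap ℚ L) := by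
      rw [Polynomial.map_prod]
      refine dvd_trans ?_ (Finset.dvd_prod_of_mem _ (Finset.mem_range.2 (Nat.succ_lt_succ hn)))
      rw [← coe_mapRingHom, map_quadMap_iterate, coe_mapRingHom, map_X]
      exact quadMap_X_sub_C_dvd (mem_iterRoots.1 hα)
    have prod_ne_zero : (∏ n ∈ Finset.range (N + 1), (quadMap k)^[n] (X : ℚ[X])) ≠ 0 :=
      Finset.prod_ne_zero_iff.2 fun n _ => quadMap_iterate_X_ne_zero k n
    obtain ⟨y, hy⟩ :=
      (hL.splits.of_dvd (map_ne_zero prod_ne_zero) dvd_prod).exists_eval_eq_zero fun h => by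
        simpa [natDegree_eq_of_degree_eq_some h] using natDegree_quadMap_X_sub_C k α
    refine ⟨y, ?_⟩
    rwa [eval_sub, eval_C, sub_eq_zero, ← coe_evalRingHom, map_quadMap, coe_evalRingHom,
      eval_X] at hy
  faithful σ hσ := by
    refine AlgEquiv.coe_toAlgHom_injective (AlgHom.ext_of_adjoin_eq_top hL.adjoin_rootSet ?_)
    intro x hx
    have prod_eq_zero := (mem_rootSet.1 hx).2
    rw [map_prod, Finset.prod_eq_zero_iff] at prod_eq_zero
    obtain ⟨n, hn, hx⟩ := prod_eq_zero
    rw [map_quadMap_iterate, aeval_X] at hx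
    exact hσ n (Finset.mem_range_succ_iff.1 hn) x (mem_iterRoots.2 hx)

theorem exists_isTreeField (k : ℤ) (N : ℕ) :
    ∃ (L : Type) (_ : Field L) (_ : NumberField L), IsTreeField k N L := by
  set f : ℚ[X] := ∏ n ∈ Finset.range (N + 1), (quadMap k)^[n] X
  have : IsSplittingField ℚ (IntermediateField.adjoin ℚ (f.rootSet ℂ)) f :=
    IntermediateField.adjoin_rootSet_isSplittingField (IsAlgClosed.splits _)
  have : NumberField (IntermediateField.adjoin ℚ (f.rootSet ℂ)) :=
    { to_finiteDimensional := IsSplittingField.finiteDimensional _ f }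
  exact ⟨_, _, this, isTreeField_of_isSplittingField⟩

end Existence

section CyclicSubgroup

open Finset

theorem natCard_le_two_mul_totient_of_isPGroup {G : Type*} [Group G] [Finite G]
    (hG : IsPGroup 2 G) : Nat.card G ≤ 2 * (Nat.card G).totient := by
  obtain ⟨m, hm⟩ := IsPGroup.iff_card.1 hG
  rw [hm]
  rcases m with _ | m
  · simp
  · rw [Nat.totient_prime_pow_succ Nat.prime_two, pow_succ]
    lia

open scoped Classical in
theorem natCard_le_two_mul_card_zpowers_eq {G : Type*} [Group G] [Fintype G] (hG : IsPGroup 2 G)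
    (H : Subgroup G) [IsCyclic H] :
    Nat.card H ≤ 2 * #{σ : G | Subgroup.zpowers σ = H} := by
  refine (natCard_le_two_mul_totient_of_isPGroup (hG.to_subgroup H)).trans
    (Nat.mul_le_mul_left 2 ?_)
  rw [Nat.card_eq_fintype_card, ← IsCyclic.card_orderOf_eq_totient dvd_rfl]
  refine card_le_card_of_injOn Subtype.val (fun h hh => ?_) Subtype.val_injective.injOn
  simp only [coe_filter, mem_univ, true_and, Set.mem_ofPred_eq] at hh ⊢
  refine Subgroup.eq_of_le_of_card_ge (Subgroup.zpowers_le.2 h.2) ?_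
  rw [Nat.card_zpowers, Subgroup.orderOf_coe, hh, Nat.card_eq_fintype_card]

end CyclicSubgroup

section Decomposition

open Finset NumberField Pointwise MulAction

theorem isCyclic_stabilizer_of_inertia_eq_bot {R S G : Type*} [CommRing R] [CommRing S]
    [Algebra R S] [Group G] [MulSemiringAction G S] [SMulCommClass G R S] {P : Ideal S}
    [P.IsMaximal] [(P.under R).IsMaximal] [Finite (S ⧸ P)] (h : P.inertia G = ⊥) :
    IsCyclic (stabilizer G P) := by
  let _ := Ideal.Quotient.field P
  let _ := Ideal.Quotient.field (P.under R)
  refine isCyclic_of_injective (Ideal.Quotient.stabilizerHom P (P.under R) G) ?_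
  rw [← MonoidHom.ker_eq_bot_iff, ← Subgroup.map_eq_bot_iff_of_injective _
    (Subgroup.subtype_injective _), Ideal.Quotient.map_ker_stabilizer_subtype, h]

variable {L : Type*} [Field L] [NumberField L] [IsGalois ℚ L] {p : ℕ} [Fact p.Prime]

theorem sum_card_stabilizer_primesOver :
    ∑ P ∈ IsDedekindDomain.primesOverFinset (Ideal.span {(p : ℤ)}) (𝓞 L),
      Nat.card (stabilizer Gal(L/ℚ) P) = Nat.card Gal(L/ℚ) := by
  set I : Ideal ℤ := Ideal.span {(p : ℤ)} with hI
  have : I.IsMaximal := Int.ideal_span_isMaximal_of_prime p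
  have ne_bot : I ≠ ⊥ := by simp [hI, NeZero.ne p]
  have : Finite (ℤ ⧸ I) := Ring.HasFiniteQuotients.finiteQuotient ne_bot
  have coe_eq := IsDedekindDomain.coe_primesOverFinset ne_bot (𝓞 L)
  rw [← Ideal.ncard_primesOver_mul_ramificationIdxIn_mul_inertiaDegIn I (𝓞 L) Gal(L/ℚ), ← coe_eq,
    Set.ncard_coe_finset, ← smul_eq_mul]
  refine sum_eq_card_nsmul fun P hP => ?_
  obtain ⟨_, _⟩ := coe_eq.le hP
  exact Ideal.card_stabilizer_eq I P

variable (D : Type*) [Field D] [NumberField D] [Algebra D L]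

theorem absNorm_under_decompositionField (P : Ideal (𝓞 L)) [P.IsMaximal]
    [P.LiesOver (Ideal.span {(p : ℤ)})] [IsDecompositionField ℚ L P D] :
    (P.under (𝓞 D)).absNorm = p := by
  have : (Ideal.span {(p : ℤ)}).IsMaximal := Int.ideal_span_isMaximal_of_prime p
  have : (P.under (𝓞 D)).IsMaximal := Ideal.IsMaximal.under _ P
  have ne_bot : Ideal.span {(p : ℤ)} ≠ ⊥ := by simp [NeZero.ne p]
  rw [Ideal.absNorm_eq_pow_inertiaDeg' (p := p) _ Fact.out, Ideal.inertiaDeg'_eq_inertiaDeg,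
    IsDecompositionField.inertiaDeg_eq ℤ ℚ L P D (𝓞 D) _ ne_bot, pow_one]

open scoped Classical in
theorem card_stabilizer_eq_le_card_primesWithNorm (H : Subgroup Gal(L/ℚ)) :
    #{P ∈ IsDedekindDomain.primesOverFinset (Ideal.span {(p : ℤ)}) (𝓞 L) |
        H = stabilizer Gal(L/ℚ) P} ≤
      #(primesWithNorm (FixedPoints.intermediateField H : IntermediateField ℚ L) {p}) := by
  set D : IntermediateField ℚ L := FixedPoints.intermediateField H
  have : (Ideal.span {(p : ℤ)}).IsMaximal := Int.ideal_span_isMaximal_of_prime p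
  have ne_bot : Ideal.span {(p : ℤ)} ≠ ⊥ := by simp [NeZero.ne p]
  have isDecompositionField {P : Ideal (𝓞 L)} (hP : H = stabilizer Gal(L/ℚ) P) :
      IsDecompositionField ℚ L P D := by
    subst hP
    infer_instance
  refine card_le_card_of_injOn (fun P => P.under (𝓞 D)) (fun P hP => ?_) fun P hP Q hQ h => ?_
  · obtain ⟨hP, hPH⟩ := mem_filter.1 hP
    obtain ⟨_, _⟩ := (IsDedekindDomain.mem_primesOverFinset_iff ne_bot _).1 hP
    have : P.IsMaximal := Ideal.IsMaximal.of_liesOver_isMaximal P (Ideal.span {(p : ℤ)})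
    have := isDecompositionField hPH
    have absNorm_eq := absNorm_under_decompositionField (p := p) D P
    have under_ne_bot : P.under (𝓞 D) ≠ ⊥ := fun h => by
      simp [h, (NeZero.ne p).symm] at absNorm_eq
    exact mem_primesWithNorm.2
      ⟨Ideal.prime_of_isPrime under_ne_bot inferInstance, mem_singleton.2 absNorm_eq⟩
  · obtain ⟨hP, hPH⟩ := mem_filter.1 hP
    obtain ⟨hQ, -⟩ := mem_filter.1 hQ
    obtain ⟨_, _⟩ := (IsDedekindDomain.mem_primesOverFinset_iff ne_bot _).1 hP
    obtain ⟨_, _⟩ := (IsDedekindDomain.mem_primesOverFinset_iff ne_bot _).1 hQ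
    have := isDecompositionField hPH
    exact ((IsDecompositionField.primesOver_eq_singleton ℚ L P D (𝓞 D) (P.under (𝓞 D))).le
      ⟨‹Q.IsPrime›, ⟨h⟩⟩).symm

end Decomposition

section FixedRoot

open NumberField MulAction Pointwise

variable {L : Type*} [Field L] [NumberField L] {k : ℤ} {N p : ℕ}

theorem IsTreeField.exists_intCast_sub_mem (T : IsTreeField k N L) (hk : 1 < |k|)
    {P : Ideal (𝓞 L)} [hP : P.IsPrime] {a : ℤ} (ha : (((quadMap k)^[N] a : ℤ) : 𝓞 L) ∈ P) :
    ∃ r : 𝓞 L, (quadMap k)^[N] r = 0 ∧ a - r ∈ P := by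
  choose! R coe_R root_R using
    fun (x : L) (hx : x ∈ iterRoots L k N) => exists_ringOfIntegers_eq_of_mem_iterRoots hx
  have prod_eq : (((quadMap k)^[N] a : ℤ) : 𝓞 L) = ∏ x ∈ iterRoots L k N, (a - R x) := by
    refine RingOfIntegers.coe_injective ?_
    rw [map_intCast, map_prod, ← eq_intCast (Int.castRingHom L), map_quadMap_iterate, eq_intCast,
      ← T.prod_sub hk le_rfl]
    refine Finset.prod_congr rfl fun x hx => ?_
    rw [map_sub, map_intCast]
    exact congrArg (_ - ·) (coe_R x hx).symm
  rw [prod_eq, hP.prod_mem_iff] at ha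
  obtain ⟨x, hx, hxP⟩ := ha
  exact ⟨R x, root_R x hx, hxP⟩

/- An element of the decomposition group preserves the residue class of `a`, which is the class of
a root; by good reduction it fixes that root. -/
theorem IsTreeField.mem_autsFixingRoot_of_mem_stabilizer (T : IsTreeField k N L) (hk : 1 < |k|)
    (hp : IsGoodPrime k N p) {P : Ideal (𝓞 L)} [P.IsPrime] (hpP : (p : 𝓞 L) ∈ P) {a : ℤ}
    (ha : (p : ℤ) ∣ (quadMap k)^[N] a) {σ : Gal(L/ℚ)} (hσ : σ ∈ stabilizer Gal(L/ℚ) P) :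
    σ ∈ autsFixingRoot L k N := by
  have value_mem : (((quadMap k)^[N] a : ℤ) : 𝓞 L) ∈ P := by
    obtain ⟨v, hv⟩ := ha
    rw [hv, Int.cast_mul, Int.cast_natCast]
    exact P.mul_mem_right _ hpP
  obtain ⟨r, hr, hrP⟩ := T.exists_intCast_sub_mem hk value_mem
  set φ := MulSemiringAction.toRingHom Gal(L/ℚ) (𝓞 L) σ
  have image_mem : a - φ r ∈ P := by
    have := Ideal.smul_mem_pointwise_smul σ _ P hrP
    rw [mem_stabilizer_iff.1 hσ] at this
    rwa [← map_intCast φ a, ← map_sub]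
  have image_root : (quadMap k)^[N] (φ r) = 0 := by rw [← map_quadMap_iterate, hr, map_zero]
  have fixed : φ r = r := hp.eq_of_sub_mem hpP image_root hr <| by
    simpa using P.sub_mem hrP image_mem
  refine mem_autsFixingRoot.2 ⟨r, mem_iterRoots.2 ?_, congrArg (algebraMap (𝓞 L) L) fixed⟩
  rw [← map_quadMap_iterate k (algebraMap (𝓞 L) L), hr, map_zero]

end FixedRoot

section LargePrimes

theorem eventually_not_natCast_dvd {w : ℤ} (hw : w ≠ 0) : ∀ᶠ p : ℕ in atTop, ¬(p : ℤ) ∣ w := by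
  filter_upwards [eventually_gt_atTop w.natAbs] with p hp h
  exact hp.not_ge (Nat.le_of_dvd (Int.natAbs_pos.2 hw) (Int.natCast_dvd.1 h))

theorem eventually_isGoodPrime {k : ℤ} (hk : 1 < |k|) (n : ℕ) :
    ∀ᶠ p : ℕ in atTop, p.Prime → IsGoodPrime k n p := by
  have ne_zero (i : ℕ) := mul_ne_zero_iff.1 (mul_scaledOrbit_succ_ne_zero hk i)
  have orbit : ∀ᶠ p : ℕ in atTop, ∀ i ∈ Finset.range (n + 1), ¬(p : ℤ) ∣ scaledOrbit k (i + 1) :=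
    (Filter.eventually_all_finset _).2 fun i _ => eventually_not_natCast_dvd (ne_zero i).2
  filter_upwards [eventually_gt_atTop 2, eventually_not_natCast_dvd (ne_zero 0).1, orbit]
    with p hp2 hpk hporbit hp
  refine ⟨hp, hp2.ne', hpk, fun i hi hin => ?_⟩
  obtain ⟨j, rfl⟩ := Nat.exists_eq_add_of_le' hi
  exact hporbit j (Finset.mem_range.2 (by lia))

end LargePrimes

section FrobeniusCount

open Finset NumberField Pointwise MulAction

theorem card_primesWithNorm_eq_sum_singleton (K : Type*) [Field K] [NumberField K] (s : Finset ℕ) :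
    #(primesWithNorm K s) = ∑ p ∈ s, #(primesWithNorm K {p}) := by
  rw [card_eq_sum_card_fiberwise fun P hP => (mem_primesWithNorm.1 hP).2]
  refine sum_congr rfl fun p hp => congrArg card (ext fun P => ?_)
  rw [mem_filter, mem_primesWithNorm, mem_primesWithNorm, mem_singleton]
  exact ⟨fun h => ⟨h.1.1, h.2⟩, fun h => ⟨⟨h.1, h.2 ▸ hp⟩, h.2⟩⟩

theorem primesWithNorm_mono (K : Type*) [Field K] [NumberField K] : Monotone (primesWithNorm K) :=
  fun _ _ h _ hP => mem_primesWithNorm.2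
    ⟨(mem_primesWithNorm.1 hP).1, h (mem_primesWithNorm.1 hP).2⟩

namespace IsTreeField

variable {L : Type*} [Field L] [NumberField L] {k : ℤ} {N : ℕ}

/- Each decomposition group above `p` is cyclic of `2`-power order, so at least half of its elements
generate it; these elements fix a root. -/
theorem natCard_le_sum_card_primesWithNorm (T : IsTreeField k N L) (hk : 1 < |k|) {p : ℕ}
    (hp : IsGoodPrime k N p) {a : ℤ} (ha : (p : ℤ) ∣ (quadMap k)^[N] a) :
    Nat.card Gal(L/ℚ) ≤ 2 * ∑ σ ∈ autsFixingRoot L k N,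
      #(primesWithNorm (FixedPoints.intermediateField (Subgroup.zpowers σ) :
        IntermediateField ℚ L) {p}) := by
  classical
  have := T.isGalois
  have : Fact p.Prime := ⟨hp.prime⟩
  have : (Ideal.span {(p : ℤ)}).IsMaximal := Int.ideal_span_isMaximal_of_prime p
  have ne_bot : Ideal.span {(p : ℤ)} ≠ ⊥ := by simp [NeZero.ne p]
  set primes := IsDedekindDomain.primesOverFinset (Ideal.span {(p : ℤ)}) (𝓞 L)
  have stabilizer_le {P : Ideal (𝓞 L)} (hP : P ∈ primes) : Nat.card (stabilizer Gal(L/ℚ) P) ≤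
      2 * #{σ ∈ autsFixingRoot L k N | Subgroup.zpowers σ = stabilizer Gal(L/ℚ) P} := by
    obtain ⟨_, _⟩ := (IsDedekindDomain.mem_primesOverFinset_iff ne_bot _).1 hP
    have : P.IsMaximal := Ideal.IsMaximal.of_liesOver_isMaximal P (Ideal.span {(p : ℤ)})
    have hpP := natCast_mem_of_liesOver P p
    have := isCyclic_stabilizer_of_inertia_eq_bot (R := ℤ) (T.inertia_eq_bot hp hpP)
    refine (natCard_le_two_mul_card_zpowers_eq T.isPGroup _).trans
      (Nat.mul_le_mul_left 2 (card_le_card fun σ hσ => ?_))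
    have hσ := (mem_filter.1 hσ).2
    exact mem_filter.2 ⟨T.mem_autsFixingRoot_of_mem_stabilizer hk hp hpP ha
      (hσ ▸ Subgroup.mem_zpowers σ), hσ⟩
  calc Nat.card Gal(L/ℚ) = ∑ P ∈ primes, Nat.card (stabilizer Gal(L/ℚ) P) :=
        sum_card_stabilizer_primesOver.symm
    _ ≤ ∑ P ∈ primes,
          2 * #{σ ∈ autsFixingRoot L k N | Subgroup.zpowers σ = stabilizer Gal(L/ℚ) P} :=
        sum_le_sum fun _ => stabilizer_le
    _ = 2 * ∑ σ ∈ autsFixingRoot L k N,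
          #{P ∈ primes | Subgroup.zpowers σ = stabilizer Gal(L/ℚ) P} := by
        rw [← mul_sum]
        exact congrArg _ (sum_card_bipartiteAbove_eq_sum_card_bipartiteBelow _)
    _ ≤ _ := Nat.mul_le_mul_left 2 <| sum_le_sum fun σ _ =>
        card_stabilizer_eq_le_card_primesWithNorm _

theorem card_mul_natCard_le_sum_card_primesWithNorm (T : IsTreeField k N L) (hk : 1 < |k|)
    {S : Finset ℕ} (hS : ∀ p ∈ S, IsGoodPrime k N p ∧ ∃ a, (p : ℤ) ∣ (quadMap k)^[N] a) :
    #S * Nat.card Gal(L/ℚ) ≤ 2 * ∑ σ ∈ autsFixingRoot L k N,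
      #(primesWithNorm (FixedPoints.intermediateField (Subgroup.zpowers σ) :
        IntermediateField ℚ L) S) := by
  simp_rw [card_primesWithNorm_eq_sum_singleton _ S]
  rw [sum_comm, mul_sum, ← smul_eq_mul]
  refine card_nsmul_le_sum _ _ _ fun p hp => ?_
  obtain ⟨good, a, ha⟩ := hS p hp
  exact T.natCard_le_sum_card_primesWithNorm hk good ha

theorem eventually_card_le (T : IsTreeField k N L) (hk : 1 < |k|) :
    ∀ᶠ x : ℕ in atTop, ∀ S ⊆ Ioc x (2 * x),
      (∀ p ∈ S, p.Prime ∧ ∃ a, (p : ℤ) ∣ (quadMap k)^[N] a) →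
      (#S : ℝ) ≤ (autsFixingRoot L k N).dens * (800 * (x / Real.log x)) := by
  have bound : ∀ᶠ x : ℕ in atTop, ∀ σ : Gal(L/ℚ),
      #(primesWithNorm (FixedPoints.intermediateField (Subgroup.zpowers σ) :
        IntermediateField ℚ L) (Ioc x (2 * x))) ≤ 400 * (x / Real.log x) :=
    eventually_all.2 fun σ => eventually_card_primesWithNorm_le _
  filter_upwards [bound, eventually_forall_ge_atTop.2 (eventually_isGoodPrime hk N)]
    with x bound good S hSx hS
  have count := T.card_mul_natCard_le_sum_card_primesWithNorm hk fun p hp =>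
    ⟨good p (mem_Ioc.1 (hSx hp)).1.le (hS p hp).1, (hS p hp).2⟩
  have sum_le : ∑ σ ∈ autsFixingRoot L k N,
      (#(primesWithNorm (FixedPoints.intermediateField (Subgroup.zpowers σ) :
        IntermediateField ℚ L) S) : ℝ) ≤ #(autsFixingRoot L k N) * (400 * (x / Real.log x)) := by
    rw [← nsmul_eq_mul]
    refine sum_le_card_nsmul _ _ _ fun σ _ => ?_
    exact (Nat.cast_le.2 (card_le_card (primesWithNorm_mono _ hSx))).trans (bound σ)
  rw [nnratCast_dens, div_mul_eq_mul_div, le_div_iff₀ (by positivity), ← Nat.card_eq_fintype_card]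
  have : (#S : ℝ) * Nat.card Gal(L/ℚ) ≤ 2 * ∑ σ ∈ autsFixingRoot L k N,
      (#(primesWithNorm (FixedPoints.intermediateField (Subgroup.zpowers σ) :
        IntermediateField ℚ L) S) : ℝ) := mod_cast count
  linarith

end IsTreeField

end FrobeniusCount

section NaturalDensity

open Finset Asymptotics

theorem one_isLittleO_div_log : (fun _ : ℕ => (1 : ℝ)) =o[atTop] fun x : ℕ => x / Real.log x := by
  have log_isLittleO : (fun x : ℕ => Real.log x) =o[atTop] fun x : ℕ => (x : ℝ) :=
    Real.isLittleO_log_id_atTop.comp_tendsto tendsto_natCast_atTop_atTop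
  refine (log_isLittleO.mul_isBigO (isBigO_refl (fun x : ℕ => (Real.log x)⁻¹) atTop)).congr' ?_ ?_
  · filter_upwards [eventually_ge_atTop 2] with x hx
    exact mul_inv_cancel₀ (Real.log_pos (mod_cast hx)).ne'
  · exact .of_forall fun x => (div_eq_mul_inv _ _).symm

theorem primeCount_setOf_prime (x : ℕ) : primeCount {p | p.Prime} x = Nat.primeCounting x := by
  rw [← Nat.primesLE_card_eq_primeCounting, primeCount, Nat.primesLE_eq_filter_range]
  congr!

theorem div_log_isBigO_primeCount :
    (fun x : ℕ => x / Real.log x) =O[atTop] fun x => (primeCount {p | p.Prime} x : ℝ) := by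
  have log_succ_le : ∀ᶠ x : ℕ in atTop, ‖Real.log (x + 1 : ℕ)‖ ≤ 1 / 8 * ‖((x + 1 : ℕ) : ℝ)‖ :=
    (tendsto_natCast_atTop_atTop.comp (tendsto_add_atTop_nat 1)).eventually
      (Real.isLittleO_log_id_atTop.bound (by norm_num))
  refine IsBigO.of_bound 4 ?_
  filter_upwards [log_succ_le, eventually_ge_atTop 1] with x log_succ_le hx
  have hx : (1 : ℝ) ≤ x := mod_cast hx
  have log_nonneg : 0 ≤ Real.log x := Real.log_natCast_nonneg x
  rw [Real.norm_of_nonneg (by positivity), Real.norm_of_nonneg (by positivity),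
    primeCount_setOf_prime]
  rw [Real.norm_of_nonneg (Real.log_natCast_nonneg _), Real.norm_of_nonneg (by positivity),
    Nat.cast_succ] at log_succ_le
  have numerator_ge : (x : ℝ) / 4 ≤ x * Real.log 2 - Real.log (x + 1) := by
    have : (x : ℝ) * (1 / 2) ≤ x * Real.log 2 := by gcongr; linarith [Real.log_two_gt_d9]
    linarith
  calc x / Real.log x = 4 * (x / 4 / Real.log x) := by ring
    _ ≤ 4 * ((x * Real.log 2 - Real.log (x + 1)) / Real.log x) := by gcongr
    _ ≤ 4 * Nat.primeCounting x := by gcongr; exact Chebyshev.pi_ge x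

theorem hasPrimeDensityZero_of_isLittleO {S : Set ℕ}
    (h : (fun x => (primeCount S x : ℝ)) =o[atTop] fun x : ℕ => x / Real.log x) :
    HasPrimeDensityZero S :=
  (h.trans_isBigO div_log_isBigO_primeCount).tendsto_div_nhds_zero

theorem hasPrimeDensityZero_of_finite {S : Set ℕ} (hS : S.Finite) : HasPrimeDensityZero S := by
  classical
  refine hasPrimeDensityZero_of_isLittleO (IsBigO.trans_isLittleO ?_ one_isLittleO_div_log)
  refine IsBigO.of_bound #hS.toFinset (.of_forall fun x => ?_)
  rw [Real.norm_natCast, norm_one, mul_one, Nat.cast_le, primeCount]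
  exact card_le_card fun p hp => hS.mem_toFinset.2 (mem_filter.1 hp).2

theorem primeCount_mono (S : Set ℕ) : Monotone (primeCount S) := fun _ _ h => by
  unfold primeCount
  gcongr

theorem exists_primeCount_two_mul_eq (S : Set ℕ) (x : ℕ) :
    ∃ F ⊆ Ioc x (2 * x), (∀ p ∈ F, p ∈ S) ∧ primeCount S (2 * x) = primeCount S x + #F := by
  classical
  refine ⟨{p ∈ Ioc x (2 * x) | p ∈ S}, filter_subset _ _, fun p hp => (mem_filter.1 hp).2, ?_⟩
  have disjoint : Disjoint (range (x + 1)) (Ioc x (2 * x)) :=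
    disjoint_left.2 fun p hp hp' => by simp only [mem_range, mem_Ioc] at hp hp'; lia
  have union_eq : range (2 * x + 1) = range (x + 1) ∪ Ioc x (2 * x) := by
    ext p
    simp only [mem_union, mem_range, mem_Ioc]
    lia
  simp only [primeCount]
  rw [union_eq, filter_union, card_union_of_disjoint (disjoint_filter_filter disjoint)]

theorem three_mul_div_log_half_le {x y : ℝ} (hx : 64 ≤ x) (hxy : x ≤ 2 * y) (hyx : 2 * y ≤ x + 1) :
    3 * (y / Real.log y) ≤ 2 * (x / Real.log x) := by
  have log_two_pos : 0 < Real.log 2 := Real.log_pos one_lt_two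
  have log_two_le : 6 * Real.log 2 ≤ Real.log x := by
    have : Real.log (2 ^ 6) ≤ Real.log x := Real.log_le_log (by norm_num) (by linarith)
    rwa [Real.log_pow] at this
  have log_le : Real.log x ≤ Real.log 2 + Real.log y := by
    rw [← Real.log_mul two_ne_zero (by linarith)]
    exact Real.log_le_log (by linarith) hxy
  rw [← mul_div_assoc, ← mul_div_assoc, div_le_div_iff₀ (by linarith) (by linarith)]
  calc 3 * y * Real.log x ≤ 5 / 3 * x * Real.log x := by
        refine mul_le_mul_of_nonneg_right ?_ ?_ <;> linarith
    _ = 2 * x * (5 / 6 * Real.log x) := by ring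
    _ ≤ 2 * x * Real.log y := by gcongr; linarith

/- The bound passes from `(x + 1) / 2` to `x`, since `x / log x` grows by a factor of at least
`3 / 2` along the way. -/
theorem exists_le_add_mul_div_log {c : ℕ → ℝ} (hc : Monotone c) {ε : ℝ} (hε : 0 ≤ ε)
    (h : ∀ᶠ x : ℕ in atTop, c (2 * x) ≤ c x + ε * (x / Real.log x)) :
    ∃ M, ∀ x : ℕ, c x ≤ M + 2 * ε * (x / Real.log x) := by
  obtain ⟨x₀, h⟩ := eventually_atTop.1 h
  refine ⟨c (2 * x₀ + 64), fun x => ?_⟩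
  induction x using Nat.strong_induction_on with
  | _ x ih =>
    rcases lt_or_ge x (2 * x₀ + 64) with hx | hx
    · have := Real.log_natCast_nonneg x
      exact (hc hx.le).trans (le_add_of_nonneg_right (by positivity))
    · set y := (x + 1) / 2
      have hxy : x ≤ 2 * y := by lia
      have hyx : 2 * y ≤ x + 1 := by lia
      have growth : 3 * (y / Real.log y) ≤ 2 * (x / Real.log x) :=
        three_mul_div_log_half_le (mod_cast (by lia : 64 ≤ x)) (mod_cast hxy) (mod_cast hyx)
      calc c x ≤ c (2 * y) := hc hxy
        _ ≤ c y + ε * (y / Real.log y) := h y (by lia)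
        _ ≤ c (2 * x₀ + 64) + 2 * ε * (y / Real.log y) + ε * (y / Real.log y) := by
          gcongr
          exact ih y (by lia)
        _ = c (2 * x₀ + 64) + ε * (3 * (y / Real.log y)) := by ring
        _ ≤ c (2 * x₀ + 64) + ε * (2 * (x / Real.log x)) := by gcongr
        _ = c (2 * x₀ + 64) + 2 * ε * (x / Real.log x) := by ring

theorem hasPrimeDensityZero_of_eventually_card_le {S : Set ℕ}
    (hS : ∀ ε : ℝ, 0 < ε → ∀ᶠ x : ℕ in atTop, ∀ F ⊆ Ioc x (2 * x), (∀ p ∈ F, p ∈ S) →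
      (#F : ℝ) ≤ ε * (x / Real.log x)) :
    HasPrimeDensityZero S := by
  refine hasPrimeDensityZero_of_isLittleO (isLittleO_iff.2 fun c hc => ?_)
  have dyadic : ∀ᶠ x : ℕ in atTop,
      (primeCount S (2 * x) : ℝ) ≤ primeCount S x + c / 4 * (x / Real.log x) := by
    filter_upwards [hS (c / 4) (by positivity)] with x hx
    obtain ⟨F, hFx, hFS, count⟩ := exists_primeCount_two_mul_eq S x
    rw [count, Nat.cast_add]
    gcongr
    exact hx F hFx hFS
  obtain ⟨M, hM⟩ := exists_le_add_mul_div_log (Nat.mono_cast.comp (primeCount_mono S))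
    (by positivity) dyadic
  filter_upwards [(one_isLittleO_div_log.const_mul_left M).bound (half_pos hc)] with x hx
  have quot_nonneg : 0 ≤ x / Real.log x := div_nonneg x.cast_nonneg (Real.log_natCast_nonneg x)
  rw [mul_one, Real.norm_of_nonneg quot_nonneg] at hx
  rw [Real.norm_natCast, Real.norm_of_nonneg quot_nonneg]
  have count_le : (primeCount S x : ℝ) ≤ M + 2 * (c / 4) * (x / Real.log x) := hM x
  linarith [Real.le_norm_self M]

end NaturalDensity

section OrbitPrimes

open Finset

theorem mem_orbitPrimes_iff {k a₀ : ℤ} {p : ℕ} :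
    p ∈ orbitPrimes (X ^ 2 - 2 * C k * X + C k) a₀ ↔
      p.Prime ∧ ∃ n, (quadMap k)^[n] a₀ ≠ 0 ∧ (p : ℤ) ∣ (quadMap k)^[n] a₀ := by
  have eval_eq : (fun x => eval x (X ^ 2 - 2 * C k * X + C k : ℤ[X])) = quadMap k := by
    funext x
    simp [quadMap]
  rw [orbitPrimes, eval_eq, Set.mem_ofPred_eq]

theorem quadMap_zero_iterate (n : ℕ) (x : ℤ) : (quadMap 0)^[n] x = x ^ 2 ^ n := by
  have eq_pow : quadMap 0 = fun y : ℤ => y ^ 2 := by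
    funext y
    simp [quadMap]
  rw [eq_pow, pow_iterate]

theorem finite_orbitPrimes_X_sq (a₀ : ℤ) :
    (orbitPrimes (X ^ 2 - 2 * C 0 * X + C 0) a₀).Finite := by
  refine a₀.natAbs.divisors.finite_toSet.subset fun p hp => ?_
  obtain ⟨prime, n, ne_zero, dvd⟩ := mem_orbitPrimes_iff.1 hp
  rw [quadMap_zero_iterate] at ne_zero dvd
  have dvd : (p : ℤ) ∣ a₀ := (Nat.prime_iff_prime_int.1 prime).dvd_of_dvd_pow dvd
  exact Nat.mem_divisors.2 ⟨Int.natCast_dvd.1 dvd,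
    Int.natAbs_ne_zero.2 (ne_zero_pow (by positivity) ne_zero)⟩

theorem eventually_forall_mem_orbitPrimes_dvd (k a₀ : ℤ) (N : ℕ) :
    ∀ᶠ p : ℕ in atTop, p ∈ orbitPrimes (X ^ 2 - 2 * C k * X + C k) a₀ →
      ∃ a, (p : ℤ) ∣ (quadMap k)^[N] a := by
  have large : ∀ᶠ p : ℕ in atTop, ∀ i ∈ range N, (quadMap k)^[i] a₀ ≠ 0 →
      ¬(p : ℤ) ∣ (quadMap k)^[i] a₀ :=
    (eventually_all_finset _).2 fun i _ =>
      eventually_imp_distrib_left.2 eventually_not_natCast_dvd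
  filter_upwards [large] with p large hp
  obtain ⟨-, n, ne_zero, dvd⟩ := mem_orbitPrimes_iff.1 hp
  have le : N ≤ n := not_lt.1 fun h => large n (mem_range.2 h) ne_zero dvd
  refine ⟨(quadMap k)^[n - N] a₀, ?_⟩
  rwa [← Function.iterate_add_apply, Nat.add_sub_cancel' le]

theorem eventually_card_orbitPrimes_dyadic_le {k : ℤ} (hk : 1 < |k|) (a₀ : ℤ) {ε : ℝ}
    (hε : 0 < ε) : ∀ᶠ x : ℕ in atTop, ∀ F ⊆ Ioc x (2 * x),
      (∀ p ∈ F, p ∈ orbitPrimes (X ^ 2 - 2 * C k * X + C k) a₀) →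
        (#F : ℝ) ≤ ε * (x / Real.log x) := by
  obtain ⟨N, dens_le⟩ := exists_forall_dens_autsFixingRoot_le hk (by positivity : 0 < ε / 800)
  obtain ⟨L, _, _, T⟩ := exists_isTreeField k N
  filter_upwards [T.eventually_card_le hk,
    eventually_forall_ge_atTop.2 (eventually_forall_mem_orbitPrimes_dvd k a₀ N)]
    with x card_le dvd F hFx hF
  have := Real.log_natCast_nonneg x
  calc (#F : ℝ) ≤ (autsFixingRoot L k N).dens * (800 * (x / Real.log x)) :=
        card_le F hFx fun p hp =>
          ⟨(hF p hp).1, dvd p (mem_Ioc.1 (hFx hp)).1.le (hF p hp)⟩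
    _ ≤ ε / 800 * (800 * (x / Real.log x)) := by gcongr; exact dens_le L T
    _ = ε * (x / Real.log x) := by ring

end OrbitPrimes

theorem density_zero_of_X_sq_sub_two_kX_add_k (k : ℤ) (hk1 : k ≠ 1) (hk1' : k ≠ -1)
    (a₀ : ℤ) :
    HasPrimeDensityZero (orbitPrimes (X ^ 2 - 2 * C k * X + C k) a₀) := by
  rcases eq_or_ne k 0 with rfl | hk0
  · exact hasPrimeDensityZero_of_finite (finite_orbitPrimes_X_sq a₀)
  · have hk : 1 < |k| := lt_abs.2 (by lia)
    exact hasPrimeDensityZero_of_eventually_card_le fun ε hε =>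
      eventually_card_orbitPrimes_dyadic_le hk a₀ hε
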